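/- Let z ∈ (1/2, 1), set α = 1/z, let μ be the unique absolutely continuous f_z-invariant Borel probability measure on [0,1], and let φ : [0,1] → ℝ be Hölder continuous with ∫ φ dμ = 0 and φ(0) ≠ 0. Set Φ_n = ∑_{j=0}^{n-1} φ ∘ f_z^j. Then for every q > α there exist constants C₁, C₂ > 0 such that C₁ n^{q+1−α} ≤ ∫ |Φ_n|^q dμ ≤ C₂ n^{q+1−α} for all n ≥ 1. -/

import Mathlib

open MeasureTheory Set NNReal Filter

/-- The Liverani–Saussol–Vaienti (Pomeau–Manneville type) map with parameter `z`. -/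
noncomputable def lsv (z : ℝ) (y : ℝ) : ℝ :=
  if y < 1 / 2 then y * (1 + 2 ^ z * y ^ z) else 2 * y - 1

/-- The Birkhoff sum `Φ_n = ∑_{j=0}^{n-1} φ ∘ f_z^j`. -/
noncomputable def lsvBirkhoff (z : ℝ) (φ : ℝ → ℝ) (n : ℕ) (x : ℝ) : ℝ :=
  ∑ j ∈ Finset.range n, φ ((lsv z)^[j] x)

namespace LSV

/-- the left branch -/
noncomputable def lb (z x : ℝ) : ℝ := x * (1 + 2 ^ z * x ^ z)

/-- derivative of the left branch -/
noncomputable def lb' (z x : ℝ) : ℝ := 1 + (1 + z) * (2 ^ z * x ^ z)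

lemma lb_sub {z a b : ℝ} (hz : 0 < z) (ha : 0 ≤ a) (hab : a ≤ b) : b - a ≤ lb z b - lb z a := by
  have h1 : a ^ z ≤ b ^ z := Real.rpow_le_rpow ha hab hz.le
  have h2 : 0 ≤ a ^ z := Real.rpow_nonneg ha z
  have h3 : (0:ℝ) < 2 ^ z := Real.rpow_pos_of_pos (by norm_num) z
  have h4 : a * (2 ^ z * a ^ z) ≤ b * (2 ^ z * b ^ z) := by
    apply mul_le_mul hab _ (by positivity) (by linarith)
    exact mul_le_mul_of_nonneg_left h1 h3.le
  unfold lb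
  nlinarith

lemma lb_zero (z : ℝ) : lb z 0 = 0 := by simp [lb]

lemma two_half {z : ℝ} : (2:ℝ) ^ z * (1/2 : ℝ) ^ z = 1 := by
  rw [← Real.mul_rpow (by norm_num) (by norm_num)]; norm_num

lemma lb_half (z : ℝ) : lb z (1/2) = 1 := by
  unfold lb; rw [two_half]; norm_num

lemma lb_strictMonoOn {z : ℝ} (hz : 0 < z) : StrictMonoOn (lb z) (Ici 0) := by
  intro a ha b hb hab
  have := lb_sub hz ha hab.le
  linarith

lemma lb_continuous {z : ℝ} (hz : 0 < z) : Continuous (lb z) := by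
  unfold lb
  exact continuous_id.mul (continuous_const.add (continuous_const.mul
    (Real.continuous_rpow_const hz.le)))

lemma lb_hasDerivAt {z x : ℝ} (hx : 0 < x) : HasDerivAt (lb z) (lb' z x) x := by
  have h1 : HasDerivAt (fun x : ℝ => x ^ z) (z * x ^ (z - 1)) x :=
    Real.hasDerivAt_rpow_const (Or.inl hx.ne')
  have h2 := (hasDerivAt_id x).mul ((h1.const_mul (2 ^ z)).const_add 1)
  refine h2.congr_deriv ?_
  have : x ^ z = x ^ (z - 1) * x := by
    rw [← Real.rpow_add_one hx.ne']; ring_nf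
  simp only [id, lb']
  rw [this]; ring

lemma lb'_ge_one {z x : ℝ} (hz : 0 < z) (hx : 0 ≤ x) : 1 ≤ lb' z x := by
  have h3 : (0:ℝ) < 2 ^ z := Real.rpow_pos_of_pos (by norm_num) z
  have h2 : 0 ≤ x ^ z := Real.rpow_nonneg hx z
  unfold lb'
  have : 0 ≤ (1 + z) * (2 ^ z * x ^ z) := by positivity
  linarith

lemma lsv_left {z x : ℝ} (hx : x < 1/2) : lsv z x = lb z x := by
  simp only [lsv, if_pos hx, lb]

lemma lsv_right {z x : ℝ} (hx : 1/2 ≤ x) : lsv z x = 2 * x - 1 := by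
  simp only [lsv, if_neg (not_lt.2 hx)]

lemma lsv_mem {z x : ℝ} (hz : 0 < z) (hx : x ∈ Ico (0:ℝ) 1) : lsv z x ∈ Ico (0:ℝ) 1 := by
  rcases lt_or_ge x (1/2) with h | h
  · rw [lsv_left h]
    have h1 := lb_strictMonoOn hz (mem_Ici.2 hx.1) (mem_Ici.2 (by norm_num)) h
    rw [lb_half] at h1
    have h2 := lb_sub hz le_rfl hx.1
    rw [lb_zero] at h2
    exact ⟨by linarith [hx.1], h1⟩
  · rw [lsv_right h]
    exact ⟨by linarith, by linarith [hx.2]⟩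

lemma lsv_iter_mem {z x : ℝ} (hz : 0 < z) (hx : x ∈ Ico (0:ℝ) 1) (n : ℕ) :
    (lsv z)^[n] x ∈ Ico (0:ℝ) 1 := by
  induction n with
  | zero => exact hx
  | succ n ih => rw [Function.iterate_succ_apply']; exact lsv_mem hz ih

lemma lsv_measurable (z : ℝ) : Measurable (lsv z) := by
  unfold lsv
  refine Measurable.ite measurableSet_Iio ?_ ?_ <;> fun_prop

lemma exists_inv {z y : ℝ} (hz : 0 < z) (hy : y ∈ Ioo (0:ℝ) 1) :
    ∃ x, x ∈ Ioo (0:ℝ) (1/2) ∧ lb z x = y := by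
  have := intermediate_value_Ioo (a := (0:ℝ)) (b := 1/2) (by norm_num)
    (lb_continuous hz).continuousOn
  rw [lb_zero, lb_half] at this
  obtain ⟨x, hx, h⟩ := this hy
  exact ⟨x, hx, h⟩

open Classical in
/-- inverse of the left branch on `(0,1)` -/
noncomputable def gi (z y : ℝ) : ℝ :=
  if h : ∃ x, x ∈ Ioo (0:ℝ) (1/2) ∧ lb z x = y then h.choose else 0

lemma gi_mem {z y : ℝ} (hz : 0 < z) (hy : y ∈ Ioo (0:ℝ) 1) : gi z y ∈ Ioo (0:ℝ) (1/2) := by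
  have h := exists_inv hz hy
  unfold gi; rw [dif_pos h]; exact h.choose_spec.1

lemma gi_mem' {z y : ℝ} (hz : 0 < z) (hy : y ∈ Ioo (0:ℝ) 1) : gi z y ∈ Ioo (0:ℝ) 1 :=
  ⟨(gi_mem hz hy).1, by linarith [(gi_mem hz hy).2]⟩

lemma lb_gi {z y : ℝ} (hz : 0 < z) (hy : y ∈ Ioo (0:ℝ) 1) : lb z (gi z y) = y := by
  have h := exists_inv hz hy
  unfold gi; rw [dif_pos h]; exact h.choose_spec.2

lemma gi_lb {z x : ℝ} (hz : 0 < z) (hx : x ∈ Ioo (0:ℝ) (1/2)) : gi z (lb z x) = x := by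
  have hy : lb z x ∈ Ioo (0:ℝ) 1 := by
    have h1 := lb_strictMonoOn hz (mem_Ici.2 hx.1.le) (mem_Ici.2 (by norm_num)) hx.2
    have h2 := lb_strictMonoOn hz (mem_Ici.2 le_rfl) (mem_Ici.2 hx.1.le) hx.1
    rw [lb_half] at h1; rw [lb_zero] at h2
    exact ⟨h2, h1⟩
  exact (lb_strictMonoOn hz).injOn (mem_Ici.2 (gi_mem hz hy).1.le) (mem_Ici.2 hx.1.le) (lb_gi hz hy)

lemma gi_lt {z a b : ℝ} (hz : 0 < z) (ha : a ∈ Ioo (0:ℝ) 1) (hb : b ∈ Ioo (0:ℝ) 1) (h : a < b) :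
    gi z a < gi z b := by
  rw [← (lb_strictMonoOn hz).lt_iff_lt (mem_Ici.2 (gi_mem hz ha).1.le)
    (mem_Ici.2 (gi_mem hz hb).1.le), lb_gi hz ha, lb_gi hz hb]
  exact h

lemma gi_le {z a b : ℝ} (hz : 0 < z) (ha : a ∈ Ioo (0:ℝ) 1) (hb : b ∈ Ioo (0:ℝ) 1) (h : a ≤ b) :
    gi z a ≤ gi z b := by
  rcases h.lt_or_eq with h | h
  · exact (gi_lt hz ha hb h).le
  · rw [h]

lemma gi_sub {z a b : ℝ} (hz : 0 < z) (ha : a ∈ Ioo (0:ℝ) 1) (hb : b ∈ Ioo (0:ℝ) 1) (h : a ≤ b) :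
    gi z b - gi z a ≤ b - a := by
  have := lb_sub hz (gi_mem hz ha).1.le (gi_le hz ha hb h)
  rwa [lb_gi hz ha, lb_gi hz hb] at this

lemma gi_lip {z a b : ℝ} (hz : 0 < z) (ha : a ∈ Ioo (0:ℝ) 1) (hb : b ∈ Ioo (0:ℝ) 1) :
    |gi z a - gi z b| ≤ |a - b| := by
  rcases le_total a b with h | h
  · rw [abs_sub_comm, abs_sub_comm a b, abs_of_nonneg (by linarith : 0 ≤ b - a),
      abs_of_nonneg (by linarith [gi_le hz ha hb h])]
    exact gi_sub hz ha hb h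
  · rw [abs_of_nonneg (by linarith : 0 ≤ a - b), abs_of_nonneg (by linarith [gi_le hz hb ha h])]
    exact gi_sub hz hb ha h

lemma gi_continuousOn {z : ℝ} (hz : 0 < z) : ContinuousOn (gi z) (Ioo 0 1) := by
  have : LipschitzOnWith 1 (gi z) (Ioo 0 1) := by
    apply LipschitzOnWith.of_dist_le_mul
    intro x hx y hy
    simpa [Real.dist_eq] using gi_lip hz hx hy
  exact this.continuousOn

lemma gi_hasDerivAt {z y : ℝ} (hz : 0 < z) (hy : y ∈ Ioo (0:ℝ) 1) :
    HasDerivAt (gi z) (lb' z (gi z y))⁻¹ y := by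
  refine HasDerivAt.of_local_left_inverse (f := lb z)
    ((gi_continuousOn hz).continuousAt (Ioo_mem_nhds hy.1 hy.2))
    (lb_hasDerivAt (gi_mem hz hy).1) (by linarith [lb'_ge_one hz (gi_mem hz hy).1.le]) ?_
  filter_upwards [Ioo_mem_nhds hy.1 hy.2] with w hw
  exact lb_gi hz hw

/-- iterated inverse branch -/
noncomputable def G (z : ℝ) (n : ℕ) (y : ℝ) : ℝ := (gi z)^[n] y

lemma G_zero (z y : ℝ) : G z 0 y = y := rfl

lemma G_succ (z : ℝ) (n : ℕ) (y : ℝ) : G z (n+1) y = gi z (G z n y) :=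
  Function.iterate_succ_apply' _ _ _

lemma G_succ' (z : ℝ) (n : ℕ) (y : ℝ) : G z (n+1) y = G z n (gi z y) :=
  Function.iterate_succ_apply _ _ _

lemma G_mem {z y : ℝ} (hz : 0 < z) (hy : y ∈ Ioo (0:ℝ) 1) (n : ℕ) : G z n y ∈ Ioo (0:ℝ) 1 := by
  induction n with
  | zero => exact hy
  | succ n ih => rw [G_succ]; exact gi_mem' hz ih

lemma G_succ_mem {z y : ℝ} (hz : 0 < z) (hy : y ∈ Ioo (0:ℝ) 1) (n : ℕ) :
    G z (n+1) y ∈ Ioo (0:ℝ) (1/2) := by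
  rw [G_succ]; exact gi_mem hz (G_mem hz hy n)

lemma lb_G_succ {z y : ℝ} (hz : 0 < z) (hy : y ∈ Ioo (0:ℝ) 1) (n : ℕ) :
    lb z (G z (n+1) y) = G z n y := by
  rw [G_succ, lb_gi hz (G_mem hz hy n)]

lemma lsv_G_succ {z y : ℝ} (hz : 0 < z) (hy : y ∈ Ioo (0:ℝ) 1) (n : ℕ) :
    lsv z (G z (n+1) y) = G z n y := by
  rw [lsv_left (G_succ_mem hz hy n).2, lb_G_succ hz hy]

lemma G_lt {z a b : ℝ} (hz : 0 < z) (ha : a ∈ Ioo (0:ℝ) 1) (hb : b ∈ Ioo (0:ℝ) 1) (h : a < b)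
    (n : ℕ) : G z n a < G z n b := by
  induction n with
  | zero => exact h
  | succ n ih => rw [G_succ, G_succ]; exact gi_lt hz (G_mem hz ha n) (G_mem hz hb n) ih

lemma G_le {z a b : ℝ} (hz : 0 < z) (ha : a ∈ Ioo (0:ℝ) 1) (hb : b ∈ Ioo (0:ℝ) 1) (h : a ≤ b)
    (n : ℕ) : G z n a ≤ G z n b := by
  rcases h.lt_or_eq with h | h
  · exact (G_lt hz ha hb h n).le
  · rw [h]

lemma G_lip {z a b : ℝ} (hz : 0 < z) (ha : a ∈ Ioo (0:ℝ) 1) (hb : b ∈ Ioo (0:ℝ) 1) (n : ℕ) :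
    |G z n a - G z n b| ≤ |a - b| := by
  induction n with
  | zero => exact le_rfl
  | succ n ih =>
    rw [G_succ, G_succ]; exact (gi_lip hz (G_mem hz ha n) (G_mem hz hb n)).trans ih

/-- derivative of `G n` -/
noncomputable def dG (z : ℝ) (n : ℕ) (y : ℝ) : ℝ := ∏ i ∈ Finset.range n, (lb' z (G z (i+1) y))⁻¹

lemma dG_succ (z : ℝ) (n : ℕ) (y : ℝ) : dG z (n+1) y = dG z n y * (lb' z (G z (n+1) y))⁻¹ :=
  Finset.prod_range_succ _ _

lemma G_hasDerivAt {z y : ℝ} (hz : 0 < z) (hy : y ∈ Ioo (0:ℝ) 1) (n : ℕ) :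
    HasDerivAt (G z n) (dG z n y) y := by
  induction n with
  | zero => simp only [dG, Finset.range_zero, Finset.prod_empty]; exact hasDerivAt_id y
  | succ n ih =>
    have h := (gi_hasDerivAt hz (G_mem hz hy n)).comp y ih
    rw [dG_succ, G_succ, mul_comm]
    refine h.congr_of_eventuallyEq (Eventually.of_forall fun x => ?_)
    simp [G_succ]

lemma lb'_pos {z y : ℝ} (hz : 0 < z) (hy : y ∈ Ioo (0:ℝ) 1) (n : ℕ) : 0 < lb' z (G z n y) := by
  linarith [lb'_ge_one hz (G_mem hz hy n).1.le]

lemma dG_pos {z y : ℝ} (hz : 0 < z) (hy : y ∈ Ioo (0:ℝ) 1) (n : ℕ) : 0 < dG z n y :=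
  Finset.prod_pos fun i _ => inv_pos.2 (lb'_pos hz hy _)

lemma dG_anti {z a b : ℝ} (hz : 0 < z) (ha : a ∈ Ioo (0:ℝ) 1) (hb : b ∈ Ioo (0:ℝ) 1) (h : a ≤ b)
    (n : ℕ) : dG z n b ≤ dG z n a := by
  refine Finset.prod_le_prod (fun i _ => (inv_pos.2 (lb'_pos hz hb _)).le) fun i _ => ?_
  apply inv_anti₀ (lb'_pos hz ha _)
  have h1 := Real.rpow_le_rpow (G_mem hz ha (i+1)).1.le (G_le hz ha hb h (i+1)) hz.le
  have h3 : (0:ℝ) < 2 ^ z := Real.rpow_pos_of_pos (by norm_num) z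
  unfold lb'
  gcongr

lemma dist_poly {c u v : ℝ} (hc : 0 ≤ c) (hc2 : c ≤ 2) (hu : 0 ≤ u) (huv : u ≤ v) :
    (1 + c * v) * (1 + u) ^ 2 ≤ (1 + c * u) * (1 + v) ^ 2 := by
  have : (1 + c * u) * (1 + v) ^ 2 - (1 + c * v) * (1 + u) ^ 2
      = (v - u) * ((2 - c) + (u + v) + c * u * v) := by ring
  have h2 : 0 ≤ (v - u) * ((2 - c) + (u + v) + c * u * v) := by
    apply mul_nonneg (by linarith)
    have : 0 ≤ c * u * v := by have : 0 ≤ v := by linarith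
                               positivity
    linarith
  linarith

lemma dG_dist {z a b : ℝ} (hz : 0 < z) (hz1 : z < 1) (ha : a ∈ Ioo (0:ℝ) 1) (hb : b ∈ Ioo (0:ℝ) 1)
    (h : a ≤ b) (n : ℕ) :
    dG z n a * (a ^ 2 * G z n b ^ 2) ≤ dG z n b * (b ^ 2 * G z n a ^ 2) := by
  induction n with
  | zero => simp [dG, G_zero]; nlinarith
  | succ n ih =>
    have hA := G_succ_mem hz ha n
    have hB := G_succ_mem hz hb n
    have hAB := G_le hz ha hb h (n+1)
    rw [dG_succ, dG_succ]
    have e1 := lb_G_succ hz ha n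
    have e2 := lb_G_succ hz hb n
    rw [← e1, ← e2] at ih
    set A := G z (n+1) a
    set B := G z (n+1) b
    have h3 : (0:ℝ) < 2 ^ z := Real.rpow_pos_of_pos (by norm_num) z
    set u := 2 ^ z * A ^ z with hu
    set v := 2 ^ z * B ^ z with hv
    have hu0 : 0 ≤ u := mul_nonneg h3.le (Real.rpow_nonneg hA.1.le z)
    have huv : u ≤ v := mul_le_mul_of_nonneg_left (Real.rpow_le_rpow hA.1.le hAB hz.le) h3.le
    have hv0 : 0 ≤ v := hu0.trans huv
    have key := dist_poly (c := 1 + z) (by linarith) (by linarith) hu0 huv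
    have l1 : lb z A = A * (1 + u) := rfl
    have l2 : lb z B = B * (1 + v) := rfl
    have l3 : lb' z A = 1 + (1 + z) * u := rfl
    have l4 : lb' z B = 1 + (1 + z) * v := rfl
    rw [l1, l2] at ih
    rw [l3, l4]
    have p1 : 0 < 1 + (1 + z) * u := by positivity
    have p2 : 0 < 1 + (1 + z) * v := by positivity
    have da := dG_pos hz ha n
    have db := dG_pos hz hb n
    have hb0 := hb.1
    have hA0 := hA.1
    rw [← div_eq_mul_inv, ← div_eq_mul_inv, div_mul_eq_mul_div, div_mul_eq_mul_div,
      div_le_div_iff₀ p1 p2]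
    have q : 0 < (1 + v) ^ 2 := by positivity
    refine le_of_mul_le_mul_right ?_ q
    calc dG z n a * (a ^ 2 * B ^ 2) * (1 + (1 + z) * v) * (1 + v) ^ 2
        = (dG z n a * (a ^ 2 * (B * (1 + v)) ^ 2)) * (1 + (1 + z) * v) := by ring
      _ ≤ (dG z n b * (b ^ 2 * (A * (1 + u)) ^ 2)) * (1 + (1 + z) * v) :=
          mul_le_mul_of_nonneg_right ih p2.le
      _ = dG z n b * (b ^ 2 * A ^ 2) * ((1 + (1 + z) * v) * (1 + u) ^ 2) := by ring
      _ ≤ dG z n b * (b ^ 2 * A ^ 2) * ((1 + (1 + z) * u) * (1 + v) ^ 2) :=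
          mul_le_mul_of_nonneg_left key (by positivity)
      _ = _ := by ring

/-- the base -/
def Y : Set ℝ := Ico (1/2 : ℝ) 1

lemma Y_sub {y : ℝ} (hy : y ∈ Y) : y ∈ Ioo (0:ℝ) 1 := ⟨by linarith [hy.1], hy.2⟩

lemma dG_exp {z a b : ℝ} (hz : 0 < z) (hz1 : z < 1) (ha : a ∈ Y) (hb : b ∈ Y) (n : ℕ) :
    dG z n a ≤ Real.exp (4 * |a - b|) * dG z n b := by
  have ha' := Y_sub ha
  have hb' := Y_sub hb
  rcases le_total a b with h | h
  · have h1 := dG_dist hz hz1 ha' hb' h n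
    have hG := G_le hz ha' hb' h n
    have hA := (G_mem hz ha' n).1
    have hB := (G_mem hz hb' n).1
    have da := dG_pos hz ha' n
    have db := dG_pos hz hb' n
    have h2 : dG z n a * a ^ 2 ≤ dG z n b * b ^ 2 := by
      refine le_of_mul_le_mul_right ?_ (by positivity : 0 < G z n b ^ 2)
      calc _ = dG z n a * (a ^ 2 * G z n b ^ 2) := by ring
        _ ≤ _ := h1
        _ ≤ dG z n b * (b ^ 2 * G z n b ^ 2) := by gcongr
        _ = _ := by ring
    have h3 : b ≤ Real.exp (2 * |a - b|) * a := by
      have := Real.add_one_le_exp (2 * |a - b|)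
      rw [abs_sub_comm, abs_of_nonneg (by linarith)] at *
      have ha1 := ha.1
      calc b ≤ (2 * (b - a) + 1) * a := by nlinarith
        _ ≤ _ := by gcongr
    have h4 : b ^ 2 ≤ Real.exp (4 * |a - b|) * a ^ 2 := by
      calc b ^ 2 ≤ (Real.exp (2 * |a - b|) * a) ^ 2 := by gcongr; exact hb'.1.le
        _ = _ := by rw [mul_pow, ← Real.exp_nat_mul]; ring_nf
    have a2 : 0 < a ^ 2 := by have := ha'.1; positivity
    refine le_of_mul_le_mul_right ?_ a2
    calc _ ≤ _ := h2
      _ ≤ dG z n b * (Real.exp (4 * |a - b|) * a ^ 2) := by gcongr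
      _ = _ := by ring
  · have := dG_anti hz hb' ha' h n
    have h1 : 1 ≤ Real.exp (4 * |a - b|) := Real.one_le_exp (by positivity)
    nlinarith [dG_pos hz hb' n]

end LSV

namespace LSV

noncomputable def xs (z : ℝ) (n : ℕ) : ℝ := G z n (1/2)

lemma half_mem : (1/2 : ℝ) ∈ Ioo (0:ℝ) 1 := by constructor <;> norm_num

lemma half_memY : (1/2 : ℝ) ∈ Y := by constructor <;> norm_num

lemma xs_mem {z : ℝ} (hz : 0 < z) (n : ℕ) : xs z n ∈ Ioo (0:ℝ) 1 := G_mem hz half_mem n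

lemma xs_le_half {z : ℝ} (hz : 0 < z) (n : ℕ) : xs z n ≤ 1/2 := by
  cases n with
  | zero => exact le_rfl
  | succ n => exact (G_succ_mem hz half_mem n).2.le

lemma xs_succ_eq {z : ℝ} (hz : 0 < z) (n : ℕ) :
    xs z n = xs z (n+1) * (1 + 2 ^ z * xs z (n+1) ^ z) := (lb_G_succ hz half_mem n).symm

lemma two_rpow_bounds {z : ℝ} (hz : 0 < z) (hz1 : z < 1) : (1:ℝ) ≤ 2 ^ z ∧ (2:ℝ) ^ z ≤ 2 := by
  constructor
  · exact Real.one_le_rpow (by norm_num) hz.le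
  · calc (2:ℝ) ^ z ≤ 2 ^ (1:ℝ) := Real.rpow_le_rpow_of_exponent_le (by norm_num) hz1.le
      _ = 2 := Real.rpow_one 2

lemma xs_step {z : ℝ} (hz : 0 < z) (hz1 : z < 1) (n : ℕ) :
    (xs z n ^ z)⁻¹ + z / 2 ≤ (xs z (n+1) ^ z)⁻¹ ∧ (xs z (n+1) ^ z)⁻¹ ≤ (xs z n ^ z)⁻¹ + 2 := by
  have hx := (xs_mem hz (n+1)).1
  have hxh := xs_le_half hz (n+1)
  have e := xs_succ_eq hz n
  obtain ⟨t1, t2⟩ := two_rpow_bounds hz hz1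
  set x := xs z (n+1)
  have hxz : 0 < x ^ z := Real.rpow_pos_of_pos hx z
  set u := 2 ^ z * x ^ z with hu
  have hu0 : 0 < u := by positivity
  have hu1 : u ≤ 1 := by
    rw [hu, ← two_half (z := z)]
    gcongr
  rw [e, Real.mul_rpow hx.le (by linarith)]
  set P := (1 + u) ^ z with hP
  have hP0 : 0 < P := Real.rpow_pos_of_pos (by linarith) z
  have hPu : P ≤ 1 + u := by
    calc P ≤ 1 + z * u := rpow_one_add_le_one_add_mul_self (by linarith) hz.le hz1.le
      _ ≤ 1 + u := by nlinarith
  have hPl : P⁻¹ ≤ 1 - z * u / 2 := by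
    have h1 : P⁻¹ = (1 + -(u / (1 + u))) ^ z := by
      have : 1 + -(u / (1 + u)) = (1 + u)⁻¹ := by field_simp; ring
      rw [this, Real.inv_rpow (by linarith)]
    have h2 : u / (1 + u) ≤ 1 := by rw [div_le_one (by linarith)]; linarith
    have h3 : u / 2 ≤ u / (1 + u) := by
      apply div_le_div_of_nonneg_left hu0.le (by linarith) (by linarith)
    rw [h1]
    calc _ ≤ 1 + z * (-(u / (1 + u))) :=
          rpow_one_add_le_one_add_mul_self (by linarith) hz.le hz1.le
      _ ≤ _ := by nlinarith
  have hPl2 : 1 - u ≤ P⁻¹ := by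
    have h1 : (1 + u)⁻¹ ≤ P⁻¹ := inv_anti₀ hP0 hPu
    have h2 : 1 - u ≤ (1 + u)⁻¹ := by
      rw [← one_div, le_div_iff₀ (by linarith)]; nlinarith
    linarith
  rw [mul_inv]
  have hux : (x ^ z)⁻¹ * u = 2 ^ z := by rw [hu]; field_simp
  have hi : 0 < (x ^ z)⁻¹ := inv_pos.2 hxz
  constructor
  · have : (x ^ z)⁻¹ * P⁻¹ ≤ (x ^ z)⁻¹ * (1 - z * u / 2) := by gcongr
    nlinarith
  · have : (x ^ z)⁻¹ * (1 - u) ≤ (x ^ z)⁻¹ * P⁻¹ := by gcongr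
    nlinarith

lemma xs_inv_bounds {z : ℝ} (hz : 0 < z) (hz1 : z < 1) (n : ℕ) :
    z / 2 * (n + 1) ≤ (xs z n ^ z)⁻¹ ∧ (xs z n ^ z)⁻¹ ≤ 2 * (n + 1) := by
  induction n with
  | zero =>
    have : (xs z 0 ^ z)⁻¹ = 2 ^ z := by
      have h := two_half (z := z)
      have : xs z 0 = 1/2 := rfl
      rw [this]
      exact (eq_inv_of_mul_eq_one_left h).symm
    obtain ⟨t1, t2⟩ := two_rpow_bounds hz hz1
    rw [this]; push_cast
    constructor <;> linarith
  | succ n ih =>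
    obtain ⟨h1, h2⟩ := xs_step hz hz1 n
    push_cast
    constructor <;> linarith [ih.1, ih.2]

lemma xs_eq {z : ℝ} (hz : 0 < z) (n : ℕ) : xs z n = ((xs z n ^ z)⁻¹) ^ (-(1/z)) := by
  have hx := (xs_mem hz n).1
  rw [← Real.rpow_neg hx.le, ← Real.rpow_mul hx.le]
  have : -z * -(1/z) = 1 := by field_simp
  rw [this, Real.rpow_one]

lemma xs_upper {z : ℝ} (hz : 0 < z) (hz1 : z < 1) :
    ∃ C : ℝ, 0 < C ∧ ∀ n : ℕ, xs z n ≤ C * ((n:ℝ) + 1) ^ (-(1/z)) := by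
  refine ⟨(z/2) ^ (-(1/z)), by positivity, fun n => ?_⟩
  rw [xs_eq hz n, ← Real.mul_rpow (by positivity) (by positivity)]
  exact Real.rpow_le_rpow_of_nonpos (by positivity) (xs_inv_bounds hz hz1 n).1
    (by rw [neg_nonpos]; positivity)

lemma xs_lower {z : ℝ} (hz : 0 < z) (hz1 : z < 1) :
    ∃ C : ℝ, 0 < C ∧ ∀ n : ℕ, C * ((n:ℝ) + 1) ^ (-(1/z)) ≤ xs z n := by
  refine ⟨2 ^ (-(1/z)), by positivity, fun n => ?_⟩
  rw [xs_eq hz n, ← Real.mul_rpow (by positivity) (by positivity)]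
  have hx := (xs_mem hz n).1
  exact Real.rpow_le_rpow_of_nonpos (by positivity) (xs_inv_bounds hz hz1 n).2
    (by rw [neg_nonpos]; positivity)

lemma dG_bound {z : ℝ} (hz : 0 < z) (hz1 : z < 1) :
    ∃ C : ℝ, 0 < C ∧ ∀ (n : ℕ), ∀ y ∈ Y, dG z n y ≤ C * ((n:ℝ) + 1) ^ (-(1/z) - 1) ∧
      (xs z n - xs z (n+1)) ≤ C * ((n:ℝ) + 1) ^ (-(1/z) - 1) := by
  obtain ⟨C, hC, hx⟩ := xs_upper hz hz1
  obtain ⟨t1, t2⟩ := two_rpow_bounds hz hz1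
  have hdiff : ∀ n : ℕ, xs z n - xs z (n+1) ≤ 2 * C ^ (1+z) * (((n+1:ℕ):ℝ) + 1) ^ (-(1/z) - 1) := by
    intro n
    have e := xs_succ_eq hz n
    have hp := (xs_mem hz (n+1)).1
    have h1 : xs z n - xs z (n+1) = 2 ^ z * xs z (n+1) ^ (1 + z) := by
      rw [Real.rpow_add hp, Real.rpow_one]; linear_combination e
    have h2 : xs z (n+1) ^ (1+z) ≤ (C * (((n+1:ℕ):ℝ) + 1) ^ (-(1/z))) ^ (1+z) :=
      Real.rpow_le_rpow hp.le (hx (n+1)) (by linarith)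
    rw [Real.mul_rpow hC.le (by positivity), ← Real.rpow_mul (by positivity)] at h2
    have h3 : -(1/z) * (1+z) = -(1/z) - 1 := by field_simp; ring
    rw [h3] at h2
    rw [h1, mul_assoc]
    gcongr
  set K := 1 + 4 * Real.exp 4 * (2 * C ^ (1+z)) with hK
  have hexp : 1 ≤ Real.exp 4 := Real.one_le_exp (by norm_num)
  have hCp : 0 < C ^ (1+z) := by positivity
  refine ⟨K, by positivity, fun n y hy => ⟨?_, ?_⟩⟩
  · cases n with
    | zero =>
      simp [dG, hK]; positivity
    | succ n =>
      have h34 : (3/4 : ℝ) ∈ Y := by constructor <;> norm_num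
      obtain ⟨ξ, hξ, hd⟩ := exists_hasDerivAt_eq_slope (G z (n+1)) (dG z (n+1))
        (show (1/2:ℝ) < 3/4 by norm_num)
        (fun x hx => ((G_hasDerivAt hz (Y_sub ⟨hx.1, by linarith [hx.2]⟩)
          (n+1)).continuousAt).continuousWithinAt)
        (fun x hx => G_hasDerivAt hz (Y_sub ⟨hx.1.le, by linarith [hx.2]⟩) (n+1))
      have hξY : ξ ∈ Y := ⟨hξ.1.le, by linarith [hξ.2]⟩
      have h1 : G z (n+1) (3/4) ≤ xs z n := by
        rw [G_succ']
        exact G_le hz (gi_mem' hz (Y_sub h34)) half_mem (gi_mem hz (Y_sub h34)).2.le n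
      have h2 : dG z (n+1) ξ ≤ 4 * (xs z n - xs z (n+1)) := by
        rw [hd]; 
        have : G z (n+1) (1/2) = xs z (n+1) := rfl
        rw [this, div_le_iff₀ (by norm_num)]; linarith
      have h3 := dG_exp hz hz1 hy hξY (n+1)
      have h4 : Real.exp (4 * |y - ξ|) ≤ Real.exp 4 := by
        apply Real.exp_le_exp.2
        have : |y - ξ| ≤ 1 := abs_le.2 ⟨by linarith [hy.1, hξY.2], by linarith [hy.2, hξY.1]⟩
        linarith
      have h5 := hdiff n
      have h6 := dG_pos hz (Y_sub hξY) (n+1)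
      have h7 : (0:ℝ) < (((n+1:ℕ):ℝ) + 1) ^ (-(1/z) - 1) := by positivity
      calc dG z (n+1) y ≤ Real.exp 4 * dG z (n+1) ξ := h3.trans (by gcongr)
        _ ≤ Real.exp 4 * (4 * (2 * C ^ (1+z) * (((n+1:ℕ):ℝ) + 1) ^ (-(1/z) - 1))) := by
          gcongr; linarith
        _ = (4 * Real.exp 4 * (2 * C ^ (1+z))) * (((n+1:ℕ):ℝ) + 1) ^ (-(1/z) - 1) := by ring
        _ ≤ _ := by gcongr; linarith
  · refine (hdiff n).trans ?_
    have h1 : (((n+1:ℕ):ℝ) + 1) ^ (-(1/z) - 1) ≤ ((n:ℝ) + 1) ^ (-(1/z) - 1) := by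
      apply Real.rpow_le_rpow_of_nonpos (by positivity) (by push_cast; linarith)
      have : 0 < 1/z := by positivity
      linarith
    have : 2 * C ^ (1+z) ≤ K := by rw [hK]; nlinarith
    gcongr

/-- endpoints -/
noncomputable def b (z : ℝ) : ℕ → ℝ
  | 0 => 1
  | n+1 => (1 + xs z n) / 2

noncomputable def E (z : ℝ) (n : ℕ) : Set ℝ := Ico (1/2) (b z n)
noncomputable def YN (z : ℝ) (n : ℕ) : Set ℝ := Ico (b z (n+1)) (b z n)

lemma xs_anti {z : ℝ} (hz : 0 < z) (n : ℕ) : xs z (n+1) < xs z n := by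
  have := G_lt hz (gi_mem' hz half_mem) half_mem (gi_mem hz half_mem).2 n
  rwa [← G_succ'] at this

lemma xs_antitone {z : ℝ} (hz : 0 < z) : Antitone (xs z) :=
  antitone_nat_of_succ_le fun n => (xs_anti hz n).le

lemma b_anti {z : ℝ} (hz : 0 < z) (n : ℕ) : b z (n+1) < b z n := by
  cases n with
  | zero => simp only [b]; linarith [(xs_mem hz 0).2]
  | succ n => simp only [b]; linarith [xs_anti hz n]

lemma b_antitone {z : ℝ} (hz : 0 < z) : Antitone (b z) :=
  antitone_nat_of_succ_le fun n => (b_anti hz n).le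

lemma b_gt {z : ℝ} (hz : 0 < z) (n : ℕ) : 1/2 < b z n := by
  cases n with
  | zero => simp only [b]; norm_num
  | succ n => simp only [b]; linarith [(xs_mem hz n).1]

lemma b_le_one {z : ℝ} (hz : 0 < z) (n : ℕ) : b z n ≤ 1 := b_antitone hz (Nat.zero_le n)

lemma xs_tendsto {z : ℝ} (hz : 0 < z) (hz1 : z < 1) : Tendsto (xs z) atTop (nhds 0) := by
  obtain ⟨C, hC, h⟩ := xs_upper hz hz1
  have h1 : Tendsto (fun n : ℕ => C * ((n:ℝ) + 1) ^ (-(1/z))) atTop (nhds (C * 0)) := by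
    apply Tendsto.const_mul
    exact (tendsto_rpow_neg_atTop (by positivity)).comp
      (tendsto_atTop_add_const_right _ _ tendsto_natCast_atTop_atTop)
  rw [mul_zero] at h1
  exact squeeze_zero (fun n => (xs_mem hz n).1.le) h h1

lemma E_zero (z : ℝ) : E z 0 = Y := rfl

lemma YN_eq {z : ℝ} (hz : 0 < z) (n : ℕ) : YN z n = E z n \ E z (n+1) := by
  ext x; simp only [YN, E, mem_Ico, Set.mem_sdiff, not_and, not_lt]
  have := b_gt hz (n+1)
  constructor
  · rintro ⟨h1, h2⟩; exact ⟨⟨by linarith, h2⟩, fun _ => h1⟩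
  · rintro ⟨⟨h1, h2⟩, h3⟩; exact ⟨h3 h1, h2⟩

lemma E_sub {z : ℝ} (hz : 0 < z) (n : ℕ) : E z n ⊆ Y := Ico_subset_Ico_right (b_le_one hz n)

lemma E_succ_sub {z : ℝ} (hz : 0 < z) (n : ℕ) : E z (n+1) ⊆ E z n :=
  Ico_subset_Ico_right (b_anti hz n).le

lemma YN_sub {z : ℝ} (hz : 0 < z) (n : ℕ) : YN z n ⊆ Y := by
  rw [YN_eq hz]; exact sdiff_subset.trans (E_sub hz n)

lemma YN_disj {z : ℝ} (hz : 0 < z) : Pairwise (Function.onFun Disjoint (YN z)) := by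
  have := (b_antitone hz)
  exact this.pairwise_disjoint_on_Ico_succ

lemma YN_union {z : ℝ} (hz : 0 < z) (hz1 : z < 1) : (⋃ n, YN z n) = Ioo (1/2) 1 := by
  ext x
  simp only [mem_iUnion]
  constructor
  · rintro ⟨n, h⟩
    exact ⟨lt_of_lt_of_le (b_gt hz (n+1)) h.1, lt_of_lt_of_le h.2 (b_le_one hz n)⟩
  · intro hx
    have hex : ∃ n, b z (n+1) ≤ x := by
      have h1 := (xs_tendsto hz hz1).eventually (gt_mem_nhds (show (0:ℝ) < 2 * x - 1 by linarith [hx.1]))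
      obtain ⟨n, hn⟩ := h1.exists
      exact ⟨n, by simp only [b]; linarith⟩
    classical
    refine ⟨Nat.find hex, Nat.find_spec hex, ?_⟩
    rcases h : Nat.find hex with _ | m
    · exact hx.2
    · have := Nat.find_min hex (m := m) (by omega)
      exact not_le.1 this

lemma lt_xs_iff {z x : ℝ} (hz : 0 < z) (hx : x ∈ Ico (0:ℝ) 1) (n : ℕ) :
    (x < 1/2 ∧ lsv z x < xs z n) ↔ x < xs z (n+1) := by
  have hm := (G_succ_mem hz half_mem n)
  have key : x < 1/2 → (lsv z x < xs z n ↔ x < xs z (n+1)) := by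
    intro h
    rw [lsv_left h, show xs z n = lb z (xs z (n+1)) from (lb_G_succ hz half_mem n).symm]
    exact (lb_strictMonoOn hz).lt_iff_lt (mem_Ici.2 hx.1) (mem_Ici.2 hm.1.le)
  constructor
  · rintro ⟨h1, h2⟩; exact (key h1).1 h2
  · intro h
    have : x < 1/2 := h.trans hm.2
    exact ⟨this, (key this).2 h⟩

lemma iter_lt_iff {z x : ℝ} (hz : 0 < z) (hx : x ∈ Ico (0:ℝ) 1) (n : ℕ) :
    (∀ i ≤ n, (lsv z)^[i] x < 1/2) ↔ x < xs z n := by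
  induction n generalizing x with
  | zero =>
    constructor
    · intro h; exact h 0 le_rfl
    · intro h i hi; obtain rfl : i = 0 := by omega
      exact h
  | succ n ih =>
    rw [← lt_xs_iff hz hx, ← ih (lsv_mem hz hx)]
    constructor
    · intro h
      exact ⟨h 0 (by omega), fun i hi => by
        rw [← Function.iterate_succ_apply]; exact h (i+1) (by omega)⟩
    · rintro ⟨h1, h2⟩ i hi
      cases i with
      | zero => exact h1
      | succ i => rw [Function.iterate_succ_apply]; exact h2 i (by omega)

lemma Y_sub' {x : ℝ} (hx : x ∈ Y) : x ∈ Ico (0:ℝ) 1 := ⟨(Y_sub hx).1.le, hx.2⟩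

lemma mem_E_iff {z x : ℝ} (hz : 0 < z) (n : ℕ) :
    x ∈ E z n ↔ x ∈ Y ∧ ∀ i < n, (lsv z)^[i+1] x < 1/2 := by
  cases n with
  | zero => simp [E_zero]
  | succ n =>
    constructor
    · intro h
      have hY := E_sub hz _ h
      refine ⟨hY, fun i hi => ?_⟩
      rw [Function.iterate_succ_apply]
      refine (iter_lt_iff hz (lsv_mem hz (Y_sub' hY)) n).2 ?_ i (by omega)
      rw [lsv_right hY.1]
      have := h.2
      simp only [b] at this
      linarith
    · rintro ⟨hY, h⟩
      refine ⟨hY.1, ?_⟩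
      have := (iter_lt_iff hz (lsv_mem hz (Y_sub' hY)) n).1 (fun i hi => by
        rw [← Function.iterate_succ_apply]; exact h i (by omega))
      rw [lsv_right hY.1] at this
      simp only [b]; linarith

lemma mem_YN_iff {z x : ℝ} (hz : 0 < z) (n : ℕ) :
    x ∈ YN z n ↔ x ∈ E z n ∧ 1/2 ≤ (lsv z)^[n+1] x := by
  rw [YN_eq hz, Set.mem_sdiff, mem_E_iff hz (n+1)]
  constructor
  · rintro ⟨h1, h2⟩
    refine ⟨h1, ?_⟩
    by_contra h3
    apply h2
    refine ⟨E_sub hz _ h1, fun i hi => ?_⟩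
    rcases Nat.lt_succ_iff_lt_or_eq.1 hi with h | h
    · exact ((mem_E_iff hz n).1 h1).2 i h
    · rw [h]; exact not_le.1 h3
  · rintro ⟨h1, h2⟩
    exact ⟨h1, fun h => absurd (h.2 n (by omega)) (not_lt.2 h2)⟩

/-- inverse branches of the induced map -/
noncomputable def ps (z : ℝ) (n : ℕ) (y : ℝ) : ℝ := (1 + G z n y) / 2

lemma lsv_iter_G {z y : ℝ} (hz : 0 < z) (hy : y ∈ Ioo (0:ℝ) 1) (n k : ℕ) :
    (lsv z)^[k] (G z (n + k) y) = G z n y := by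
  induction k with
  | zero => rfl
  | succ k ih =>
    rw [Function.iterate_succ_apply, ← add_assoc, lsv_G_succ hz hy, ih]

lemma ps_memY {z y : ℝ} (hz : 0 < z) (hy : y ∈ Y) (n : ℕ) : ps z n y ∈ Y := by
  have := G_mem hz (Y_sub hy) n
  exact ⟨by unfold ps; linarith [this.1], by unfold ps; linarith [this.2]⟩

lemma lsv_ps {z y : ℝ} (hz : 0 < z) (hy : y ∈ Y) (n : ℕ) : lsv z (ps z n y) = G z n y := by
  rw [lsv_right (ps_memY hz hy n).1]; unfold ps; ring

lemma lsv_iter_ps {z y : ℝ} (hz : 0 < z) (hy : y ∈ Y) (n k : ℕ) :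
    (lsv z)^[k+1] (ps z (n + k) y) = G z n y := by
  rw [Function.iterate_succ_apply, lsv_ps hz hy, lsv_iter_G hz (Y_sub hy)]

lemma ps_ret {z y : ℝ} (hz : 0 < z) (hy : y ∈ Y) (n : ℕ) : (lsv z)^[n+1] (ps z n y) = y := by
  have := lsv_iter_ps hz hy 0 n
  rwa [zero_add] at this

lemma ps_memYN {z y : ℝ} (hz : 0 < z) (hy : y ∈ Y) (n : ℕ) : ps z n y ∈ YN z n := by
  rw [mem_YN_iff hz, mem_E_iff hz, ps_ret hz hy]
  refine ⟨⟨ps_memY hz hy n, fun i hi => ?_⟩, hy.1⟩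
  obtain ⟨k, rfl⟩ : ∃ k, n = (k + 1) + i := ⟨n - i - 1, by omega⟩
  rw [lsv_iter_ps hz hy]
  exact (G_succ_mem hz (Y_sub hy) k).2

lemma G_lsv_iter {z u : ℝ} (hz : 0 < z) (n : ℕ) (hu : u ∈ Ioo (0:ℝ) 1)
    (h : ∀ i < n, (lsv z)^[i] u < 1/2) : G z n ((lsv z)^[n] u) = u := by
  induction n generalizing u with
  | zero => rfl
  | succ n ih =>
    have hu2 : u < 1/2 := h 0 (by omega)
    have h1 : lsv z u ∈ Ioo (0:ℝ) 1 := by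
      refine ⟨?_, (lsv_mem hz ⟨hu.1.le, hu.2⟩).2⟩
      rw [lsv_left hu2, ← lb_zero z]
      exact lb_strictMonoOn hz (mem_Ici.2 le_rfl) (mem_Ici.2 hu.1.le) hu.1
    rw [Function.iterate_succ_apply, G_succ, ih h1 (fun i hi => by
      rw [← Function.iterate_succ_apply]; exact h (i+1) (by omega)), lsv_left hu2]
    exact gi_lb hz ⟨hu.1, hu2⟩

lemma ps_image {z : ℝ} (hz : 0 < z) (n : ℕ) : ps z n '' Y = YN z n := by
  ext x
  constructor
  · rintro ⟨y, hy, rfl⟩; exact ps_memYN hz hy n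
  · intro hx
    obtain ⟨h1, h2⟩ := (mem_YN_iff hz n).1 hx
    obtain ⟨hY, h3⟩ := (mem_E_iff hz n).1 h1
    have hx2 : 1/2 < x := lt_of_lt_of_le (b_gt hz (n+1)) hx.1
    refine ⟨(lsv z)^[n+1] x, ⟨h2, (lsv_iter_mem hz (Y_sub' hY) _).2⟩, ?_⟩
    unfold ps
    rw [Function.iterate_succ_apply, G_lsv_iter hz n, lsv_right hY.1]
    · ring
    · rw [lsv_right hY.1]; exact ⟨by linarith, by linarith [hY.2]⟩
    · intro i hi; rw [← Function.iterate_succ_apply]; exact h3 i hi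

lemma ps_injOn {z : ℝ} (hz : 0 < z) (n : ℕ) : InjOn (ps z n) Y := by
  intro a ha c hc h
  rw [← ps_ret hz ha n, ← ps_ret hz hc n, h]

lemma ps_hasDerivAt {z y : ℝ} (hz : 0 < z) (hy : y ∈ Y) (n : ℕ) :
    HasDerivAt (ps z n) (dG z n y / 2) y := by
  unfold ps
  exact ((G_hasDerivAt hz (Y_sub hy) n).const_add 1).div_const 2

lemma ps_lip {z a c : ℝ} (hz : 0 < z) (ha : a ∈ Y) (hc : c ∈ Y) (n : ℕ) :
    |ps z n a - ps z n c| ≤ |a - c| / 2 := by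
  have := G_lip hz (Y_sub ha) (Y_sub hc) n
  have e : ps z n a - ps z n c = (G z n a - G z n c) / 2 := by unfold ps; ring
  rw [e, abs_div, abs_two]
  linarith

/-- return index -/
noncomputable def R0 (z x : ℝ) : ℕ := sInf {n : ℕ | b z (n+1) ≤ x}

/-- induced map -/
noncomputable def F (z x : ℝ) : ℝ := (lsv z)^[R0 z x + 1] x

lemma R0_eq {z x : ℝ} (hz : 0 < z) {n : ℕ} (hx : x ∈ YN z n) : R0 z x = n := by
  apply le_antisymm
  · exact Nat.sInf_le hx.1
  · refine le_csInf ⟨n, hx.1⟩ fun m hm => ?_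
    by_contra h
    have := b_antitone hz (show m + 1 ≤ n by omega)
    have h2 : b z (m+1) ≤ x := hm
    linarith [hx.2]

lemma F_eq {z x : ℝ} (hz : 0 < z) {n : ℕ} (hx : x ∈ YN z n) : F z x = (lsv z)^[n+1] x := by
  unfold F; rw [R0_eq hz hx]

lemma F_ps {z y : ℝ} (hz : 0 < z) (hy : y ∈ Y) (n : ℕ) : F z (ps z n y) = y := by
  rw [F_eq hz (ps_memYN hz hy n), ps_ret hz hy]

lemma R0_measurable (z : ℝ) : Measurable (R0 z) := by
  refine measurable_to_countable' fun n => ?_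
  have hm : ∀ n, MeasurableSet {x : ℝ | b z (n+1) ≤ x} := fun n => measurableSet_Ici
  have : R0 z ⁻¹' {n} = ({x | b z (n+1) ≤ x} ∩ ⋂ m ∈ Iio n, {x | b z (m+1) ≤ x}ᶜ) ∪
      ({x | n = 0} ∩ ⋂ m, {x | b z (m+1) ≤ x}ᶜ) := by
    ext x
    simp only [mem_preimage, mem_singleton_iff, mem_union, mem_inter_iff, mem_ofPred_eq, mem_iInter,
      mem_compl_iff, mem_Iio]
    constructor
    · intro h
      by_cases hne : {n : ℕ | b z (n+1) ≤ x}.Nonempty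
      · left
        have h1 := Nat.sInf_mem hne
        unfold R0 at h
        rw [h] at h1
        exact ⟨h1, fun m hm => Nat.notMem_of_lt_sInf (by rw [h]; exact hm)⟩
      · right
        rw [not_nonempty_iff_eq_empty] at hne
        refine ⟨?_, fun m hm => ?_⟩
        · rw [← h]; unfold R0; rw [hne]; exact Nat.sInf_empty
        · have : m ∈ {n : ℕ | b z (n+1) ≤ x} := hm
          rw [hne] at this; exact this
    · rintro (⟨h1, h2⟩ | ⟨h1, h2⟩)
      · apply le_antisymm (Nat.sInf_le h1)
        refine le_csInf ⟨n, h1⟩ fun m hm => ?_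
        by_contra h
        exact h2 m (by omega) hm
      · unfold R0
        have : {n : ℕ | b z (n+1) ≤ x} = ∅ := by
          ext m; simpa using h2 m
        rw [this, h1]; exact Nat.sInf_empty
  rw [this]
  refine MeasurableSet.union (MeasurableSet.inter (hm n) ?_) (MeasurableSet.inter ?_ ?_)
  · exact MeasurableSet.biInter (to_countable _) fun m _ => (hm m).compl
  · exact MeasurableSet.const _
  · exact MeasurableSet.iInter fun m => (hm m).compl

lemma F_measurable (z : ℝ) : Measurable (F z) := by
  have h : Measurable (fun p : ℝ × ℕ => (lsv z)^[p.2 + 1] p.1) := by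
    refine measurable_from_prod_countable_left fun n => ?_
    exact (lsv_measurable z).iterate (n+1)
  exact h.comp (measurable_id.prodMk (R0_measurable z))

lemma measurableSet_Y : MeasurableSet Y := measurableSet_Ico
lemma measurableSet_E (z : ℝ) (n : ℕ) : MeasurableSet (E z n) := measurableSet_Ico
lemma measurableSet_YN (z : ℝ) (n : ℕ) : MeasurableSet (YN z n) := measurableSet_Ico

end LSV

namespace LSV

/-- standing assumptions on the measure -/
structure Acip (z : ℝ) (μ : Measure ℝ) : Prop where
  prob : IsProbabilityMeasure μ
  supp : μ (Set.Icc (0 : ℝ) 1)ᶜ = 0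
  ac : μ ≪ volume
  inv : MeasurePreserving (lsv z) μ μ

lemma Acip.singleton {z : ℝ} {μ : Measure ℝ} (h : Acip z μ) (x : ℝ) : μ {x} = 0 :=
  h.ac Real.volume_singleton

lemma Acip.ae_mem {z : ℝ} {μ : Measure ℝ} (h : Acip z μ) : ∀ᵐ x ∂μ, x ∈ Ico (0:ℝ) 1 := by
  have h1 : ∀ᵐ x ∂μ, x ∈ Icc (0:ℝ) 1 := h.supp
  have h2 : ∀ᵐ x ∂μ, x ≠ 1 := by
    have := h.singleton 1
    exact measure_eq_zero_iff_ae_notMem.1 this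
  filter_upwards [h1, h2] with x h1 h2
  exact ⟨h1.1, lt_of_le_of_ne h1.2 h2⟩

lemma Acip.rest {z : ℝ} {μ : Measure ℝ} (h : Acip z μ) (hz : 0 < z) (hz1 : z < 1) :
    Tendsto (fun n => μ (Ico 0 (xs z n))) atTop (nhds 0) := by
  have := h.prob
  have h1 := tendsto_measure_iInter_atTop (μ := μ) (s := fun n => Ico 0 (xs z n))
    (fun n => measurableSet_Ico.nullMeasurableSet)
    (fun m n hmn => Ico_subset_Ico_right (xs_antitone hz hmn)) ⟨0, measure_ne_top _ _⟩
  have h2 : (⋂ n, Ico 0 (xs z n)) ⊆ {0} := by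
    intro x hx
    rw [mem_iInter] at hx
    have : x ≤ 0 := ge_of_tendsto' (xs_tendsto hz hz1) (fun n => (hx n).2.le)
    exact le_antisymm this (hx 0).1
  rw [measure_mono_null h2 (h.singleton 0)] at h1
  exact h1

lemma Acip.step {z : ℝ} {μ : Measure ℝ} (h : Acip z μ) (hz : 0 < z) {B : Set ℝ}
    (hB : MeasurableSet B) (n : ℕ) :
    μ ((lsv z)^[n] ⁻¹' B ∩ Ico 0 (xs z n)) = μ ((lsv z)^[n+1] ⁻¹' B ∩ E z (n+1)) +
      μ ((lsv z)^[n+1] ⁻¹' B ∩ Ico 0 (xs z (n+1))) := by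
  have hm : MeasurableSet ((lsv z)^[n] ⁻¹' B ∩ Ico 0 (xs z n)) :=
    ((lsv_measurable z).iterate n hB).inter measurableSet_Ico
  rw [← h.inv.measure_preimage hm.nullMeasurableSet, ← measure_union]
  · apply measure_congr
    filter_upwards [h.ae_mem] with x hx
    apply propext
    change (lsv z x ∈ (lsv z)^[n] ⁻¹' B ∩ Ico 0 (xs z n)) ↔ (x ∈ ((lsv z)^[n+1] ⁻¹' B ∩ E z (n+1)) ∪ ((lsv z)^[n+1] ⁻¹' B ∩ Ico 0 (xs z (n+1))))
    simp only [mem_inter_iff, mem_preimage, mem_union, ← Function.iterate_succ_apply]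
    have e1 : lsv z x ∈ Ico 0 (xs z n) ↔ (x ∈ E z (n+1) ∨ x ∈ Ico 0 (xs z (n+1))) := by
      have h0 := lsv_mem hz hx
      simp only [mem_Ico, h0.1, hx.1, true_and]
      rw [← lt_xs_iff hz hx]
      rcases lt_or_ge x (1/2) with h | h
      · simp only [h, true_and, E, mem_Ico, b]
        constructor
        · intro h; exact Or.inr h
        · rintro (h2 | h2)
          · linarith [h2.1]
          · exact h2
      · simp only [not_lt.2 h, false_and, or_false, E, mem_Ico, h, true_and, b]
        rw [lsv_right h]
        constructor <;> intro <;> linarith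
    tauto
  · rw [Set.disjoint_left]
    rintro x ⟨_, h1⟩ ⟨_, h2⟩
    have := xs_le_half hz (n+1)
    linarith [h1.1, h2.2]
  · exact ((lsv_measurable z).iterate (n+1) hB).inter measurableSet_Ico

lemma Acip.partial {z : ℝ} {μ : Measure ℝ} (h : Acip z μ) (hz : 0 < z) {B : Set ℝ}
    (hB : MeasurableSet B) (n : ℕ) :
    ∑ l ∈ Finset.range (n+1), μ ((lsv z)^[l] ⁻¹' B ∩ E z l) +
      μ ((lsv z)^[n] ⁻¹' B ∩ Ico 0 (xs z n)) = μ B := by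
  induction n with
  | zero =>
    simp only [zero_add, Finset.range_one, Finset.sum_singleton, Function.iterate_zero, preimage_id]
    rw [← measure_union]
    · apply measure_congr
      filter_upwards [h.ae_mem] with x hx
      apply propext
      change (x ∈ (B ∩ E z 0) ∪ (B ∩ Ico 0 (xs z 0))) ↔ x ∈ B
      simp only [mem_union, mem_inter_iff, E, mem_Ico, b, hx.1, hx.2, true_and, and_true,
        show xs z 0 = 1/2 from rfl]
      have := le_or_gt (1/2) x
      tauto
    · rw [Set.disjoint_left]
      rintro x ⟨_, h1⟩ ⟨_, h2⟩
      have := xs_le_half hz 0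
      linarith [h1.1, h2.2]
    · exact hB.inter measurableSet_Ico
  | succ n ih =>
    rw [Finset.sum_range_succ, ← ih, h.step hz hB n, add_assoc]

lemma Acip.kac_set {z : ℝ} {μ : Measure ℝ} (h : Acip z μ) (hz : 0 < z) (hz1 : z < 1) {B : Set ℝ}
    (hB : MeasurableSet B) : ∑' l, μ ((lsv z)^[l] ⁻¹' B ∩ E z l) = μ B := by
  have h1 := (tendsto_add_atTop_iff_nat 1).2
    (ENNReal.tendsto_nat_tsum (fun l => μ ((lsv z)^[l] ⁻¹' B ∩ E z l)))
  have h2 : Tendsto (fun n => μ ((lsv z)^[n] ⁻¹' B ∩ Ico 0 (xs z n))) atTop (nhds 0) :=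
    tendsto_of_tendsto_of_tendsto_of_le_of_le tendsto_const_nhds (h.rest hz hz1)
      (fun n => zero_le) (fun n => measure_mono inter_subset_right)
  have h3 := h1.add h2
  rw [add_zero] at h3
  refine tendsto_nhds_unique h3 ?_
  simp_rw [h.partial hz hB]
  exact tendsto_const_nhds

lemma Acip.kac {z : ℝ} {μ : Measure ℝ} (h : Acip z μ) (hz : 0 < z) (hz1 : z < 1) :
    Measure.sum (fun l => (μ.restrict (E z l)).map (lsv z)^[l]) = μ := by
  ext B hB
  rw [Measure.sum_apply _ hB, ← h.kac_set hz hz1 hB]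
  congr 1; ext l
  rw [Measure.map_apply ((lsv_measurable z).iterate l) hB, Measure.restrict_apply
    ((lsv_measurable z).iterate l hB)]

lemma Acip.map_F {z : ℝ} {μ : Measure ℝ} (h : Acip z μ) (hz : 0 < z) (hz1 : z < 1) :
    (μ.restrict Y).map (F z) = μ.restrict Y := by
  ext B hB
  rw [Measure.map_apply (F_measurable z) hB, Measure.restrict_apply (F_measurable z hB),
    Measure.restrict_apply hB]
  have hBY : MeasurableSet (lsv z ⁻¹' (B ∩ Y)) := lsv_measurable z (hB.inter measurableSet_Y)
  rw [← h.inv.measure_preimage (hB.inter measurableSet_Y).nullMeasurableSet,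
    ← h.kac_set hz hz1 hBY]
  have e1 : μ (F z ⁻¹' B ∩ Y) = μ (⋃ n, (F z ⁻¹' B ∩ YN z n)) := by
    apply measure_congr
    have : ∀ᵐ x ∂μ, x ≠ 1/2 := measure_eq_zero_iff_ae_notMem.1 (h.singleton _)
    filter_upwards [this] with x hx
    apply propext
    change x ∈ (F z ⁻¹' B ∩ Y) ↔ x ∈ (⋃ n, (F z ⁻¹' B ∩ YN z n))
    rw [← inter_iUnion, YN_union hz hz1]
    simp only [mem_inter_iff, Y, mem_Ico, mem_Ioo]
    have : 1/2 ≤ x ↔ 1/2 < x := ⟨fun h => lt_of_le_of_ne h (Ne.symm hx), le_of_lt⟩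
    rw [this]
  rw [e1, measure_iUnion]
  · congr 1; ext n
    congr 1
    ext x
    simp only [mem_inter_iff, mem_preimage]
    constructor
    · rintro ⟨h1, h2⟩
      rw [F_eq hz h2] at h1
      have h3 := (mem_YN_iff hz n).1 h2
      rw [← Function.iterate_succ_apply' (lsv z) n x]
      exact ⟨⟨h1, h3.2, (lsv_iter_mem hz (Y_sub' (YN_sub hz n h2)) _).2⟩, h3.1⟩
    · rintro ⟨h1, h2⟩
      rw [← Function.iterate_succ_apply' (lsv z) n x] at h1
      have h3 := (mem_YN_iff hz n).2 ⟨h2, h1.2.1⟩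
      rw [F_eq hz h3]
      exact ⟨h1.1, h3⟩
  · intro i j hij
    exact (YN_disj hz hij).mono inter_subset_right inter_subset_right
  · intro n; exact (F_measurable z hB).inter (measurableSet_YN z n)

lemma Acip.pos {z : ℝ} {μ : Measure ℝ} (h : Acip z μ) (hz : 0 < z) (hz1 : z < 1) : μ Y ≠ 0 := by
  intro h0
  have := h.prob
  have h1 := h.kac_set hz hz1 MeasurableSet.univ
  rw [measure_univ] at h1
  have : ∀ l, μ ((lsv z)^[l] ⁻¹' univ ∩ E z l) = 0 := fun l =>
    measure_mono_null (inter_subset_right.trans (E_sub hz l)) h0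
  rw [tsum_congr this, tsum_zero] at h1
  exact zero_ne_one h1

end LSV

namespace LSV

/-- weights of the transfer operator -/
noncomputable def wt (z : ℝ) (n : ℕ) (y : ℝ) : ℝ := dG z n y / 2

lemma wt_pos {z y : ℝ} (hz : 0 < z) (hy : y ∈ Y) (n : ℕ) : 0 < wt z n y :=
  div_pos (dG_pos hz (Y_sub hy) n) two_pos

lemma wt_bound {z : ℝ} (hz : 0 < z) (hz1 : z < 1) :
    ∃ C : ℝ, 0 < C ∧ ∀ n : ℕ, ∀ y ∈ Y, wt z n y ≤ C * ((n:ℝ) + 1) ^ (-(1/z) - 1) := by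
  obtain ⟨C, hC, h⟩ := dG_bound hz hz1
  refine ⟨C, hC, fun n y hy => ?_⟩
  have := (h n y hy).1
  have h2 := wt_pos hz hy n
  unfold wt at *
  linarith

/-- weighted transfer operator -/
noncomputable def L (z : ℝ) (v : ℕ → ℝ → ℝ) (g : ℝ → ℝ) (y : ℝ) : ℝ :=
  ∑' n, v n y * g (ps z n y) * wt z n y

/-- transfer operator of the induced map -/
noncomputable def A (z : ℝ) (g : ℝ → ℝ) (y : ℝ) : ℝ := ∑' n, g (ps z n y) * wt z n y

lemma A_eq_L (z : ℝ) (g : ℝ → ℝ) : A z g = L z (fun _ _ => 1) g := by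
  ext y; simp [A, L]

lemma one_lt_inv_z {z : ℝ} (hz : 0 < z) (hz1 : z < 1) : 1 < 1/z := by
  rw [lt_div_iff₀ hz]; linarith

lemma summable_rpow {p : ℝ} (hp : 1 < p) : Summable (fun n : ℕ => ((n:ℝ)+1) ^ (-p)) := by
  have := (_root_.summable_nat_add_iff 1).2 (Real.summable_nat_rpow.2 (show -p < -1 by linarith))
  simpa using this

lemma L_term {z : ℝ} (hz : 0 < z) (hz1 : z < 1) : ∃ C : ℝ, 0 < C ∧
    ∀ (v : ℕ → ℝ → ℝ) (g : ℝ → ℝ) (c D : ℝ), 0 ≤ c → 0 ≤ D →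
    (∀ n, ∀ y ∈ Y, |v n y| ≤ c * ((n:ℝ)+1)) → (∀ y ∈ Y, |g y| ≤ D) → ∀ y ∈ Y, ∀ n,
    |v n y * g (ps z n y) * wt z n y| ≤ C * c * D * ((n:ℝ)+1)^(-(1/z)) := by
  obtain ⟨C, hC, h⟩ := wt_bound hz hz1
  refine ⟨C, hC, fun v g c D hc hD hv hg y hy n => ?_⟩
  have hn : (0:ℝ) < (n:ℝ) + 1 := by positivity
  rw [abs_mul, abs_mul, abs_of_pos (wt_pos hz hy n)]
  calc |v n y| * |g (ps z n y)| * wt z n y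
      ≤ (c * ((n:ℝ)+1)) * D * (C * ((n:ℝ) + 1) ^ (-(1/z) - 1)) := by
        gcongr
        · exact (wt_pos hz hy n).le
        · exact hv n y hy
        · exact hg _ (ps_memY hz hy n)
        · exact h n y hy
    _ = _ := by
        rw [Real.rpow_sub_one hn.ne']
        field_simp

lemma L_summable {z : ℝ} (hz : 0 < z) (hz1 : z < 1) {v : ℕ → ℝ → ℝ} {g : ℝ → ℝ} {c D : ℝ}
    (hv : ∀ n, ∀ y ∈ Y, |v n y| ≤ c * ((n:ℝ)+1)) (hg : ∀ y ∈ Y, |g y| ≤ D) {y : ℝ} (hy : y ∈ Y) :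
    Summable (fun n => v n y * g (ps z n y) * wt z n y) := by
  obtain ⟨C, hC, h⟩ := L_term hz hz1
  have hc : 0 ≤ c := by have := (abs_nonneg _).trans (hv 0 y hy); simpa using this
  have hD : 0 ≤ D := (abs_nonneg _).trans (hg y hy)
  refine Summable.of_norm_bounded (g := fun n : ℕ => C * c * D * ((n:ℝ)+1)^(-(1/z)))
    ((summable_rpow (one_lt_inv_z hz hz1)).mul_left _) fun n => ?_
  exact h v g c D hc hD hv hg y hy n

lemma A_summable {z : ℝ} (hz : 0 < z) (hz1 : z < 1) {g : ℝ → ℝ} {D : ℝ}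
    (hg : ∀ y ∈ Y, |g y| ≤ D) {y : ℝ} (hy : y ∈ Y) :
    Summable (fun n => g (ps z n y) * wt z n y) := by
  have := L_summable hz hz1 (v := fun _ _ => 1) (c := 1) (g := g) (fun n y hy => by
    simp) hg hy
  simpa using this

lemma L_bound {z : ℝ} (hz : 0 < z) (hz1 : z < 1) : ∃ C : ℝ, 0 < C ∧
    ∀ (v : ℕ → ℝ → ℝ) (g : ℝ → ℝ) (c D : ℝ), 0 ≤ c → 0 ≤ D →
    (∀ n, ∀ y ∈ Y, |v n y| ≤ c * ((n:ℝ)+1)) → (∀ y ∈ Y, |g y| ≤ D) → ∀ y ∈ Y,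
    |L z v g y| ≤ C * c * D := by
  obtain ⟨C, hC, h⟩ := L_term hz hz1
  have hs := summable_rpow (one_lt_inv_z hz hz1)
  have hpos : 0 < ∑' n : ℕ, ((n:ℝ)+1)^(-(1/z)) :=
    hs.tsum_pos (fun n => by positivity) 0 (by simp)
  refine ⟨C * ∑' n : ℕ, ((n:ℝ)+1)^(-(1/z)), by positivity, fun v g c D hc hD hv hg y hy => ?_⟩
  have h1 := hs.mul_left (C * c * D)
  have := tsum_of_norm_bounded (f := fun n => v n y * g (ps z n y) * wt z n y) h1.hasSum (h v g c D hc hD hv hg y hy)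
  rw [_root_.tsum_mul_left] at this
  rw [Real.norm_eq_abs] at this
  unfold L
  linarith

lemma A_bound {z : ℝ} (hz : 0 < z) (hz1 : z < 1) : ∃ C : ℝ, 0 < C ∧
    ∀ (g : ℝ → ℝ) (D : ℝ), 0 ≤ D → (∀ y ∈ Y, |g y| ≤ D) → ∀ y ∈ Y, |A z g y| ≤ C * D := by
  obtain ⟨C, hC, h⟩ := L_bound hz hz1
  refine ⟨C, hC, fun g D hD hg y hy => ?_⟩
  have := h (fun _ _ => 1) g 1 D zero_le_one hD (fun n y hy => by simp) hg y hy
  rw [A_eq_L]; linarith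

/-- bounded on Y -/
def Bd (g : ℝ → ℝ) : Prop := ∃ D, ∀ y ∈ Y, |g y| ≤ D

lemma Bd.A {z : ℝ} (hz : 0 < z) (hz1 : z < 1) {g : ℝ → ℝ} (hg : Bd g) : Bd (A z g) := by
  obtain ⟨D, hD⟩ := hg
  obtain ⟨C, hC, h⟩ := A_bound hz hz1
  exact ⟨C * D, h g D ((abs_nonneg _).trans (hD _ half_memY)) hD⟩

lemma Bd.iter {z : ℝ} (hz : 0 < z) (hz1 : z < 1) {g : ℝ → ℝ} (hg : Bd g) (k : ℕ) :
    Bd ((LSV.A z)^[k] g) := by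
  induction k with
  | zero => exact hg
  | succ k ih => rw [Function.iterate_succ_apply']; exact ih.A hz hz1

lemma Bd.sub {f g : ℝ → ℝ} (hf : Bd f) (hg : Bd g) : Bd (fun y => f y - g y) := by
  obtain ⟨D, hD⟩ := hf
  obtain ⟨D', hD'⟩ := hg
  exact ⟨D + D', fun y hy => (abs_sub _ _).trans (add_le_add (hD y hy) (hD' y hy))⟩

lemma Bd.mul_const {f : ℝ → ℝ} (hf : Bd f) (c : ℝ) : Bd (fun y => c * f y) := by
  obtain ⟨D, hD⟩ := hf
  exact ⟨|c| * D, fun y hy => by rw [abs_mul]; gcongr; exact hD y hy⟩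

lemma A_congr {z : ℝ} (hz : 0 < z) {f g : ℝ → ℝ} (h : ∀ y ∈ Y, f y = g y) :
    ∀ y ∈ Y, A z f y = A z g y := fun y hy => by
  unfold A
  congr 1; ext n; rw [h _ (ps_memY hz hy n)]

lemma A_iter_congr {z : ℝ} (hz : 0 < z) {f g : ℝ → ℝ} (h : ∀ y ∈ Y, f y = g y) (k : ℕ) :
    ∀ y ∈ Y, (A z)^[k] f y = (A z)^[k] g y := by
  induction k with
  | zero => exact h
  | succ k ih =>
    rw [Function.iterate_succ_apply', Function.iterate_succ_apply']
    exact A_congr hz ih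

lemma A_sub {z : ℝ} (hz : 0 < z) (hz1 : z < 1) {f g : ℝ → ℝ} (hf : Bd f) (hg : Bd g) :
    ∀ y ∈ Y, A z (fun y => f y - g y) y = A z f y - A z g y := fun y hy => by
  obtain ⟨D, hD⟩ := hf
  obtain ⟨D', hD'⟩ := hg
  unfold A
  rw [← (A_summable hz hz1 hD hy).tsum_sub (A_summable hz hz1 hD' hy)]
  congr 1; ext n; ring

lemma A_iter_sub {z : ℝ} (hz : 0 < z) (hz1 : z < 1) {f g : ℝ → ℝ} (hf : Bd f) (hg : Bd g) (k : ℕ) :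
    ∀ y ∈ Y, (A z)^[k] (fun y => f y - g y) y = (A z)^[k] f y - (A z)^[k] g y := by
  induction k with
  | zero => intro y _; rfl
  | succ k ih =>
    simp only [Function.iterate_succ_apply']
    intro y hy
    rw [A_congr hz ih y hy, A_sub hz hz1 (hf.iter hz hz1 k) (hg.iter hz hz1 k) y hy]

lemma A_smul {z : ℝ} (c : ℝ) (f : ℝ → ℝ) : A z (fun y => c * f y) = fun y => c * A z f y := by
  ext y
  unfold A
  rw [← _root_.tsum_mul_left]
  congr 1; ext n; ring

lemma A_iter_smul {z : ℝ} (c : ℝ) (f : ℝ → ℝ) (k : ℕ) :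
    (A z)^[k] (fun y => c * f y) = fun y => c * (A z)^[k] f y := by
  induction k with
  | zero => rfl
  | succ k ih => rw [Function.iterate_succ_apply', ih, A_smul, Function.iterate_succ_apply']

/-- regular (log-Hölder) nonnegative functions on Y -/
def Reg (r K : ℝ) (g : ℝ → ℝ) : Prop :=
  (∀ x ∈ Y, 0 ≤ g x) ∧ ∀ x ∈ Y, ∀ y ∈ Y, g x ≤ Real.exp (K * |x - y| ^ r) * g y

lemma Y_abs {x y : ℝ} (hx : x ∈ Y) (hy : y ∈ Y) : |x - y| ≤ 1 := by
  rw [abs_le]; constructor <;> linarith [hx.1, hx.2, hy.1, hy.2]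

lemma dr_le_one {r x y : ℝ} (hr : 0 < r) (hx : x ∈ Y) (hy : y ∈ Y) : |x - y| ^ r ≤ 1 :=
  Real.rpow_le_one (abs_nonneg _) (Y_abs hx hy) hr.le

lemma le_dr {r x y : ℝ} (hr : 0 < r) (hr1 : r ≤ 1) (hx : x ∈ Y) (hy : y ∈ Y) :
    |x - y| ≤ |x - y| ^ r := by
  rcases (abs_nonneg (x - y)).eq_or_lt with h | h
  · rw [← h]; positivity
  · calc |x - y| = |x - y| ^ (1:ℝ) := (Real.rpow_one _).symm
      _ ≤ _ := Real.rpow_le_rpow_of_exponent_ge h (Y_abs hx hy) hr1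

lemma Reg.le {r K : ℝ} {g : ℝ → ℝ} (h : Reg r K g) (hr : 0 < r) (hK : 0 ≤ K) {x y : ℝ}
    (hx : x ∈ Y) (hy : y ∈ Y) : g x ≤ Real.exp K * g y := by
  refine (h.2 x hx y hy).trans ?_
  apply mul_le_mul_of_nonneg_right _ (h.1 y hy)
  apply Real.exp_le_exp.2
  have := dr_le_one hr hx hy
  nlinarith

lemma Reg.mono {r K K' : ℝ} {g : ℝ → ℝ} (h : Reg r K g) (hK : K ≤ K') : Reg r K' g := by
  refine ⟨h.1, fun x hx y hy => (h.2 x hx y hy).trans ?_⟩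
  apply mul_le_mul_of_nonneg_right _ (h.1 y hy)
  apply Real.exp_le_exp.2
  gcongr

lemma Reg.bd {r K : ℝ} {g : ℝ → ℝ} (h : Reg r K g) (hr : 0 < r) (hK : 0 ≤ K) : Bd g :=
  ⟨Real.exp K * g (1/2), fun y hy => by
    rw [abs_of_nonneg (h.1 y hy)]; exact h.le hr hK hy half_memY⟩

lemma Reg.congr {r K : ℝ} {f g : ℝ → ℝ} (h : Reg r K f) (hfg : ∀ y ∈ Y, f y = g y) : Reg r K g :=
  ⟨fun x hx => hfg x hx ▸ h.1 x hx, fun x hx y hy => by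
    rw [← hfg x hx, ← hfg y hy]; exact h.2 x hx y hy⟩

lemma Reg.smul {r K : ℝ} {g : ℝ → ℝ} (h : Reg r K g) {c : ℝ} (hc : 0 ≤ c) :
    Reg r K (fun y => c * g y) :=
  ⟨fun x hx => mul_nonneg hc (h.1 x hx), fun x hx y hy => by
    have := mul_le_mul_of_nonneg_left (h.2 x hx y hy) hc
    linarith⟩

lemma Reg.continuousOn {r K : ℝ} {g : ℝ → ℝ} (h : Reg r K g) (hr : 0 < r) :
    ContinuousOn g Y := by
  intro x hx
  have h1 : ∀ s : ℝ, Tendsto (fun y => Real.exp (s * |y - x| ^ r) * g x) (nhdsWithin x Y)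
      (nhds (g x)) := by
    intro s
    have : Continuous (fun y => Real.exp (s * |y - x| ^ r) * g x) :=
      (Real.continuous_exp.comp (continuous_const.mul
        ((Real.continuous_rpow_const hr.le).comp (continuous_id.sub continuous_const).abs))).mul
        continuous_const
    have := this.tendsto x
    simp only [sub_self, abs_zero, Real.zero_rpow hr.ne', mul_zero, Real.exp_zero, one_mul] at this
    exact this.mono_left nhdsWithin_le_nhds
  refine tendsto_of_tendsto_of_tendsto_of_le_of_le' (h1 (-K)) (h1 K) ?_ ?_
  · filter_upwards [self_mem_nhdsWithin] with y hy
    have := h.2 x hx y hy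
    rw [abs_sub_comm] at this
    calc Real.exp (-K * |y - x| ^ r) * g x
        ≤ Real.exp (-K * |y - x| ^ r) * (Real.exp (K * |y - x| ^ r) * g y) := by gcongr
      _ = g y := by rw [← mul_assoc, ← Real.exp_add]; simp
  · filter_upwards [self_mem_nhdsWithin] with y hy
    exact h.2 y hy x hx

lemma vol_Y : volume Y = ENNReal.ofReal (1/2) := by
  rw [Y, Real.volume_Ico]; norm_num

lemma vol_Y_real : volume.real Y = 1/2 := by
  rw [Measure.real, vol_Y]; norm_num

instance : IsFiniteMeasure (volume.restrict Y) := ⟨by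
  rw [Measure.restrict_apply_univ, vol_Y]; exact ENNReal.ofReal_lt_top⟩

lemma integrable_of_bd {g : ℝ → ℝ} (hg : Bd g) (hm : AEStronglyMeasurable g (volume.restrict Y)) :
    IntegrableOn g Y := by
  obtain ⟨D, hD⟩ := hg
  refine Integrable.of_bound hm D ?_
  rw [ae_restrict_iff' measurableSet_Y]
  exact ae_of_all _ hD

lemma Reg.aesm {r K : ℝ} {g : ℝ → ℝ} (h : Reg r K g) (hr : 0 < r) :
    AEStronglyMeasurable g (volume.restrict Y) :=
  (h.continuousOn hr).aestronglyMeasurable measurableSet_Y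

lemma Reg.integrable {r K : ℝ} {g : ℝ → ℝ} (h : Reg r K g) (hr : 0 < r) (hK : 0 ≤ K) :
    IntegrableOn g Y := integrable_of_bd (h.bd hr hK) (h.aesm hr)

lemma Reg.le_int {r K : ℝ} {g : ℝ → ℝ} (h : Reg r K g) (hr : 0 < r) (hK : 0 ≤ K) {x : ℝ}
    (hx : x ∈ Y) : g x ≤ 2 * Real.exp K * ∫ y in Y, g y := by
  have : ∫ y in Y, g x ≤ ∫ y in Y, Real.exp K * g y := by
    refine setIntegral_mono_on (integrable_const _) ((h.integrable hr hK).const_mul _)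
      measurableSet_Y fun y hy => h.le hr hK hx hy
  rw [setIntegral_const, vol_Y_real, integral_const_mul, smul_eq_mul] at this
  linarith

lemma Reg.int_le {r K : ℝ} {g : ℝ → ℝ} (h : Reg r K g) (hr : 0 < r) (hK : 0 ≤ K) {x : ℝ}
    (hx : x ∈ Y) : 2 * Real.exp (-K) * (∫ y in Y, g y) ≤ g x := by
  have : ∫ y in Y, Real.exp (-K) * g y ≤ ∫ y in Y, g x := by
    refine setIntegral_mono_on ((h.integrable hr hK).const_mul _) (integrable_const _)
      measurableSet_Y fun y hy => ?_
    have := h.le hr hK hy hx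
    rw [Real.exp_neg]
    rw [inv_mul_le_iff₀ (Real.exp_pos _)]; exact this
  rw [setIntegral_const, vol_Y_real, integral_const_mul, smul_eq_mul] at this
  linarith

lemma Reg.int_nonneg {r K : ℝ} {g : ℝ → ℝ} (h : Reg r K g) : 0 ≤ ∫ y in Y, g y :=
  setIntegral_nonneg measurableSet_Y h.1

lemma L_reg {z r : ℝ} (hz : 0 < z) (hz1 : z < 1) (hr : 0 < r) (hr1 : r ≤ 1) {v : ℕ → ℝ → ℝ}
    {g : ℝ → ℝ} {c κ K : ℝ} (hK : 0 ≤ K) (hg : Reg r K g)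
    (hv0 : ∀ n, ∀ y ∈ Y, 0 ≤ v n y) (hv : ∀ n, ∀ y ∈ Y, v n y ≤ c * ((n:ℝ)+1))
    (hvr : ∀ n, ∀ x ∈ Y, ∀ y ∈ Y, v n x ≤ Real.exp (κ * |x - y| ^ r) * v n y) :
    Reg r (κ + K * (1/2) ^ r + 4) (L z v g) := by
  have hv' : ∀ n, ∀ y ∈ Y, |v n y| ≤ c * ((n:ℝ)+1) := fun n y hy => by
    rw [abs_of_nonneg (hv0 n y hy)]; exact hv n y hy
  obtain ⟨D, hD⟩ := hg.bd hr hK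
  refine ⟨fun x hx => tsum_nonneg fun n => ?_, fun x hx y hy => ?_⟩
  · exact mul_nonneg (mul_nonneg (hv0 n x hx) (hg.1 _ (ps_memY hz hx n))) (wt_pos hz hx n).le
  · unfold L
    rw [← _root_.tsum_mul_left]
    refine (L_summable hz hz1 hv' hD hx).tsum_le_tsum (fun n => ?_)
      ((L_summable hz hz1 hv' hD hy).mul_left _)
    have h1 := hvr n x hx y hy
    have h2 := hg.2 _ (ps_memY hz hx n) _ (ps_memY hz hy n)
    have h3 : |ps z n x - ps z n y| ^ r ≤ (1/2) ^ r * |x - y| ^ r := by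
      rw [← Real.mul_rpow (by norm_num) (abs_nonneg _)]
      apply Real.rpow_le_rpow (abs_nonneg _) _ hr.le
      have := ps_lip hz hx hy n
      linarith
    have h4 : g (ps z n x) ≤ Real.exp (K * (1/2) ^ r * |x - y| ^ r) * g (ps z n y) := by
      refine h2.trans (mul_le_mul_of_nonneg_right (Real.exp_le_exp.2 ?_)
        (hg.1 _ (ps_memY hz hy n)))
      rw [mul_assoc]; gcongr
    have h5 : wt z n x ≤ Real.exp (4 * |x - y| ^ r) * wt z n y := by
      have h6 := dG_exp hz hz1 hx hy n
      have h7 : Real.exp (4 * |x - y|) ≤ Real.exp (4 * |x - y| ^ r) := by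
        apply Real.exp_le_exp.2; gcongr; exact le_dr hr hr1 hx hy
      have h8 := mul_le_mul_of_nonneg_right h7 (dG_pos hz (Y_sub hy) n).le
      unfold wt; linarith
    calc v n x * g (ps z n x) * wt z n x
        ≤ (Real.exp (κ * |x - y| ^ r) * v n y) *
          (Real.exp (K * (1/2) ^ r * |x - y| ^ r) * g (ps z n y)) *
          (Real.exp (4 * |x - y| ^ r) * wt z n y) := by
          have a1 := hv0 n x hx
          have a2 := hg.1 _ (ps_memY hz hx n)
          have a3 := (wt_pos hz hx n).le
          have a4 := hv0 n y hy
          have a5 := hg.1 _ (ps_memY hz hy n)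
          gcongr
      _ = _ := by
          rw [add_mul, add_mul, Real.exp_add, Real.exp_add]; ring

lemma A_reg {z r : ℝ} (hz : 0 < z) (hz1 : z < 1) (hr : 0 < r) (hr1 : r ≤ 1)
    {g : ℝ → ℝ} {K : ℝ} (hK : 0 ≤ K) (hg : Reg r K g) : Reg r (K * (1/2) ^ r + 4) (A z g) := by
  rw [A_eq_L]
  have := L_reg hz hz1 hr hr1 (v := fun _ _ => 1) (c := 1) (κ := 0) hK hg
    (fun n y _ => zero_le_one) (fun n y _ => by simp) (fun n x _ y _ => by simp)
  simpa using this

end LSV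

namespace LSV

lemma Y_ae_union {z : ℝ} (hz : 0 < z) (hz1 : z < 1) : Y =ᵐ[volume] (⋃ n, YN z n) := by
  rw [YN_union hz hz1]
  exact Ioo_ae_eq_Ico.symm

/-- change of variables -/
lemma cv {z : ℝ} (hz : 0 < z) (hz1 : z < 1) {W : ℝ → ℝ} (hW : Bd W)
    (hWm : AEStronglyMeasurable W (volume.restrict Y)) {k : ℝ → ℝ} (hk : Measurable k)
    {D : ℝ} (hkD : ∀ x, |k x| ≤ D) :
    ∫ x in Y, W x * k (F z x) = ∫ y in Y, A z W y * k y := by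
  obtain ⟨DW, hDW⟩ := hW
  obtain ⟨C, hC, hw⟩ := wt_bound hz hz1
  have hD0 : 0 ≤ D := (abs_nonneg _).trans (hkD 0)
  have hDW0 : 0 ≤ DW := (abs_nonneg _).trans (hDW _ half_memY)
  have hintg : IntegrableOn (fun x => W x * k (F z x)) Y := by
    refine (integrable_of_bd ⟨DW, hDW⟩ hWm).mul_bdd (c := D)
      (hk.comp (F_measurable z)).aestronglyMeasurable (ae_of_all _ fun x => hkD _)
  have hcv : ∀ n, ∫ x in YN z n, W x * k (F z x) =
      ∫ y in Y, W (ps z n y) * wt z n y * k y := by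
    intro n
    rw [← ps_image hz n, integral_image_eq_integral_abs_deriv_smul measurableSet_Y
      (fun y hy => (ps_hasDerivAt hz hy n).hasDerivWithinAt) (ps_injOn hz n)]
    refine setIntegral_congr_fun measurableSet_Y fun y hy => ?_
    have := wt_pos hz hy n
    simp only [F_ps hz hy n, smul_eq_mul]
    rw [show dG z n y / 2 = wt z n y from rfl, abs_of_pos this]
    ring
  have hci : ∀ n, IntegrableOn (fun y => W (ps z n y) * wt z n y * k y) Y := by
    intro n
    have h1 : IntegrableOn (fun x => W x * k (F z x)) (ps z n '' Y) := by
      rw [ps_image hz n]; exact hintg.mono_set (YN_sub hz n)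
    rw [integrableOn_image_iff_integrableOn_abs_deriv_smul measurableSet_Y
      (fun y hy => (ps_hasDerivAt hz hy n).hasDerivWithinAt) (ps_injOn hz n)] at h1
    refine h1.congr_fun (fun y hy => ?_) measurableSet_Y
    have := wt_pos hz hy n
    simp only [F_ps hz hy n, smul_eq_mul]
    rw [show dG z n y / 2 = wt z n y from rfl, abs_of_pos this]
    ring
  have hbd : ∀ n, ∀ y ∈ Y, ‖W (ps z n y) * wt z n y * k y‖ ≤
      DW * D * C * ((n:ℝ) + 1) ^ (-(1/z) - 1) := by
    intro n y hy
    rw [Real.norm_eq_abs, abs_mul, abs_mul, abs_of_pos (wt_pos hz hy n)]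
    calc _ ≤ DW * (C * ((n:ℝ) + 1) ^ (-(1/z) - 1)) * D := by
          have := (wt_pos hz hy n).le
          gcongr
          · exact hDW _ (ps_memY hz hy n)
          · exact hw n y hy
          · exact hkD y
      _ = _ := by ring
  have hsum : Summable (fun n => ∫ y in Y, ‖W (ps z n y) * wt z n y * k y‖) := by
    have h1 : Summable (fun n : ℕ => DW * D * C * ((n:ℝ) + 1) ^ (-(1/z) - 1) * (1/2)) := by
      have := summable_rpow (p := 1/z+1) (by linarith [one_lt_inv_z hz hz1])
      simp only [neg_add'] at this
      exact (this.mul_left _).mul_right _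
    refine Summable.of_nonneg_of_le (fun n => integral_nonneg fun y => norm_nonneg _) (fun n => ?_) h1
    calc _ ≤ ∫ y in Y, DW * D * C * ((n:ℝ) + 1) ^ (-(1/z) - 1) :=
          setIntegral_mono_on (hci n).norm (integrable_const _) measurableSet_Y (hbd n)
      _ = _ := by rw [setIntegral_const, vol_Y_real, smul_eq_mul]; ring
  rw [setIntegral_congr_set (Y_ae_union hz hz1)]
  have h3 := hasSum_integral_iUnion (μ := volume) (s := fun n => YN z n)
    (fun n => measurableSet_YN z n) (fun i j hij => YN_disj hz hij)
    (f := fun x => W x * k (F z x)) (hintg.mono_set (iUnion_subset fun n => YN_sub hz n))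
  rw [← h3.tsum_eq]
  simp_rw [hcv]
  rw [integral_tsum_of_summable_integral_norm hci hsum]
  refine setIntegral_congr_fun measurableSet_Y fun y hy => ?_
  simp only [A]
  exact (A_summable hz hz1 hDW hy).tsum_mul_right _

lemma A_int {z : ℝ} (hz : 0 < z) (hz1 : z < 1) {W : ℝ → ℝ} (hW : Bd W)
    (hWm : AEStronglyMeasurable W (volume.restrict Y)) : ∫ y in Y, A z W y = ∫ y in Y, W y := by
  have := cv hz hz1 hW hWm (k := fun _ => 1) measurable_const (D := 1) (fun x => by simp)
  simpa using this.symm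

/-- subtracting constants -/
lemma Reg.sub_const {r K K' : ℝ} (hr : 0 < r) (hK' : 0 ≤ K') (hKK : K' < K) {g : ℝ → ℝ}
    (hg : Reg r K' g) {c : ℝ} (hc0 : 0 ≤ c)
    (hc : ∀ y ∈ Y, c ≤ (K - K') / (K * Real.exp K) * g y) : Reg r K (fun y => g y - c) := by
  have hK : 0 < K := by linarith
  have hpos : 0 < K * Real.exp K := by positivity
  refine ⟨fun x hx => ?_, fun x hx y hy => ?_⟩
  · have h1 := hc x hx
    have h2 : (K - K') / (K * Real.exp K) ≤ 1 := by
      rw [div_le_one hpos]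
      have := Real.one_le_exp hK.le
      nlinarith
    have := mul_le_mul_of_nonneg_right h2 (hg.1 x hx)
    linarith
  · set d := |x - y| ^ r with hd
    have hd0 : 0 ≤ d := by positivity
    have hd1 : d ≤ 1 := dr_le_one hr hx hy
    have h1 := hg.2 x hx y hy
    rw [← hd] at h1
    have h2 := hc y hy
    rw [div_mul_eq_mul_div, le_div_iff₀ hpos] at h2
    have h3 : Real.exp (K * d) - 1 ≤ K * d * Real.exp K := by
      have e1 := Real.add_one_le_exp (-(K * d))
      have e2 : Real.exp (K * d) ≤ Real.exp K := Real.exp_le_exp.2 (by nlinarith)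
      have e3 : Real.exp (K*d) * Real.exp (-(K*d)) = 1 := by rw [← Real.exp_add]; simp
      have e4 := Real.exp_pos (K * d)
      have e5 : 0 ≤ K * d := by positivity
      nlinarith
    have h4 : (K - K') * d ≤ Real.exp (K * d) - Real.exp (K' * d) := by
      have e1 := Real.add_one_le_exp ((K - K') * d)
      have e2 : Real.exp (K * d) = Real.exp (K' * d) * Real.exp ((K - K') * d) := by
        rw [← Real.exp_add]; ring_nf
      have e3 : 1 ≤ Real.exp (K' * d) := Real.one_le_exp (by positivity)
      have e4 : 0 ≤ (K - K') * d := mul_nonneg (by linarith) hd0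
      rw [e2]; nlinarith
    have h5 := hg.1 y hy
    have h6 : (Real.exp (K * d) - 1) * c ≤ (Real.exp (K * d) - Real.exp (K' * d)) * g y := by
      calc _ ≤ K * d * Real.exp K * c := by gcongr
        _ = d * (c * (K * Real.exp K)) := by ring
        _ ≤ d * ((K - K') * g y) := by gcongr
        _ = ((K - K') * d) * g y := by ring
        _ ≤ _ := by gcongr
    nlinarith

lemma half_rpow_lt {r : ℝ} (hr : 0 < r) : (1/2 : ℝ) ^ r < 1 :=
  Real.rpow_lt_one (by norm_num) (by norm_num) hr

/-- admissible regularity constants -/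
def Adm (r K : ℝ) : Prop := K * (1/2) ^ r + 4 < K

lemma Adm.pos {r K : ℝ} (hr : 0 < r) (h : Adm r K) : 0 < K := by
  unfold Adm at h
  have h1 := half_rpow_lt hr
  by_contra h2
  push Not at h2
  nlinarith

lemma Adm.of_ge {r K K' : ℝ} (hr : 0 < r) (h : Adm r K) (hK : K ≤ K') : Adm r K' := by
  unfold Adm at *
  have h1 := half_rpow_lt hr
  nlinarith

lemma Adm.exists {r : ℝ} (hr : 0 < r) : ∃ K, Adm r K := by
  have h1 := half_rpow_lt hr
  have h2 : 0 < 1 - (1/2:ℝ)^r := by linarith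
  refine ⟨5 / (1 - (1/2)^r), ?_⟩
  unfold Adm
  have : 5 / (1 - (1/2:ℝ)^r) * (1 - (1/2)^r) = 5 := div_mul_cancel₀ _ h2.ne'
  nlinarith

lemma A_reg' {z r : ℝ} (hz : 0 < z) (hz1 : z < 1) (hr : 0 < r) (hr1 : r ≤ 1)
    {g : ℝ → ℝ} {K : ℝ} (hK : Adm r K) (hg : Reg r K g) : Reg r K (A z g) :=
  (A_reg hz hz1 hr hr1 (hK.pos hr).le hg).mono (le_of_lt hK)

lemma A_iter_reg {z r : ℝ} (hz : 0 < z) (hz1 : z < 1) (hr : 0 < r) (hr1 : r ≤ 1)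
    {g : ℝ → ℝ} {K : ℝ} (hK : Adm r K) (hg : Reg r K g) (k : ℕ) : Reg r K ((A z)^[k] g) := by
  induction k with
  | zero => exact hg
  | succ k ih => rw [Function.iterate_succ_apply']; exact A_reg' hz hz1 hr hr1 hK ih

lemma A_iter_int {z r : ℝ} (hz : 0 < z) (hz1 : z < 1) (hr : 0 < r) (hr1 : r ≤ 1)
    {g : ℝ → ℝ} {K : ℝ} (hK : Adm r K) (hg : Reg r K g) (k : ℕ) :
    ∫ y in Y, (A z)^[k] g y = ∫ y in Y, g y := by
  induction k with
  | zero => rfl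
  | succ k ih =>
    have h := A_iter_reg hz hz1 hr hr1 hK hg k
    rw [Function.iterate_succ_apply', A_int hz hz1 (h.bd hr (hK.pos hr).le) (h.aesm hr), ih]

lemma cv_iter {z r : ℝ} (hz : 0 < z) (hz1 : z < 1) (hr : 0 < r) (hr1 : r ≤ 1)
    {g : ℝ → ℝ} {K : ℝ} (hK : Adm r K) (hg : Reg r K g) {k : ℝ → ℝ} (hk : Measurable k)
    {D : ℝ} (hkD : ∀ x, |k x| ≤ D) (j : ℕ) :
    ∫ x in Y, g x * k ((F z)^[j] x) = ∫ y in Y, (A z)^[j] g y * k y := by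
  induction j generalizing k with
  | zero => rfl
  | succ j ih =>
    have h := A_iter_reg hz hz1 hr hr1 hK hg j
    simp only [Function.iterate_succ_apply']
    rw [← cv hz hz1 (h.bd hr (hK.pos hr).le) (h.aesm hr) hk hkD]
    exact ih (k := fun x => k (F z x)) (hk.comp (F_measurable z)) (fun x => hkD _)

lemma contraction {z r K : ℝ} (hz : 0 < z) (hz1 : z < 1) (hr : 0 < r) (hr1 : r ≤ 1)
    (hK : Adm r K) : ∃ C θ : ℝ, 0 < C ∧ 0 < θ ∧ θ < 1 ∧ ∀ (k : ℕ) (g₁ g₂ : ℝ → ℝ), Reg r K g₁ →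
      Reg r K g₂ → (∫ y in Y, g₁ y = ∫ y in Y, g₂ y) → ∀ y ∈ Y,
      |(A z)^[k] g₁ y - (A z)^[k] g₂ y| ≤ C * θ ^ k * ∫ y in Y, g₁ y := by
  have hK0 := hK.pos hr
  set K' := K * (1/2) ^ r + 4 with hK'
  have hK'0 : 0 ≤ K' := by positivity
  have hKK : K' < K := hK
  set ρ := (K - K') / (K * Real.exp K) with hρ
  have hρ0 : 0 < ρ := div_pos (by linarith) (by positivity)
  have hρ1 : ρ ≤ 1 := by
    rw [hρ, div_le_one (by positivity)]
    have := Real.one_le_exp hK0.le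
    nlinarith
  set δ := ρ * Real.exp (-K') with hδ
  have hδ0 : 0 < δ := by positivity
  have hδ1 : δ < 1 := by
    have h1 : Real.exp (-K') < 1 := by
      rw [Real.exp_lt_one_iff]
      have : 0 < K' := by positivity
      linarith
    have := Real.exp_pos (-K')
    nlinarith
  refine ⟨2 * Real.exp K, 1 - δ, by positivity, by linarith, by linarith, ?_⟩
  intro k
  induction k with
  | zero =>
    intro g₁ g₂ h1 h2 hI y hy
    have a1 := h1.le_int hr hK0.le hy
    have a2 := h2.le_int hr hK0.le hy
    rw [← hI] at a2
    simp only [Function.iterate_zero, id, pow_zero, mul_one]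
    rw [abs_le]
    constructor <;> linarith [h1.1 y hy, h2.1 y hy]
  | succ k ih =>
    intro g₁ g₂ h1 h2 hI y hy
    set I := ∫ y in Y, g₁ y with hIdef
    have hI0 : 0 ≤ I := h1.int_nonneg
    have key : ∀ g : ℝ → ℝ, Reg r K g → (∫ y in Y, g y = I) →
        Reg r K (fun y => A z g y - 2 * δ * I) ∧ (∫ y in Y, (A z g y - 2 * δ * I)) = (1 - δ) * I ∧
        (∀ y ∈ Y, (A z)^[k] (fun y => A z g y - 2 * δ * I) y =
          (A z)^[k+1] g y - (A z)^[k] (fun _ => 2 * δ * I) y) := by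
      intro g hg hgI
      have hA := A_reg hz hz1 hr hr1 hK0.le hg
      have hAI := A_int hz hz1 (hg.bd hr hK0.le) (hg.aesm hr)
      rw [hgI] at hAI
      refine ⟨hA.sub_const hr hK'0 hKK (by positivity) (fun y hy => ?_), ?_, ?_⟩
      · have := hA.int_le hr hK'0 hy
        rw [hAI] at this
        calc 2 * δ * I = ρ * (2 * Real.exp (-K') * I) := by rw [hδ]; ring
          _ ≤ _ := by gcongr
      · rw [integral_sub (hA.integrable hr hK'0) (integrable_const _), hAI, setIntegral_const,
          vol_Y_real, smul_eq_mul]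
        ring
      · intro y hy
        exact A_iter_sub hz hz1 (hA.bd hr hK'0) ⟨|2 * δ * I|, fun y _ => le_rfl⟩ k y hy
    obtain ⟨a1, b1, c1⟩ := key g₁ h1 rfl
    obtain ⟨a2, b2, c2⟩ := key g₂ h2 hI.symm
    have := ih _ _ a1 a2 (b1.trans b2.symm) y hy
    rw [c1 y hy, c2 y hy, b1] at this
    calc _ = |(A z)^[k + 1] g₁ y - (A z)^[k] (fun x => 2 * δ * I) y -
        ((A z)^[k + 1] g₂ y - (A z)^[k] (fun x => 2 * δ * I) y)| := by congr 1; ring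
      _ ≤ _ := this
      _ = _ := by ring

end LSV

namespace LSV

lemma approx_reg {r : ℝ} (hr : 0 < r) (hr1 : r ≤ 1) {h0 : ℝ → ℝ}
    (hi : Integrable h0 (volume.restrict Y)) (hpos : ∀ x, 0 ≤ h0 x) {ε : ℝ} (hε : 0 < ε) :
    ∃ K g, 0 ≤ K ∧ Reg r K g ∧ ∫ x in Y, |h0 x - g x| ≤ ε := by
  obtain ⟨g1, -, hg1, hg1c, hg1i⟩ := hi.exists_hasCompactSupport_integral_sub_le (half_pos hε)
  set e := ε / 3 with he
  have he0 : 0 < e := by positivity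
  obtain ⟨p, hp⟩ := exists_polynomial_near_of_continuousOn (1/2) 1 (fun x => max (g1 x) 0)
    ((hg1c.max continuous_const).continuousOn) e he0
  have hYI : Y ⊆ Icc (1/2) 1 := Ico_subset_Icc_self
  obtain ⟨M, hM⟩ := (isCompact_Icc (a := (1/2:ℝ)) (b := 1)).exists_bound_of_continuousOn
    (f := fun x => (Polynomial.derivative p).eval x) (Polynomial.continuous _).continuousOn
  have hM0 : 0 ≤ M := (norm_nonneg _).trans (hM 1 (by constructor <;> norm_num))
  have hlip : ∀ x ∈ Y, ∀ y ∈ Y, p.eval x ≤ p.eval y + M * |x - y| := by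
    intro x hx y hy
    have := Convex.norm_image_sub_le_of_norm_deriv_le (f := fun x => p.eval x) (s := Icc (1/2:ℝ) 1)
      (C := M) (fun x _ => p.differentiable x) (fun x hx => by rw [Polynomial.deriv]; exact hM x hx)
      (convex_Icc _ _) (hYI hy) (hYI hx)
    rw [Real.norm_eq_abs, Real.norm_eq_abs] at this
    linarith [le_abs_self (p.eval x - p.eval y)]
  have hge : ∀ x ∈ Y, e ≤ p.eval x + 2 * e := by
    intro x hx
    have h1 := abs_lt.1 (hp x (hYI hx))
    linarith [h1.1, le_max_right (g1 x) 0]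
  refine ⟨M / e, fun x => p.eval x + 2 * e, by positivity, ⟨fun x hx => ?_, fun x hx y hy => ?_⟩, ?_⟩
  · linarith [hge x hx]
  · have h1 := hlip x hx y hy
    have h2 := hge y hy
    have h3 := Real.add_one_le_exp (M / e * |x - y| ^ r)
    have h4 := le_dr hr hr1 hx hy
    have h5 : M * |x - y| ≤ M / e * |x - y| ^ r * (p.eval y + 2 * e) := by
      calc M * |x - y| ≤ M * |x - y| ^ r := by gcongr
        _ = M / e * |x - y| ^ r * e := by field_simp
        _ ≤ _ := by gcongr
    nlinarith
  · have hpi : Integrable (fun x => |h0 x - g1 x| + 3 * e) (volume.restrict Y) :=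
      (hi.sub hg1i).abs.add (integrable_const _)
    have hgi : Integrable (fun x => |h0 x - (p.eval x + 2 * e)|) (volume.restrict Y) := by
      have : IntegrableOn (fun x => p.eval x + 2 * e) (Icc (1/2) 1) :=
        ((p.continuous.add continuous_const).continuousOn).integrableOn_compact isCompact_Icc
      exact (hi.sub (this.mono_set hYI)).abs
    calc _ ≤ ∫ x in Y, (|h0 x - g1 x| + 3 * e) := by
          refine setIntegral_mono_on hgi hpi measurableSet_Y fun x hx => ?_
          have h1 := abs_lt.1 (hp x (hYI hx))
          have h2 : |h0 x - max (g1 x) 0| ≤ |h0 x - g1 x| := by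
            rcases le_total (g1 x) 0 with h | h
            · rw [max_eq_right h]
              rw [sub_zero, abs_of_nonneg (hpos x), abs_of_nonneg (by linarith [hpos x])]
              linarith
            · rw [max_eq_left h]
          have h3 := abs_le.1 h2
          rw [abs_le]
          constructor <;> linarith [h3.1, h3.2, h1.1, h1.2]
      _ = (∫ x in Y, |h0 x - g1 x|) + 3 * e / 2 := by
          rw [integral_add (f := fun x => |h0 x - g1 x|) (hi.sub hg1i).abs (integrable_const _), setIntegral_const, vol_Y_real,
            smul_eq_mul]
          ring
      _ ≤ ε := by
          have : ∫ x in Y, |h0 x - g1 x| ≤ ε / 2 := hg1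
          linarith

lemma reg_one {r K : ℝ} (hK : 0 ≤ K) : Reg r K (fun _ => 1) :=
  ⟨fun _ _ => zero_le_one, fun x _ y _ => by
    rw [mul_one]; exact Real.one_le_exp (by positivity)⟩

lemma exists_hstar {z r K : ℝ} (hz : 0 < z) (hz1 : z < 1) (hr : 0 < r) (hr1 : r ≤ 1)
    (hK : Adm r K) : ∃ hs : ℝ → ℝ, Reg r K hs ∧ (∀ y ∈ Y,
      Tendsto (fun j => (A z)^[j] (fun _ => 1) y) atTop (nhds (hs y))) ∧
      ∀ y ∈ Y, Real.exp (-K) ≤ hs y := by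
  have hK0 := hK.pos hr
  obtain ⟨C, θ, hC, hθ, hθ1, h⟩ := contraction hz hz1 hr hr1 hK
  have h1 : Reg r K (fun _ : ℝ => (1:ℝ)) := reg_one hK0.le
  have hI1 : ∫ y in Y, (1:ℝ) = 1/2 := by
    rw [setIntegral_const, vol_Y_real]; norm_num
  have hc : ∀ y ∈ Y, ∃ a, Tendsto (fun j => (A z)^[j] (fun _ => 1) y) atTop (nhds a) := by
    intro y hy
    apply cauchySeq_tendsto_of_complete
    refine cauchySeq_of_le_geometric θ (C * (1/2)) hθ1 fun n => ?_
    have h2 := h n _ _ h1 (A_reg' hz hz1 hr hr1 hK h1)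
      (A_int hz hz1 (h1.bd hr hK0.le) (h1.aesm hr)).symm y hy
    rw [hI1] at h2
    rw [Real.dist_eq, Function.iterate_succ_apply]
    linarith
  choose! hs hhs using hc
  refine ⟨hs, ⟨fun x hx => ?_, fun x hx y hy => ?_⟩, hhs, fun y hy => ?_⟩
  · exact ge_of_tendsto' (hhs x hx) fun j => (A_iter_reg hz hz1 hr hr1 hK h1 j).1 x hx
  · exact le_of_tendsto_of_tendsto' (hhs x hx) ((hhs y hy).const_mul _) fun j =>
      (A_iter_reg hz hz1 hr hr1 hK h1 j).2 x hx y hy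
  · refine ge_of_tendsto' (hhs y hy) fun j => ?_
    have := (A_iter_reg hz hz1 hr hr1 hK h1 j).int_le hr hK0.le hy
    rw [A_iter_int hz hz1 hr hr1 hK h1, hI1] at this
    linarith

lemma A_iter_tendsto {z r K : ℝ} (hz : 0 < z) (hz1 : z < 1) (hr : 0 < r) (hr1 : r ≤ 1)
    (hK : Adm r K) {hs g : ℝ → ℝ} (hhs : ∀ y ∈ Y,
      Tendsto (fun j => (A z)^[j] (fun _ => 1) y) atTop (nhds (hs y))) (hg : Reg r K g) :
    ∀ y ∈ Y, Tendsto (fun j => (A z)^[j] g y) atTop (nhds (2 * (∫ y in Y, g y) * hs y)) := by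
  intro y hy
  have hK0 := hK.pos hr
  obtain ⟨C, θ, hC, hθ, hθ1, h⟩ := contraction hz hz1 hr hr1 hK
  have h1 : Reg r K (fun _ : ℝ => 2 * (∫ y in Y, g y) * (1:ℝ)) :=
    (reg_one hK0.le).smul (mul_nonneg zero_le_two hg.int_nonneg)
  have hI1 : ∫ y in Y, g y = ∫ x in Y, 2 * (∫ y in Y, g y) * (1:ℝ) := by
    rw [setIntegral_const, vol_Y_real, smul_eq_mul]; ring
  have h2 : Tendsto (fun j => (A z)^[j] g y - 2 * (∫ y in Y, g y) * (A z)^[j] (fun _ => 1) y) atTop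
      (nhds 0) := by
    apply squeeze_zero_norm (a := fun j => C * θ ^ j * ∫ y in Y, g y)
    · intro j
      have := h j _ _ hg h1 hI1 y hy
      rw [A_iter_smul] at this
      exact this
    · have := ((tendsto_pow_atTop_nhds_zero_of_lt_one hθ.le hθ1).const_mul C).mul_const
        (∫ y in Y, g y)
      simpa using this
  have h3 := h2.add ((hhs y hy).const_mul (2 * (∫ y in Y, g y)))
  simpa using h3

lemma density_aux {z r K : ℝ} (hz : 0 < z) (hz1 : z < 1) (hr : 0 < r) (hr1 : r ≤ 1)
    (hK : Adm r K) {hs : ℝ → ℝ} (hhs : ∀ y ∈ Y,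
      Tendsto (fun j => (A z)^[j] (fun _ => 1) y) atTop (nhds (hs y)))
    {μ : Measure ℝ} (h : Acip z μ) {k : ℝ → ℝ} (hk : Measurable k) (hk1 : ∀ x, |k x| ≤ 1) :
    ∫ x in Y, k x ∂μ = 2 * μ.real Y * ∫ y in Y, hs y * k y := by
  have := h.prob
  set h0 : ℝ → ℝ := fun x => ((μ.restrict Y).rnDeriv (volume.restrict Y) x).toReal with hh0
  have hac : μ.restrict Y ≪ volume.restrict Y := h.ac.restrict Y
  have h0i : Integrable h0 (volume.restrict Y) := Measure.integrable_toReal_rnDeriv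
  have h0int : ∀ f : ℝ → ℝ, ∫ x in Y, h0 x * f x = ∫ x in Y, f x ∂μ := fun f =>
    integral_rnDeriv_smul hac
  have hF : MeasurePreserving (F z) (μ.restrict Y) (μ.restrict Y) :=
    ⟨F_measurable z, h.map_F hz hz1⟩
  set T := ∫ y in Y, hs y * k y with hT
  have key : ∀ ε > 0, |∫ x in Y, k x ∂μ - 2 * μ.real Y * T| ≤ ε * (1 + 2 * |T|) := by
    intro ε hε
    obtain ⟨K1, g, hK1, hg1, hgε⟩ := approx_reg hr hr1 h0i (fun x => ENNReal.toReal_nonneg) hε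
    set K2 := max K K1
    have hK2 : Adm r K2 := hK.of_ge hr (le_max_left _ _)
    have hK20 := hK2.pos hr
    have hg : Reg r K2 g := hg1.mono (le_max_right _ _)
    have hgi := hg.integrable hr hK20.le
    have hclose : ∀ f : ℝ → ℝ, Measurable f → (∀ x, |f x| ≤ 1) →
        |∫ x in Y, f x ∂μ - ∫ x in Y, g x * f x| ≤ ε := by
      intro f hf hf1
      rw [← h0int f, ← integral_sub]
      · refine (abs_integral_le_integral_abs).trans (le_trans ?_ hgε)
        refine integral_mono ?_ (h0i.sub hgi).abs fun x => ?_
        · exact ((h0i.mul_bdd (c := 1) hf.aestronglyMeasurable (ae_of_all _ hf1)).sub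
            (hgi.mul_bdd (c := 1) hf.aestronglyMeasurable (ae_of_all _ hf1))).abs
        · simp only
          rw [← sub_mul, abs_mul]
          exact mul_le_of_le_one_right (abs_nonneg _) (hf1 x)
      · exact h0i.mul_bdd (c := 1) hf.aestronglyMeasurable (ae_of_all _ hf1)
      · exact hgi.mul_bdd (c := 1) hf.aestronglyMeasurable (ae_of_all _ hf1)
    set I := ∫ y in Y, g y with hI
    have hI0 : 0 ≤ I := hg.int_nonneg
    have h3 : |μ.real Y - I| ≤ ε := by
      have := hclose (fun _ => 1) measurable_const (by simp)
      simpa using this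
    have h4 : ∀ j, |∫ x in Y, k x ∂μ - ∫ y in Y, (A z)^[j] g y * k y| ≤ ε := by
      intro j
      rw [← cv_iter hz hz1 hr hr1 hK2 hg hk hk1 j]
      have e := integral_map (μ := μ.restrict Y) (hF.iterate j).measurable.aemeasurable (f := k)
        hk.aestronglyMeasurable
      rw [(hF.iterate j).map_eq] at e
      rw [e]
      exact hclose (fun x => k ((F z)^[j] x)) (hk.comp (hF.iterate j).measurable) (fun x => hk1 _)
    have h5 : Tendsto (fun j => ∫ y in Y, (A z)^[j] g y * k y) atTop
        (nhds (∫ y in Y, 2 * I * hs y * k y)) := by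
      refine tendsto_integral_of_dominated_convergence (fun _ => 2 * Real.exp K2 * I) (fun j => ?_)
        (integrable_const _) (fun j => ?_) ?_
      · exact ((A_iter_reg hz hz1 hr hr1 hK2 hg j).aesm hr).mul hk.aestronglyMeasurable
      · rw [ae_restrict_iff' measurableSet_Y]
        refine ae_of_all _ fun y hy => ?_
        have hj := A_iter_reg hz hz1 hr hr1 hK2 hg j
        have := hj.le_int hr hK20.le hy
        rw [A_iter_int hz hz1 hr hr1 hK2 hg] at this
        rw [Real.norm_eq_abs, abs_mul, abs_of_nonneg (hj.1 y hy)]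
        exact (mul_le_of_le_one_right (hj.1 y hy) (hk1 y)).trans this
      · rw [ae_restrict_iff' measurableSet_Y]
        exact ae_of_all _ fun y hy =>
          (A_iter_tendsto hz hz1 hr hr1 hK2 hhs hg y hy).mul_const _
    have h6 : ∫ y in Y, 2 * I * hs y * k y = 2 * I * T := by
      have := integral_const_mul (μ := volume.restrict Y) (2 * I) (fun y => hs y * k y)
      simpa only [← mul_assoc] using this
    rw [h6] at h5
    have h7 : |∫ x in Y, k x ∂μ - 2 * I * T| ≤ ε := le_of_tendsto' (h5.const_sub _).abs h4
    calc _ = |(∫ x in Y, k x ∂μ - 2 * I * T) - 2 * (μ.real Y - I) * T| := by congr 1; ring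
      _ ≤ |∫ x in Y, k x ∂μ - 2 * I * T| + |2 * (μ.real Y - I) * T| := abs_sub _ _
      _ ≤ ε + 2 * ε * |T| := by
          rw [abs_mul, abs_mul, abs_two]; gcongr
      _ = _ := by ring
  have hT0 : 0 < 1 + 2 * |T| := by positivity
  have : |∫ x in Y, k x ∂μ - 2 * μ.real Y * T| ≤ 0 := by
    apply le_of_forall_pos_le_add
    intro ε hε
    have := key (ε / (1 + 2 * |T|)) (by positivity)
    rw [div_mul_cancel₀ _ hT0.ne'] at this
    linarith
  have := abs_nonpos_iff.1 this
  linarith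

theorem density {z r K : ℝ} (hz : 0 < z) (hz1 : z < 1) (hr : 0 < r) (hr1 : r ≤ 1)
    (hK : Adm r K) {μ : Measure ℝ} (h : Acip z μ) : ∃ (g : ℝ → ℝ) (c D : ℝ), 0 < c ∧ 0 < D ∧
      Measurable g ∧ (∀ x, 0 ≤ g x) ∧ Reg r K g ∧ (∀ y ∈ Y, c ≤ g y ∧ g y ≤ D) ∧
      μ.restrict Y = (volume.restrict Y).withDensity (fun y => ENNReal.ofReal (g y)) := by
  have := h.prob
  have hK0 := hK.pos hr
  obtain ⟨hs, hreg, hlim, hlow⟩ := exists_hstar hz hz1 hr hr1 hK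
  have hμY : 0 < μ.real Y := ENNReal.toReal_pos (h.pos hz hz1) (measure_ne_top _ _)
  classical
  set g : ℝ → ℝ := Y.piecewise (fun y => 2 * μ.real Y * hs y) (fun _ => 0) with hg
  have hgY : ∀ y ∈ Y, g y = 2 * μ.real Y * hs y := fun y hy => piecewise_eq_of_mem _ _ _ hy
  have hgreg : Reg r K g := (hreg.smul (c := 2 * μ.real Y) (by positivity)).congr
    fun y hy => (hgY y hy).symm
  have hgm : Measurable g := ContinuousOn.measurable_piecewise
    ((hreg.continuousOn hr).const_smul (2 * μ.real Y)) continuousOn_const measurableSet_Y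
  have hg0 : ∀ x, 0 ≤ g x := by
    intro x
    by_cases hx : x ∈ Y
    · exact hgreg.1 x hx
    · rw [hg, piecewise_eq_of_notMem _ _ _ hx]
  refine ⟨g, 2 * μ.real Y * Real.exp (-K), Real.exp K * g (1/2), by positivity, ?_, hgm, hg0,
    hgreg, fun y hy => ⟨?_, hgreg.le hr hK0.le hy half_memY⟩, ?_⟩
  · rw [hgY _ half_memY]
    have := hlow _ half_memY
    have : 0 < hs (1/2) := lt_of_lt_of_le (Real.exp_pos _) this
    positivity
  · rw [hgY y hy]
    have := hlow y hy
    gcongr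
  · ext B hB
    rw [withDensity_apply _ hB]
    have h1 := density_aux hz hz1 hr hr1 hK hlim h (k := B.indicator 1)
      (measurable_one.indicator hB) (fun x => by
        by_cases hx : x ∈ B <;> simp [hx])
    rw [integral_indicator_one hB, ← integral_const_mul] at h1
    have h2 : ∫ y in Y, 2 * μ.real Y * (hs y * B.indicator 1 y) =
        ∫ y in B, g y ∂(volume.restrict Y) := by
      rw [← integral_indicator hB]
      refine setIntegral_congr_fun measurableSet_Y fun y hy => ?_
      by_cases hyB : y ∈ B
      · simp [hyB, hgY y hy]
      · simp [hyB]
    rw [h2] at h1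
    rw [← ofReal_integral_eq_lintegral_ofReal (μ := (volume.restrict Y).restrict B)
      (Integrable.restrict (hgreg.integrable hr hK0.le))
      (ae_of_all _ hg0), ← h1, Measure.real, ENNReal.ofReal_toReal (measure_ne_top _ _)]

end LSV

namespace LSV

lemma bern {p t : ℝ} (hp : 0 ≤ p) (hp1 : p ≤ 1) (ht : t ≤ 1) : (1 - t) ^ p ≤ 1 - p * t := by
  have := rpow_one_add_le_one_add_mul_self (s := -t) (by linarith) hp hp1
  rw [← sub_eq_add_neg] at this
  linarith

lemma step_up {p : ℝ} (hp : 0 < p) (hp1 : p ≤ 1) (n : ℕ) :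
    p * ((n:ℝ)+1) ^ (p - 1) ≤ ((n:ℝ)+1) ^ p - (n:ℝ) ^ p := by
  have hn : (0:ℝ) < (n:ℝ) + 1 := by positivity
  have h1 : (n:ℝ) = (n + 1) * (1 - 1/((n:ℝ)+1)) := by field_simp; ring
  have h0 : 1/((n:ℝ)+1) ≤ 1 := by rw [div_le_one hn]; linarith [Nat.cast_nonneg (α := ℝ) n]
  have h2 : (n:ℝ) ^ p ≤ ((n:ℝ)+1)^p * (1 - p * (1/((n:ℝ)+1))) := by
    conv_lhs => rw [h1]
    rw [Real.mul_rpow hn.le (by linarith)]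
    gcongr
    exact bern hp.le hp1 h0
  rw [Real.rpow_sub_one hn.ne']
  have h3 : p * (((n:ℝ)+1) ^ p / ((n:ℝ)+1)) = ((n:ℝ)+1)^p * (p * (1/((n:ℝ)+1))) := by
    field_simp
  rw [h3]; linarith

lemma step_down {p : ℝ} (hp : 0 < p) (hp1 : p ≤ 1) {u : ℝ} (hu : 0 < u) :
    p * (u+1) ^ (-p - 1) ≤ u ^ (-p) - (u+1) ^ (-p) := by
  have hn : (0:ℝ) < u + 1 := by positivity
  have h1 : u = (u + 1) * (1 - 1/(u+1)) := by field_simp; ring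
  have h0 : 1/(u+1) < 1 := by rw [div_lt_one hn]; linarith
  have hpt : 0 < 1 - 1/(u+1) := by linarith
  have h00 : 0 < 1/(u+1) := by positivity
  have h2 : 1 + p * (1/(u+1)) ≤ (1 - 1/(u+1)) ^ (-p) := by
    rw [Real.rpow_neg hpt.le]
    rw [le_inv_comm₀ (by positivity) (by positivity)]
    refine (bern hp.le hp1 h0.le).trans ?_
    rw [← one_div, le_div_iff₀ (by positivity)]
    nlinarith [sq_nonneg (p * (1/(u+1)))]
  have h4 : u ^ (-p) = (u+1) ^ (-p) * (1 - 1/(u+1)) ^ (-p) := by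
    conv_lhs => rw [h1]
    rw [Real.mul_rpow hn.le hpt.le]
  have h5 := mul_le_mul_of_nonneg_left h2 (Real.rpow_nonneg hn.le (-p))
  rw [Real.rpow_sub_one hn.ne', h4]
  have h3 : p * ((u+1) ^ (-p) / (u+1)) = (u+1)^(-p) * (p * (1/(u+1))) := by
    field_simp
  rw [h3]; linarith

lemma sum_up {p : ℝ} (hp : 0 < p) (hp1 : p ≤ 1) (s : ℕ) :
    ∑ n ∈ Finset.range s, ((n:ℝ)+1) ^ (p - 1) ≤ p⁻¹ * (s:ℝ) ^ p := by
  induction s with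
  | zero => simp [Real.zero_rpow hp.ne']
  | succ s ih =>
    rw [Finset.sum_range_succ]
    have := step_up hp hp1 s
    have h2 : ((s:ℝ)+1) ^ (p-1) ≤ p⁻¹ * (((s:ℝ)+1) ^ p - (s:ℝ) ^ p) := by
      rw [le_inv_mul_iff₀ hp]; exact this
    push_cast
    linarith

lemma sum_down {p : ℝ} (hp : 0 < p) (hp1 : p ≤ 1) {s : ℕ} (hs : 1 ≤ s) (N : ℕ) :
    ∑ l ∈ Finset.range N, (((l + s : ℕ):ℝ)+1) ^ (-p - 1) ≤
      p⁻¹ * ((s:ℝ) ^ (-p) - ((N + s : ℕ) : ℝ) ^ (-p)) := by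
  induction N with
  | zero => simp
  | succ N ih =>
    rw [Finset.sum_range_succ]
    have h0 : (0:ℝ) < ((N + s : ℕ):ℝ) := by
      have : 0 < N + s := by omega
      exact_mod_cast this
    have := step_down hp hp1 h0
    have h2 : (((N+s:ℕ):ℝ)+1) ^ (-p-1) ≤ p⁻¹ * (((N+s:ℕ):ℝ) ^ (-p) - (((N+s:ℕ):ℝ)+1) ^ (-p)) := by
      rw [le_inv_mul_iff₀ hp]; exact this
    have e : ((N + 1 + s : ℕ) : ℝ) = ((N+s:ℕ):ℝ)+1 := by push_cast; ring
    rw [e]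
    linarith

section
variable {z r : ℝ} {μ : Measure ℝ}

lemma real_bounds (hz : 0 < z) (hz1 : z < 1) (h : Acip z μ) : ∃ c D : ℝ, 0 < c ∧ 0 < D ∧
    ∀ B : Set ℝ, MeasurableSet B → B ⊆ Y → c * volume.real B ≤ μ.real B ∧
      μ.real B ≤ D * volume.real B := by
  have := h.prob
  obtain ⟨K, hK⟩ := Adm.exists (r := 1) one_pos
  obtain ⟨g, c, D, hc, hD, hgm, hg0, hreg, hb, hden⟩ := density hz hz1 one_pos le_rfl hK h
  refine ⟨c, D, hc, hD, fun B hB hBY => ?_⟩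
  have hfin : volume B ≠ ⊤ := ne_top_of_le_ne_top (by rw [vol_Y]; exact ENNReal.ofReal_ne_top)
    (measure_mono hBY)
  have h1 : μ.real B = ∫ y in B, g y := by
    have e1 : μ B = (μ.restrict Y) B := by
      rw [Measure.restrict_apply hB, inter_eq_left.2 hBY]
    rw [Measure.real, e1, hden, withDensity_apply _ hB, Measure.restrict_restrict hB,
      inter_eq_left.2 hBY, integral_eq_lintegral_of_nonneg_ae (ae_of_all _ hg0)
      hgm.aestronglyMeasurable]
  have hgi : IntegrableOn g B := (hreg.integrable one_pos (hK.pos one_pos).le).mono_set hBY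
  have hci : ∀ a : ℝ, IntegrableOn (fun _ => a) B := fun a => integrableOn_const hfin
  rw [h1]
  constructor
  · have := setIntegral_mono_on (hci c) hgi hB fun y hy => (hb y (hBY hy)).1
    rw [setIntegral_const, smul_eq_mul] at this; linarith
  · have := setIntegral_mono_on hgi (hci D) hB fun y hy => (hb y (hBY hy)).2
    rw [setIntegral_const, smul_eq_mul] at this; linarith

lemma vol_E (hz : 0 < z) (n : ℕ) : volume.real (E z n) = b z n - 1/2 := by
  rw [E, Real.volume_real_Ico_of_le (b_gt hz n).le]

lemma vol_YN (hz : 0 < z) (n : ℕ) : volume.real (YN z n) = b z n - b z (n+1) := by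
  rw [YN, Real.volume_real_Ico_of_le (b_anti hz n).le]

lemma shift_rpow {p : ℝ} (hp : 0 ≤ p) (n : ℕ) :
    ((n:ℝ)+1) ^ (-p) ≤ 2 ^ p * (((n+1:ℕ):ℝ)+1) ^ (-p) := by
  have h1 : (0:ℝ) < (n:ℝ) + 1 := by positivity
  have h2 : (0:ℝ) < ((n+1:ℕ):ℝ) + 1 := by positivity
  rw [Real.rpow_neg h1.le, Real.rpow_neg h2.le, ← div_eq_mul_inv, le_div_iff₀ (by positivity),
    inv_mul_le_iff₀ (by positivity), ← Real.mul_rpow h1.le (by norm_num)]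
  apply Real.rpow_le_rpow h2.le _ hp
  push_cast; linarith [Nat.cast_nonneg (α := ℝ) n]

lemma E_upper (hz : 0 < z) (hz1 : z < 1) (h : Acip z μ) : ∃ C : ℝ, 0 < C ∧
    ∀ n : ℕ, μ.real (E z n) ≤ C * ((n:ℝ)+1) ^ (-(1/z)) := by
  have := h.prob
  obtain ⟨c, D, hc, hD, hb⟩ := real_bounds hz hz1 h
  obtain ⟨C, hC, hx⟩ := xs_upper hz hz1
  refine ⟨D * C * 2 ^ (1/z) + 1, by positivity, fun n => ?_⟩
  cases n with
  | zero =>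
    have h1 : μ.real (E z 0) ≤ 1 := measureReal_le_one
    have h2 : 0 < D * C * 2 ^ (1/z) := by positivity
    simp
    simp at h2
    linarith
  | succ n =>
    have h1 := (hb _ (measurableSet_E z (n+1)) (E_sub hz _)).2
    rw [vol_E hz] at h1
    simp only [b] at h1
    have h2 := hx n
    have h3 := shift_rpow (p := 1/z) (by positivity) n
    have h4 : 0 ≤ (((n+1:ℕ):ℝ)+1) ^ (-(1/z)) := by positivity
    have h0 := (xs_mem hz n).1
    calc μ.real (E z (n+1)) ≤ D * ((1 + xs z n)/2 - 1/2) := h1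
      _ ≤ D * xs z n := by gcongr; linarith
      _ ≤ D * (C * (2 ^ (1/z) * (((n+1:ℕ):ℝ)+1) ^ (-(1/z)))) := by
          gcongr; exact h2.trans (by gcongr)
      _ ≤ _ := by linarith

lemma E_lower (hz : 0 < z) (hz1 : z < 1) (h : Acip z μ) : ∃ C : ℝ, 0 < C ∧
    ∀ n : ℕ, C * ((n:ℝ)+1) ^ (-(1/z)) ≤ μ.real (E z n) := by
  have := h.prob
  obtain ⟨c, D, hc, hD, hb⟩ := real_bounds hz hz1 h
  obtain ⟨C, hC, hx⟩ := xs_lower hz hz1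
  refine ⟨c * C / 2, by positivity, fun n => ?_⟩
  have h1 := (hb _ (measurableSet_E z n) (E_sub hz _)).1
  rw [vol_E hz] at h1
  have h2 : xs z n ≤ 2 * (b z n - 1/2) := by
    cases n with
    | zero => simp only [b]; linarith [(xs_mem hz 0).2]
    | succ n => simp only [b]; linarith [xs_anti hz n]
  have h3 := hx n
  calc c * C / 2 * ((n:ℝ)+1) ^ (-(1/z)) = c * ((C * ((n:ℝ)+1) ^ (-(1/z))) / 2) := by ring
    _ ≤ c * (b z n - 1/2) := by gcongr; linarith
    _ ≤ _ := h1

lemma YN_upper (hz : 0 < z) (hz1 : z < 1) (h : Acip z μ) : ∃ C : ℝ, 0 < C ∧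
    ∀ n : ℕ, μ.real (YN z n) ≤ C * ((n:ℝ)+1) ^ (-(1/z) - 1) := by
  have := h.prob
  obtain ⟨c, D, hc, hD, hb⟩ := real_bounds hz hz1 h
  obtain ⟨C, hC, hx⟩ := dG_bound hz hz1
  refine ⟨D * C * 2 ^ (1/z+1) + 1, by positivity, fun n => ?_⟩
  rw [← neg_add']
  cases n with
  | zero =>
    have h1 : μ.real (YN z 0) ≤ 1 := measureReal_le_one
    have h2 : 0 < D * C * 2 ^ (1/z+1) := by positivity
    simp
    simp at h2
    linarith
  | succ n =>
    have h1 := (hb _ (measurableSet_YN z (n+1)) (YN_sub hz _)).2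
    rw [vol_YN hz] at h1
    simp only [b] at h1
    have h2 := (hx n _ half_memY).2
    rw [← neg_add'] at h2
    have h3 := shift_rpow (p := 1/z+1) (by positivity) n
    have h4 : 0 ≤ (((n+1:ℕ):ℝ)+1) ^ (-(1/z+1)) := by positivity
    have h0 := xs_anti hz n
    calc μ.real (YN z (n+1)) ≤ D * ((1 + xs z n)/2 - (1 + xs z (n+1))/2) := h1
      _ ≤ D * (xs z n - xs z (n+1)) := mul_le_mul_of_nonneg_left (by linarith) hD.le
      _ ≤ D * (C * (2 ^ (1/z+1) * (((n+1:ℕ):ℝ)+1) ^ (-(1/z+1)))) := by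
          gcongr; exact h2.trans (by gcongr)
      _ ≤ _ := by linarith

lemma sum_E (hz : 0 < z) (h : Acip z μ) (n : ℕ) :
    ∑ l ∈ Finset.range (n+1), μ.real (E z l) + μ.real (Ico 0 (xs z n)) = 1 := by
  have := h.prob
  have h1 := h.partial hz MeasurableSet.univ n
  simp only [preimage_univ, univ_inter, measure_univ] at h1
  have := congrArg ENNReal.toReal h1
  rw [ENNReal.toReal_add, ENNReal.toReal_sum] at this
  · simp only [Measure.real]; simpa using this
  · intro a _; exact measure_ne_top _ _
  · exact (ENNReal.sum_lt_top.2 fun a _ => measure_lt_top _ _).ne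
  · exact measure_ne_top _ _

/-- tail sums -/
lemma tail_le (hz : 1/2 < z) (hz1 : z < 1) (h : Acip z μ) : ∃ C : ℝ, 0 < C ∧
    ∀ s N : ℕ, 1 ≤ s → ∑ l ∈ Finset.range N, μ.real (E z (l + s)) ≤ C * (s:ℝ) ^ (1 - 1/z) := by
  have hz0 : 0 < z := by linarith
  obtain ⟨C, hC, hE⟩ := E_upper hz0 hz1 h
  have hp : 0 < 1/z - 1 := by linarith [one_lt_inv_z hz0 hz1]
  have hp1 : 1/z - 1 ≤ 1 := by
    have : 1/z ≤ 2 := by rw [div_le_iff₀ hz0]; linarith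
    linarith
  refine ⟨C * (1/z-1)⁻¹, by positivity, fun s N hs => ?_⟩
  have h1 := sum_down hp hp1 hs N
  have e : -(1/z - 1) - 1 = -(1/z) := by ring
  rw [e, neg_sub] at h1
  calc _ ≤ ∑ l ∈ Finset.range N, C * (((l+s:ℕ):ℝ)+1) ^ (-(1/z)) :=
        Finset.sum_le_sum fun l _ => hE (l+s)
    _ = C * ∑ l ∈ Finset.range N, (((l+s:ℕ):ℝ)+1) ^ (-(1/z)) := by rw [Finset.mul_sum]
    _ ≤ C * ((1/z-1)⁻¹ * (s:ℝ) ^ (1 - 1/z)) := by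
        gcongr
        refine h1.trans ?_
        gcongr
        have : 0 ≤ ((N+s:ℕ):ℝ) ^ (1 - 1/z) := by positivity
        linarith
    _ = _ := by ring

lemma low_rest (hz : 0 < z) (hz1 : z < 1) (h : Acip z μ) : ∃ C : ℝ, 0 < C ∧
    ∀ n : ℕ, C * ((n:ℝ)+1) ^ (1 - 1/z) ≤ μ.real (Ico 0 (xs z n)) := by
  have := h.prob
  obtain ⟨C, hC, hE⟩ := E_lower hz hz1 h
  refine ⟨C * 2 ^ (-(1/z)), by positivity, fun n => ?_⟩
  have h1 := sum_E hz h n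
  have h2 := sum_E hz h (n + 1 + n)
  have e : n + 1 + n + 1 = (n+1) + (n+1) := by ring
  rw [e, Finset.sum_range_add] at h2
  have h3 : (n+1) • (C * ((2:ℝ) * ((n:ℝ)+1)) ^ (-(1/z))) ≤
      ∑ x ∈ Finset.range (n+1), μ.real (E z (n+1+x)) := by
    rw [← Finset.card_range (n+1), Finset.card_range (n+1)]
    have := Finset.card_nsmul_le_sum (Finset.range (n+1)) (fun x => μ.real (E z (n+1+x)))
      (C * ((2:ℝ) * ((n:ℝ)+1)) ^ (-(1/z))) (fun x hx => ?_)
    · rwa [Finset.card_range] at this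
    · refine le_trans ?_ (hE _)
      gcongr C * ?_
      apply Real.rpow_le_rpow_of_nonpos (by positivity)
      · have : x ≤ n := by have := Finset.mem_range.1 hx; omega
        have : (x:ℝ) ≤ n := by exact_mod_cast this
        push_cast; linarith
      · simp; exact hz.le
  have h4 : 0 ≤ μ.real (Ico 0 (xs z (n+1+n))) := measureReal_nonneg
  rw [nsmul_eq_mul, Real.mul_rpow (by norm_num) (by positivity)] at h3
  have hn : (0:ℝ) < (n:ℝ)+1 := by positivity
  have h5 : ((n:ℝ)+1) ^ (1 - 1/z) = ((n:ℝ)+1) * ((n:ℝ)+1) ^ (-(1/z)) := by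
    rw [sub_eq_add_neg, Real.rpow_add hn, Real.rpow_one]
  rw [h5]
  push_cast at h3
  linarith

end
end LSV

namespace LSV
variable {z : ℝ} {μ : Measure ℝ}

/-- the tower map -/
noncomputable def Tw (z : ℝ) (p : ℝ × ℕ) : ℝ × ℕ :=
  if (lsv z)^[p.2+1] p.1 < 1/2 then (p.1, p.2+1) else ((lsv z)^[p.2+1] p.1, 0)

/-- the tower measure -/
noncomputable def mT (z : ℝ) (μ : Measure ℝ) : Measure (ℝ × ℕ) :=
  Measure.sum fun l => (μ.restrict (E z l)).map (fun x => (x, l))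

/-- the projection -/
noncomputable def pr (z : ℝ) (p : ℝ × ℕ) : ℝ := (lsv z)^[p.2] p.1

/-- top of the tower -/
def top (z : ℝ) : Set (ℝ × ℕ) := {p | 1/2 ≤ (lsv z)^[p.2+1] p.1}

lemma meas_of_nat {β : Type*} [MeasurableSpace β] {f : ℝ × ℕ → β}
    (h : ∀ l, Measurable fun x => f (x, l)) : Measurable f :=
  measurable_from_prod_countable_left h

lemma pr_measurable (z : ℝ) : Measurable (pr z) :=
  meas_of_nat fun l => (lsv_measurable z).iterate l

lemma pr1_measurable (z : ℝ) : Measurable (fun p : ℝ × ℕ => (lsv z)^[p.2+1] p.1) :=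
  meas_of_nat fun l => (lsv_measurable z).iterate (l+1)

lemma top_measurable (z : ℝ) : MeasurableSet (top z) :=
  measurableSet_le measurable_const (pr1_measurable z)

lemma Tw_measurable (z : ℝ) : Measurable (Tw z) := by
  unfold Tw
  refine Measurable.ite (measurableSet_lt (pr1_measurable z) measurable_const) ?_ ?_
  · exact measurable_fst.prodMk ((measurable_of_countable (fun n : ℕ => n+1)).comp measurable_snd)
  · exact (pr1_measurable z).prodMk measurable_const

lemma pr_Tw (p : ℝ × ℕ) : pr z (Tw z p) = lsv z (pr z p) := by
  unfold Tw pr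
  split_ifs
  · exact Function.iterate_succ_apply' _ _ _
  · exact Function.iterate_succ_apply' _ _ _

lemma pr_Tw_iter (k : ℕ) (p : ℝ × ℕ) : pr z ((Tw z)^[k] p) = (lsv z)^[k] (pr z p) := by
  induction k with
  | zero => rfl
  | succ k ih => rw [Function.iterate_succ_apply', Function.iterate_succ_apply', pr_Tw, ih]

lemma mT_apply {B : Set (ℝ × ℕ)} (hB : MeasurableSet B) :
    mT z μ B = ∑' l, μ ((fun x => (x, l)) ⁻¹' B ∩ E z l) := by
  unfold mT
  rw [Measure.sum_apply _ hB]
  congr 1; ext l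
  rw [Measure.map_apply measurable_prodMk_right hB,
    Measure.restrict_apply (measurable_prodMk_right hB)]

lemma sum_YN (hz : 0 < z) (hz1 : z < 1) (h : Acip z μ) {S : Set ℝ} (hS : MeasurableSet S) :
    ∑' n, μ (S ∩ YN z n) = μ (S ∩ Y) := by
  have e1 : μ (S ∩ Y) = μ (⋃ n, (S ∩ YN z n)) := by
    apply measure_congr
    have : ∀ᵐ x ∂μ, x ≠ 1/2 := measure_eq_zero_iff_ae_notMem.1 (h.singleton _)
    filter_upwards [this] with x hx
    apply propext
    change x ∈ (S ∩ Y) ↔ x ∈ (⋃ n, (S ∩ YN z n))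
    rw [← inter_iUnion, YN_union hz hz1]
    simp only [mem_inter_iff, Y, mem_Ico, mem_Ioo]
    have : 1/2 ≤ x ↔ 1/2 < x := ⟨fun h => lt_of_le_of_ne h (Ne.symm hx), le_of_lt⟩
    rw [this]
  rw [e1, measure_iUnion]
  · intro i j hij
    exact (YN_disj hz hij).mono inter_subset_right inter_subset_right
  · intro n; exact hS.inter (measurableSet_YN z n)

lemma map_top (hz : 0 < z) (hz1 : z < 1) (h : Acip z μ) :
    ((mT z μ).restrict (top z)).map Prod.fst = μ.restrict Y := by
  ext B hB
  rw [Measure.map_apply measurable_fst hB, Measure.restrict_apply (measurable_fst hB),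
    Measure.restrict_apply hB, mT_apply ((measurable_fst hB).inter (top_measurable z)),
    ← sum_YN hz hz1 h hB]
  congr 1; ext l; congr 1; ext x
  simp only [mem_inter_iff, mem_preimage, mem_YN_iff hz l, top, mem_ofPred_eq]
  tauto

lemma map_pr (hz : 0 < z) (hz1 : z < 1) (h : Acip z μ) : (mT z μ).map (pr z) = μ := by
  ext B hB
  rw [Measure.map_apply (pr_measurable z) hB, mT_apply (pr_measurable z hB),
    ← h.kac_set hz hz1 hB]
  rfl

lemma mT_prob (hz : 0 < z) (hz1 : z < 1) (h : Acip z μ) : IsProbabilityMeasure (mT z μ) := by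
  have := h.prob
  constructor
  have := congrArg (fun m => m univ) (map_pr hz hz1 h)
  simpa [Measure.map_apply (pr_measurable z) MeasurableSet.univ] using this

lemma Tw_top {p : ℝ × ℕ} (hz : 0 < z) (hp : p.1 ∈ E z p.2) (ht : p ∈ top z) :
    Tw z p = (F z p.1, 0) ∧ R0 z p.1 = p.2 ∧ p.1 ∈ Y := by
  have h1 : p.1 ∈ YN z p.2 := (mem_YN_iff hz _).2 ⟨hp, ht⟩
  refine ⟨?_, R0_eq hz h1, E_sub hz _ hp⟩
  unfold Tw
  rw [if_neg (not_lt.2 ht), F_eq hz h1]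

lemma mT_ae : ∀ᵐ p ∂(mT z μ), p.1 ∈ E z p.2 := by
  have hm : MeasurableSet {p : ℝ × ℕ | p.1 ∈ E z p.2} :=
    measurableSet_setOfPred.2 (meas_of_nat fun l => measurableSet_setOfPred.1 (measurableSet_E z l))
  rw [ae_iff]
  have : MeasurableSet {p : ℝ × ℕ | ¬ p.1 ∈ E z p.2} := hm.compl
  rw [mT_apply this]
  simp only [ENNReal.tsum_eq_zero]
  intro l
  convert measure_empty (μ := μ)
  ext x
  simp

lemma mT_inv (hz : 0 < z) (hz1 : z < 1) (h : Acip z μ) :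
    MeasurePreserving (Tw z) (mT z μ) (mT z μ) := by
  refine ⟨Tw_measurable z, ?_⟩
  ext B hB
  rw [Measure.map_apply (Tw_measurable z) hB, mT_apply (Tw_measurable z hB), mT_apply hB]
  have hB0 : MeasurableSet ((fun x : ℝ => (x, 0)) ⁻¹' B) := measurable_prodMk_right hB
  have hs : ∀ l, μ ((fun x => (x, l)) ⁻¹' (Tw z ⁻¹' B) ∩ E z l) =
      μ ((fun x => (x, l+1)) ⁻¹' B ∩ E z (l+1)) +
      μ (F z ⁻¹' ((fun x : ℝ => (x, 0)) ⁻¹' B) ∩ YN z l) := by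
    intro l
    rw [← measure_union]
    · congr 1
      ext x
      simp only [mem_inter_iff, mem_preimage, mem_union]
      by_cases hx : x ∈ E z l
      · by_cases ht : 1/2 ≤ (lsv z)^[l+1] x
        · have hY : x ∈ YN z l := (mem_YN_iff hz _).2 ⟨hx, ht⟩
          have hn : x ∉ E z (l+1) := by
            rw [YN_eq hz] at hY; exact hY.2
          have := (Tw_top (p := (x,l)) hz hx ht).1
          simp [hx, hY, hn, this]
        · have hY : x ∉ YN z l := fun h => ht ((mem_YN_iff hz _).1 h).2
          have hn : x ∈ E z (l+1) := by
            rw [YN_eq hz] at hY; by_contra h; exact hY ⟨hx, h⟩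
          have : Tw z (x,l) = (x, l+1) := by unfold Tw; rw [if_pos (not_le.1 ht)]
          simp [hx, hY, hn, this]
      · have hn : x ∉ E z (l+1) := fun h => hx (E_succ_sub hz l h)
        have hY : x ∉ YN z l := fun h => hx ((mem_YN_iff hz _).1 h).1
        simp [hx, hY, hn]
    · rw [Set.disjoint_left]
      rintro x ⟨_, h1⟩ ⟨_, h2⟩
      rw [YN_eq hz] at h2; exact h2.2 h1
    · exact (F_measurable z hB0).inter (measurableSet_YN z l)
  rw [tsum_congr hs, ENNReal.tsum_add, sum_YN hz hz1 h (F_measurable z hB0)]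
  have e := congrArg (fun m => m ((fun x : ℝ => (x, 0)) ⁻¹' B)) (h.map_F hz hz1)
  simp only [Measure.map_apply (F_measurable z) hB0, Measure.restrict_apply (F_measurable z hB0),
    Measure.restrict_apply hB0] at e
  rw [e, tsum_eq_zero_add' (f := fun l => μ ((fun x => (x, l)) ⁻¹' B ∩ E z l)) ENNReal.summable, add_comm,
    E_zero]

/-- orthogonality bookkeeping -/
lemma int_top (hz : 0 < z) (hz1 : z < 1) (h : Acip z μ) {k : ℝ → ℝ} (hk : Measurable k) :
    ∫ p, (top z).indicator (fun p => k p.1) p ∂(mT z μ) = ∫ x in Y, k x ∂μ := by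
  rw [integral_indicator (top_measurable z), ← map_top hz hz1 h,
    integral_map measurable_fst.aemeasurable hk.aestronglyMeasurable]

lemma level (s : ℕ) :
    mT z μ {p | s ≤ p.2} = ∑' l, μ (E z (l + s)) := by
  have hm : MeasurableSet {p : ℝ × ℕ | s ≤ p.2} :=
    measurableSet_le measurable_const measurable_snd
  rw [mT_apply hm]
  have e := Summable.sum_add_tsum_nat_add' (f := fun i =>
    μ ((fun x : ℝ => (x, i)) ⁻¹' {p | s ≤ p.2} ∩ E z i)) (k := s) ENNReal.summable
  have h0 : ∑ i ∈ Finset.range s, μ ((fun x : ℝ => (x, i)) ⁻¹' {p | s ≤ p.2} ∩ E z i) = 0 := by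
    apply Finset.sum_eq_zero
    intro i hi
    have : (fun x : ℝ => (x, i)) ⁻¹' {p | s ≤ p.2} ∩ E z i = ∅ := by
      have := Finset.mem_range.1 hi
      ext x
      simp only [mem_inter_iff, mem_preimage, mem_ofPred_eq, mem_empty_iff_false, iff_false]; omega
    rw [this, measure_empty]
  rw [h0, zero_add] at e
  rw [← e]
  apply tsum_congr
  intro l
  congr 1; ext x; simp only [mem_inter_iff, mem_preimage, mem_ofPred_eq, Nat.le_add_left, true_and]

end LSV

namespace LSV

/-- global Hölder observables -/
structure Obs (φ : ℝ → ℝ) (B H r : ℝ) : Prop where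
  r0 : 0 < r
  r1 : r ≤ 1
  B0 : 0 < B
  H0 : 0 ≤ H
  cont : Continuous φ
  bd : ∀ x, |φ x| ≤ B
  hol : ∀ x y, |φ x - φ y| ≤ H * |x - y| ^ r

section
variable {z B H r : ℝ} {μ : Measure ℝ} {φ : ℝ → ℝ}

/-- truncated induced observable -/
noncomputable def Vs (z : ℝ) (φ : ℝ → ℝ) (s : ℕ) (x : ℝ) : ℝ :=
  lsvBirkhoff z φ (min (R0 z x + 1) s) x

/-- truncated coboundary -/
noncomputable def xi (z : ℝ) (φ : ℝ → ℝ) (s : ℕ) (p : ℝ × ℕ) : ℝ :=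
  lsvBirkhoff z φ (min p.2 s) p.1

lemma birk_measurable (z : ℝ) (hφ : Measurable φ) (n : ℕ) : Measurable (lsvBirkhoff z φ n) := by
  unfold lsvBirkhoff
  exact Finset.measurable_sum _ fun i _ => hφ.comp ((lsv_measurable z).iterate i)

lemma birk_bd (h : Obs φ B H r) (n : ℕ) (x : ℝ) : |lsvBirkhoff z φ n x| ≤ B * n := by
  unfold lsvBirkhoff
  calc _ ≤ ∑ j ∈ Finset.range n, |φ ((lsv z)^[j] x)| := Finset.abs_sum_le_sum_abs _ _
    _ ≤ ∑ j ∈ Finset.range n, B := Finset.sum_le_sum fun i _ => h.bd _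
    _ = _ := by simp [mul_comm]

lemma Vs_measurable (z : ℝ) (hφ : Measurable φ) (s : ℕ) : Measurable (Vs z φ s) := by
  have h1 : Measurable (fun p : ℝ × ℕ => lsvBirkhoff z φ (min (p.2+1) s) p.1) :=
    meas_of_nat fun l => birk_measurable z hφ (min (l+1) s)
  exact h1.comp (measurable_id.prodMk (R0_measurable z))

lemma xi_measurable (z : ℝ) (hφ : Measurable φ) (s : ℕ) : Measurable (xi z φ s) :=
  meas_of_nat fun l => birk_measurable z hφ (min l s)

lemma Vs_bd (h : Obs φ B H r) (s : ℕ) (x : ℝ) : |Vs z φ s x| ≤ B * s := by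
  refine (birk_bd h _ x).trans ?_
  have := h.B0
  gcongr
  exact min_le_right _ _

lemma Vs_bd' (h : Obs φ B H r) (s : ℕ) (x : ℝ) : |Vs z φ s x| ≤ B * (R0 z x + 1) := by
  refine (birk_bd h _ x).trans ?_
  have := h.B0
  gcongr
  exact_mod_cast min_le_left _ _

lemma xi_bd (h : Obs φ B H r) (s : ℕ) (p : ℝ × ℕ) : |xi z φ s p| ≤ B * s := by
  refine (birk_bd h _ _).trans ?_
  have := h.B0
  gcongr
  exact min_le_right _ _

lemma Vs_ps_hol (hz : 0 < z) (h : Obs φ B H r) (s n : ℕ) {x y : ℝ} (hx : x ∈ Y) (hy : y ∈ Y) :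
    |Vs z φ s (ps z n x) - Vs z φ s (ps z n y)| ≤ H * ((n:ℝ)+1) * |x - y| ^ r := by
  unfold Vs
  rw [R0_eq hz (ps_memYN hz hx n), R0_eq hz (ps_memYN hz hy n)]
  unfold lsvBirkhoff
  rw [← Finset.sum_sub_distrib]
  have hH := h.H0
  have key : ∀ j ∈ Finset.range (min (n+1) s),
      |φ ((lsv z)^[j] (ps z n x)) - φ ((lsv z)^[j] (ps z n y))| ≤ H * |x - y| ^ r := by
    intro j hj
    refine (h.hol _ _).trans ?_
    refine mul_le_mul_of_nonneg_left (Real.rpow_le_rpow (abs_nonneg _) ?_ h.r0.le) hH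
    · have hj' : j < n + 1 := lt_of_lt_of_le (Finset.mem_range.1 hj) (min_le_left _ _)
      cases j with
      | zero =>
        have := ps_lip hz hx hy n
        have := abs_nonneg (x - y)
        simp only [Function.iterate_zero, id]
        linarith
      | succ j =>
        obtain ⟨m, rfl⟩ : ∃ m, n = m + j := ⟨n - j, by omega⟩
        rw [lsv_iter_ps hz hx, lsv_iter_ps hz hy]
        exact G_lip hz (Y_sub hx) (Y_sub hy) m
  calc _ ≤ ∑ j ∈ Finset.range (min (n+1) s),
        |φ ((lsv z)^[j] (ps z n x)) - φ ((lsv z)^[j] (ps z n y))| := Finset.abs_sum_le_sum_abs _ _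
    _ ≤ ∑ j ∈ Finset.range (min (n+1) s), H * |x - y| ^ r := Finset.sum_le_sum key
    _ = (min (n+1) s : ℕ) * (H * |x - y| ^ r) := by simp
    _ ≤ ((n:ℝ)+1) * (H * |x - y| ^ r) := by
        gcongr
        exact_mod_cast min_le_left _ _
    _ = _ := by ring

lemma cob (hz : 0 < z) (φ : ℝ → ℝ) (s : ℕ) {p : ℝ × ℕ} (hp : p.1 ∈ E z p.2) :
    (if p.2 < s then φ (pr z p) else 0) =
      xi z φ s (Tw z p) - xi z φ s p + (top z).indicator (fun p => Vs z φ s p.1) p := by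
  have e : lsvBirkhoff z φ (min (p.2+1) s) p.1 =
      xi z φ s p + (if p.2 < s then φ (pr z p) else 0) := by
    unfold xi
    split_ifs with h
    · rw [min_eq_left h, min_eq_left h.le]
      unfold lsvBirkhoff
      rw [Finset.sum_range_succ]; rfl
    · rw [min_eq_right (by omega), min_eq_right (by omega), add_zero]
  by_cases ht : p ∈ top z
  · obtain ⟨h1, h2, -⟩ := Tw_top hz hp ht
    rw [indicator_of_mem ht, h1]
    have e0 : xi z φ s (F z p.1, 0) = 0 := by simp [xi, lsvBirkhoff]
    have e1 : Vs z φ s p.1 = lsvBirkhoff z φ (min (p.2+1) s) p.1 := by unfold Vs; rw [h2]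
    rw [e0, e1, e]; ring
  · have h1 : Tw z p = (p.1, p.2+1) := by
      unfold Tw
      rw [if_pos (not_le.1 ht)]
    rw [indicator_of_notMem ht, h1]
    have e1 : xi z φ s (p.1, p.2+1) = lsvBirkhoff z φ (min (p.2+1) s) p.1 := rfl
    rw [e1, e]; ring

lemma level_le (hz : 1/2 < z) (hz1 : z < 1) (h : Acip z μ) : ∃ C : ℝ, 0 < C ∧
    ∀ s : ℕ, 1 ≤ s → (mT z μ).real {p | s ≤ p.2} ≤ C * (s:ℝ) ^ (1 - 1/z) := by
  have := h.prob
  obtain ⟨C, hC, ht⟩ := tail_le hz hz1 h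
  refine ⟨C, hC, fun s hs => ?_⟩
  unfold Measure.real
  rw [level]
  apply ENNReal.toReal_le_of_le_ofReal (by positivity)
  apply ENNReal.tsum_le_of_sum_range_le
  intro N
  have e : ∑ i ∈ Finset.range N, μ (E z (i+s)) =
      ENNReal.ofReal (∑ i ∈ Finset.range N, μ.real (E z (i+s))) := by
    rw [ENNReal.ofReal_sum_of_nonneg (fun _ _ => measureReal_nonneg)]
    exact Finset.sum_congr rfl fun i _ => (ofReal_measureReal).symm
  rw [e]
  exact ENNReal.ofReal_le_ofReal (ht s N hs)

lemma int_bd {α : Type*} [MeasurableSpace α] {m : Measure α} [IsFiniteMeasure m] {f : α → ℝ}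
    (hf : Measurable f) {D : ℝ} (hD : ∀ x, |f x| ≤ D) : Integrable f m :=
  Integrable.of_bound hf.aestronglyMeasurable D (ae_of_all _ hD)

lemma c_bound (hz : 1/2 < z) (hz1 : z < 1) (h : Acip z μ) (hφ : Obs φ B H r)
    (hm : ∫ x, φ x ∂μ = 0) : ∃ C : ℝ, 0 < C ∧
    ∀ s : ℕ, 1 ≤ s → |∫ x in Y, Vs z φ s x ∂μ| ≤ C * (s:ℝ) ^ (1 - 1/z) := by
  have hz0 : 0 < z := by linarith
  have := h.prob
  have := mT_prob hz0 hz1 h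
  obtain ⟨C, hC, hl⟩ := level_le hz hz1 h
  have hB := hφ.B0
  refine ⟨B * C, by positivity, fun s hs => ?_⟩
  have hφm := hφ.cont.measurable
  have hT := mT_inv hz0 hz1 h
  have hpm : Measurable fun p => φ (pr z p) := hφm.comp (pr_measurable z)
  have hlm : MeasurableSet {p : ℝ × ℕ | s ≤ p.2} :=
    measurableSet_le measurable_const measurable_snd
  have hlm' : MeasurableSet {p : ℝ × ℕ | p.2 < s} :=
    measurableSet_lt measurable_snd measurable_const
  have hxi : Integrable (xi z φ s) (mT z μ) := int_bd (xi_measurable z hφm s) (xi_bd hφ s)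
  have hxiT : Integrable (fun p => xi z φ s (Tw z p)) (mT z μ) :=
    int_bd ((xi_measurable z hφm s).comp (Tw_measurable z)) (fun _ => xi_bd hφ s _)
  have hVm : Measurable fun p : ℝ × ℕ => Vs z φ s p.1 := (Vs_measurable z hφm s).comp measurable_fst
  have hV : Integrable ((top z).indicator (fun p => Vs z φ s p.1)) (mT z μ) :=
    (int_bd hVm (fun _ => Vs_bd hφ s _)).indicator (top_measurable z)
  have e1 : ∫ p, (if p.2 < s then φ (pr z p) else 0) ∂(mT z μ) = ∫ x in Y, Vs z φ s x ∂μ := by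
    rw [← int_top hz0 hz1 h (Vs_measurable z hφm s)]
    have : ∫ p, (if p.2 < s then φ (pr z p) else 0) ∂(mT z μ) =
        ∫ p, (xi z φ s (Tw z p) - xi z φ s p + (top z).indicator (fun p => Vs z φ s p.1) p)
          ∂(mT z μ) := by
      apply integral_congr_ae
      filter_upwards [mT_ae] with p hp using cob hz0 φ s hp
    rw [this, integral_add (f := fun p => xi z φ s (Tw z p) - xi z φ s p) (hxiT.sub hxi) hV,
      integral_sub hxiT hxi]
    have : ∫ p, xi z φ s (Tw z p) ∂(mT z μ) = ∫ p, xi z φ s p ∂(mT z μ) := by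
      have := integral_map (μ := mT z μ) (Tw_measurable z).aemeasurable
        (f := xi z φ s) (xi_measurable z hφm s).aestronglyMeasurable
      rw [hT.map_eq] at this
      exact this.symm
    rw [this, sub_self, zero_add]
  have e2 : ∫ p, φ (pr z p) ∂(mT z μ) = 0 := by
    rw [← hm]
    have := integral_map (μ := mT z μ) (pr_measurable z).aemeasurable
        (f := φ) hφm.aestronglyMeasurable
    rw [map_pr hz0 hz1 h] at this
    exact this.symm
  have hintg : Integrable (fun p => φ (pr z p)) (mT z μ) := int_bd hpm (fun _ => hφ.bd _)
  have e3 : ∫ p, φ (pr z p) ∂(mT z μ) = ∫ p, (if p.2 < s then φ (pr z p) else 0) ∂(mT z μ) +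
      ∫ p in {p : ℝ × ℕ | s ≤ p.2}, φ (pr z p) ∂(mT z μ) := by
    rw [← integral_add_compl hlm' hintg, ← integral_indicator hlm']
    have : {p : ℝ × ℕ | p.2 < s}ᶜ = {p | s ≤ p.2} := by ext p; simp
    rw [this]
    congr 1
    apply integral_congr_ae
    refine ae_of_all _ fun p => ?_
    by_cases hp : p.2 < s <;> simp [indicator, hp]
  rw [e2, e1] at e3
  have e4 : ∫ x in Y, Vs z φ s x ∂μ = - ∫ p in {p : ℝ × ℕ | s ≤ p.2}, φ (pr z p) ∂(mT z μ) := by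
    linarith
  rw [e4, abs_neg]
  have := norm_setIntegral_le_of_norm_le_const (μ := mT z μ) (s := {p : ℝ × ℕ | s ≤ p.2})
    (f := fun p => φ (pr z p)) (C := B) (measure_lt_top _ _) (fun p _ => hφ.bd _)
  rw [Real.norm_eq_abs] at this
  refine this.trans ?_
  rw [mul_assoc]
  gcongr
  exact hl s hs

end
end LSV

namespace LSV
section
variable {z B H r : ℝ} {μ : Measure ℝ} {φ : ℝ → ℝ}

lemma int_dens {g : ℝ → ℝ} (hg : Measurable g) (hg0 : ∀ x, 0 ≤ g x)
    (hd : μ.restrict Y = (volume.restrict Y).withDensity (fun y => ENNReal.ofReal (g y)))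
    (f : ℝ → ℝ) : ∫ x in Y, f x ∂μ = ∫ x in Y, f x * g x := by
  rw [hd, integral_withDensity_eq_integral_toReal_smul hg.ennreal_ofReal
    (ae_of_all _ fun _ => ENNReal.ofReal_lt_top)]
  congr 1; ext x
  rw [ENNReal.toReal_ofReal (hg0 x), smul_eq_mul, mul_comm]

lemma exists_K (hr : 0 < r) : ∃ K, Adm r K ∧ 1 + K * (1/2) ^ r + 4 ≤ K := by
  obtain ⟨K, hK⟩ := Adm.exists hr
  refine ⟨2 * K, hK.of_ge hr (by linarith [hK.pos hr]), ?_⟩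
  unfold Adm at hK
  linarith

/-- The Poisson-type data: two nonnegative regular functions whose difference is `A W`. -/
lemma split_AW (hz : 0 < z) (hz1 : z < 1) (hφ : Obs φ B H r) {K : ℝ}
    (hK : Adm r K) (hK1 : 1 + K * (1/2) ^ r + 4 ≤ K) {g : ℝ → ℝ} (hg : Reg r K g) {D : ℝ}
    (hD : 0 < D) (hgD : ∀ y ∈ Y, |g y| ≤ D) {C0 : ℝ} (hC0 : 0 < C0) :
    ∃ Q : ℝ, 0 < Q ∧ ∀ (s : ℕ) (c : ℝ), |c| ≤ C0 →
      ∃ G1 G2 : ℝ → ℝ, Reg r K G1 ∧ Reg r K G2 ∧ (∀ y ∈ Y, |G1 y| ≤ Q) ∧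
        ∀ y ∈ Y, A z (fun x => (Vs z φ s x - c) * g x) y = G1 y - G2 y := by
  obtain ⟨C, hC, hL⟩ := L_bound hz hz1
  have hB := hφ.B0
  have hH := hφ.H0
  set b := B + H + C0 with hb
  refine ⟨C * (b + B) * D, by positivity, fun s c hc => ?_⟩
  have hV : ∀ n, ∀ y ∈ Y, |Vs z φ s (ps z n y)| ≤ B * ((n:ℝ)+1) := by
    intro n y hy
    have := Vs_bd' (z := z) hφ s (ps z n y)
    rwa [R0_eq hz (ps_memYN hz hy n)] at this
  have hv1 : ∀ n, ∀ y ∈ Y, |Vs z φ s (ps z n y) + b * ((n:ℝ)+1)| ≤ (b+B) * ((n:ℝ)+1) := by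
    intro n y hy
    refine (abs_add_le _ _).trans ?_
    rw [abs_of_nonneg (a := b * ((n:ℝ)+1)) (by positivity)]
    linarith [hV n y hy]
  have hv2 : ∀ n : ℕ, ∀ y ∈ Y, |b * ((n:ℝ)+1) + c| ≤ (b+C0) * ((n:ℝ)+1) := by
    intro n y hy
    refine (abs_add_le _ _).trans ?_
    rw [abs_of_nonneg (a := b * ((n:ℝ)+1)) (by positivity)]
    have : C0 * 1 ≤ C0 * ((n:ℝ)+1) := by gcongr; linarith [Nat.cast_nonneg (α := ℝ) n]
    linarith
  refine ⟨L z (fun n y => Vs z φ s (ps z n y) + b * ((n:ℝ)+1)) g,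
    L z (fun n _ => b * ((n:ℝ)+1) + c) g, ?_, ?_, ?_, ?_⟩
  · refine (L_reg hz hz1 hφ.r0 hφ.r1 (κ := 1) (c := b + B) (hK.pos hφ.r0).le hg ?_ ?_ ?_).mono hK1
    · intro n y hy
      have := (abs_le.1 (hV n y hy)).1
      have : 0 ≤ (H + C0) * ((n:ℝ)+1) := by positivity
      rw [hb]; linarith
    · intro n y hy; exact (le_abs_self _).trans (hv1 n y hy)
    · intro n x hx y hy
      have h1 := (abs_le.1 (Vs_ps_hol hz hφ s n hx hy)).2
      have h2 := (abs_le.1 (hV n y hy)).1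
      have h3 : 0 ≤ C0 * ((n:ℝ)+1) := by positivity
      have h4 : H * ((n:ℝ)+1) ≤ Vs z φ s (ps z n y) + b * ((n:ℝ)+1) := by rw [hb]; linarith
      have h5 : 0 ≤ |x - y| ^ r := by positivity
      have h6 := mul_le_mul_of_nonneg_right h4 h5
      have h7 := Real.add_one_le_exp (1 * |x - y| ^ r)
      have h8 : 0 ≤ H * ((n:ℝ)+1) := by positivity
      have h9 := mul_le_mul_of_nonneg_right h7 (h8.trans h4)
      linarith
  · refine (L_reg hz hz1 hφ.r0 hφ.r1 (κ := 1) (c := b + C0) (hK.pos hφ.r0).le hg ?_ ?_ ?_).mono hK1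
    · intro n y hy
      have := (abs_le.1 hc).1
      have h1 : 0 ≤ (B + H) * ((n:ℝ)+1) := by positivity
      have : C0 * 1 ≤ C0 * ((n:ℝ)+1) := by gcongr; linarith [Nat.cast_nonneg (α := ℝ) n]
      rw [hb]; linarith
    · intro n y hy; exact (le_abs_self _).trans (hv2 n y hy)
    · intro n x hx y hy
      have := (abs_le.1 hc).1
      have h1 : 0 ≤ (B + H) * ((n:ℝ)+1) := by positivity
      have : C0 * 1 ≤ C0 * ((n:ℝ)+1) := by gcongr; linarith [Nat.cast_nonneg (α := ℝ) n]
      have h2 : 0 ≤ b * ((n:ℝ)+1) + c := by rw [hb]; linarith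
      have h3 : 1 ≤ Real.exp (1 * |x - y| ^ r) := Real.one_le_exp (by positivity)
      exact le_mul_of_one_le_left h2 h3
  · exact fun y hy => hL _ g _ D (by positivity) hD.le hv1 hgD y hy
  · intro y hy
    unfold A L
    rw [← Summable.tsum_sub (L_summable hz hz1 hv1 hgD hy)
      (L_summable hz hz1 (v := fun n _ => b * ((n:ℝ)+1) + c) hv2 hgD hy)]
    congr 1; ext n; ring

lemma gordin (hz : 1/2 < z) (hz1 : z < 1) (h : Acip z μ) (hφ : Obs φ B H r)
    (hm : ∫ x, φ x ∂μ = 0) : ∃ X0 C θ Cc : ℝ, 0 < X0 ∧ 0 < C ∧ 0 < θ ∧ θ < 1 ∧ 0 < Cc ∧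
    ∀ s N : ℕ, 1 ≤ s → ∃ (χ : ℝ → ℝ) (c : ℝ), Measurable χ ∧ (∀ x, |χ x| ≤ X0) ∧
      |c| ≤ Cc * (s:ℝ) ^ (1 - 1/z) ∧ |c| ≤ Cc ∧
      ∀ (k : ℝ → ℝ) (D : ℝ), Measurable k → (∀ x, |k x| ≤ D) →
        |∫ x in Y, (Vs z φ s x - c + χ x - χ (F z x)) * k (F z x) ∂μ| ≤ C * θ ^ N * D := by
  have hz0 : 0 < z := by linarith
  have := h.prob
  have hr := hφ.r0
  have hr1 := hφ.r1
  have hφm := hφ.cont.measurable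
  obtain ⟨K, hK, hK1⟩ := exists_K hr
  have hKp := (hK.pos hr).le
  obtain ⟨g, c0, D0, hc0, hD0, hgm, hg0, hgR, hgb, hd⟩ := density hz0 hz1 hr hr1 hK h
  obtain ⟨Cc, hCc, hcb⟩ := c_bound hz hz1 h hφ hm
  have hYp : 0 < μ.real Y := by
    unfold Measure.real
    exact ENNReal.toReal_pos (h.pos hz0 hz1) (measure_ne_top _ _)
  set C1 := Cc / μ.real Y with hC1
  have hC1p : 0 < C1 := by positivity
  have hgD : ∀ y ∈ Y, |g y| ≤ D0 := fun y hy => by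
    rw [abs_of_nonneg (hg0 y)]; exact (hgb y hy).2
  obtain ⟨Q, hQ, hsp⟩ := split_AW hz0 hz1 hφ hK hK1 hgR hD0 hgD hC1p
  obtain ⟨C, θ, hC, hθ, hθ1, hcon⟩ := contraction hz0 hz1 hr hr1 hK
  have h1θ : 0 < 1 - θ := by linarith
  refine ⟨C * Q * (1-θ)⁻¹ / c0, C * Q, θ, C1, by positivity, by positivity, hθ, hθ1, hC1p,
    fun s N hs => ?_⟩
  set c := (∫ x in Y, Vs z φ s x ∂μ) / μ.real Y with hc
  have hcs : |c| ≤ C1 * (s:ℝ) ^ (1 - 1/z) := by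
    rw [hc, abs_div, abs_of_pos hYp, hC1, div_mul_eq_mul_div]
    gcongr
    exact hcb s hs
  have hs1 : (s:ℝ) ^ (1 - 1/z) ≤ 1 := by
    apply Real.rpow_le_one_of_one_le_of_nonpos
    · exact_mod_cast hs
    · linarith [one_lt_inv_z hz0 hz1]
  have hc1 : |c| ≤ C1 := hcs.trans (by nlinarith)
  obtain ⟨G1, G2, hG1, hG2, hG1Q, hAW⟩ := hsp s c hc1
  set W : ℝ → ℝ := fun x => (Vs z φ s x - c) * g x with hW
  have hVm := Vs_measurable z hφm s
  have hWm : Measurable W := (hVm.sub_const c).mul hgm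
  have hWb : Bd W := by
    refine ⟨(B * s + C1) * D0, fun y hy => ?_⟩
    rw [hW]; simp only
    rw [abs_mul]
    have hB := hφ.B0
    gcongr
    · exact (abs_sub _ _).trans (add_le_add (Vs_bd hφ s y) hc1)
    · exact hgD y hy
  have hYfin : IsFiniteMeasure (μ.restrict Y) := inferInstance
  have hVi : Integrable (Vs z φ s) (μ.restrict Y) := int_bd hVm (Vs_bd hφ s)
  have hWint : ∫ y in Y, W y = 0 := by
    rw [hW, ← int_dens hgm hg0 hd (fun x => Vs z φ s x - c), integral_sub hVi (integrable_const _)]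
    simp only [integral_const, measureReal_restrict_apply_univ, smul_eq_mul, hc]
    field_simp
    ring
  have hG1i := hG1.integrable hr hKp
  have hG2i := hG2.integrable hr hKp
  have hGG : ∫ y in Y, G1 y = ∫ y in Y, G2 y := by
    have e := A_int hz0 hz1 hWb hWm.aestronglyMeasurable
    rw [hWint, setIntegral_congr_fun measurableSet_Y hAW, integral_sub hG1i hG2i] at e
    linarith
  have hG1Qi : ∫ y in Y, G1 y ≤ Q := by
    have := norm_setIntegral_le_of_norm_le_const (μ := volume) (s := Y)
      (f := G1) (C := Q) (by rw [vol_Y]; exact ENNReal.ofReal_lt_top) hG1Q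
    rw [vol_Y_real] at this
    have := (le_abs_self _).trans this
    linarith
  let U : ℕ → ℝ → ℝ := fun j y => (A z)^[j] G1 y - (A z)^[j] G2 y
  have hUb : ∀ j, ∀ y ∈ Y, |U j y| ≤ C * Q * θ ^ j := by
    intro j y hy
    refine (hcon j G1 G2 hG1 hG2 hGG y hy).trans ?_
    calc _ ≤ C * θ ^ j * Q := by gcongr
      _ = _ := by ring
  have hUBd : ∀ j, Bd (U j) := fun j => ⟨_, hUb j⟩
  have hR1 := A_iter_reg hz0 hz1 hr hr1 hK hG1
  have hR2 := A_iter_reg hz0 hz1 hr hr1 hK hG2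
  have hUc : ∀ j, ContinuousOn (U j) Y := fun j =>
    ((hR1 j).continuousOn hr).sub ((hR2 j).continuousOn hr)
  have hUm : ∀ j, AEStronglyMeasurable (U j) (volume.restrict Y) := fun j =>
    (hUc j).aestronglyMeasurable measurableSet_Y
  have hAU : ∀ j, ∀ y ∈ Y, A z (U j) y = U (j+1) y := by
    intro j y hy
    simp only [U]
    rw [A_sub hz0 hz1 ((hR1 j).bd hr hKp) ((hR2 j).bd hr hKp) y hy,
      ← Function.iterate_succ_apply' (A z), ← Function.iterate_succ_apply' (A z)]
  let X : ℝ → ℝ := fun y => (∑ j ∈ Finset.range N, U j y) / g y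
  have hXc : ContinuousOn X Y := by
    refine ContinuousOn.div (continuousOn_finsetSum _ fun j _ => hUc j) (hgR.continuousOn hr) ?_
    intro y hy; exact (hc0.trans_le (hgb y hy).1).ne'
  have hXb : ∀ y ∈ Y, |X y| ≤ C * Q * (1-θ)⁻¹ / c0 := by
    intro y hy
    simp only [X]
    rw [abs_div, abs_of_nonneg (hg0 y)]
    have hsum : |∑ j ∈ Finset.range N, U j y| ≤ C * Q * (1-θ)⁻¹ := by
      calc _ ≤ ∑ j ∈ Finset.range N, |U j y| := Finset.abs_sum_le_sum_abs _ _
        _ ≤ ∑ j ∈ Finset.range N, C * Q * θ ^ j := Finset.sum_le_sum fun j _ => hUb j y hy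
        _ = C * Q * ∑ j ∈ Finset.range N, θ ^ j := by rw [Finset.mul_sum]
        _ ≤ _ := by
          gcongr
          rw [← tsum_geometric_of_lt_one hθ.le hθ1]
          exact (summable_geometric_of_lt_one hθ.le hθ1).sum_le_tsum _ (fun _ _ => by positivity)
    have := (hgb y hy).1
    gcongr
  have hχm : Measurable (Y.indicator X) := by
    classical
    rw [← piecewise_eq_indicator]
    exact ContinuousOn.measurable_piecewise hXc continuousOn_const measurableSet_Y
  have hχb : ∀ x, |Y.indicator X x| ≤ C * Q * (1-θ)⁻¹ / c0 := by
    intro x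
    by_cases hx : x ∈ Y
    · rw [indicator_of_mem hx]; exact hXb x hx
    · rw [indicator_of_notMem hx, abs_zero]; positivity
  refine ⟨Y.indicator X, c, hχm, hχb, hcs, hc1, ?_⟩
  intro k D hk hkD
  have hkF : Measurable fun x => k (F z x) := hk.comp (F_measurable z)
  have i1 : Integrable (fun x => (Vs z φ s x - c) * k (F z x)) (μ.restrict Y) := by
    refine int_bd ((hVm.sub_const c).mul hkF) (D := (B * s + C1) * D) fun x => ?_
    rw [abs_mul]
    have hB := hφ.B0
    gcongr
    · exact (abs_sub _ _).trans (add_le_add (Vs_bd hφ s x) hc1)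
    · exact hkD _
  have i2 : Integrable (fun x => Y.indicator X x * k (F z x)) (μ.restrict Y) := by
    refine int_bd (hχm.mul hkF) (D := (C * Q * (1-θ)⁻¹ / c0) * D) fun x => ?_
    rw [abs_mul]
    gcongr
    · exact hχb x
    · exact hkD _
  have i3 : Integrable (fun x => Y.indicator X (F z x) * k (F z x)) (μ.restrict Y) := by
    refine int_bd ((hχm.comp (F_measurable z)).mul hkF) (D := (C * Q * (1-θ)⁻¹ / c0) * D)
      fun x => ?_
    rw [abs_mul]
    gcongr
    · exact hχb _
    · exact hkD _
  have e0 : ∫ x in Y, (Vs z φ s x - c + Y.indicator X x - Y.indicator X (F z x)) * k (F z x) ∂μ =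
      ∫ x in Y, (Vs z φ s x - c) * k (F z x) ∂μ + ∫ x in Y, Y.indicator X x * k (F z x) ∂μ -
      ∫ x in Y, Y.indicator X (F z x) * k (F z x) ∂μ := by
    rw [← integral_add i1 i2, ← integral_sub (f := fun x => (Vs z φ s x - c) * k (F z x) +
      Y.indicator X x * k (F z x)) (i1.add i2) i3]
    congr 1; ext x; ring
  have iU : ∀ j, Integrable (fun y => U j y * k y) (volume.restrict Y) := by
    intro j
    exact Integrable.mul_bdd (c := D) (integrable_of_bd (hUBd j) (hUm j))
      hk.aestronglyMeasurable (ae_of_all _ hkD)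
  have iUF : ∀ j, Integrable (fun y => U j y * k (F z y)) (volume.restrict Y) := by
    intro j
    exact Integrable.mul_bdd (c := D) (integrable_of_bd (hUBd j) (hUm j))
      hkF.aestronglyMeasurable (ae_of_all _ fun x => hkD _)
  have e1 : ∫ x in Y, (Vs z φ s x - c) * k (F z x) ∂μ = ∫ y in Y, U 0 y * k y := by
    rw [int_dens hgm hg0 hd]
    have := cv hz0 hz1 hWb hWm.aestronglyMeasurable hk hkD
    calc _ = ∫ x in Y, W x * k (F z x) := by congr 1; ext x; simp only [hW]; ring
      _ = ∫ y in Y, A z W y * k y := this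
      _ = _ := setIntegral_congr_fun measurableSet_Y fun y hy => by
          simp only [U, Function.iterate_zero, id]; rw [hAW y hy]
  have hXg : ∀ y ∈ Y, X y * g y = ∑ j ∈ Finset.range N, U j y := fun y hy =>
    div_mul_cancel₀ _ (hc0.trans_le (hgb y hy).1).ne'
  have e2 : ∫ x in Y, Y.indicator X x * k (F z x) ∂μ =
      ∑ j ∈ Finset.range N, ∫ y in Y, U (j+1) y * k y := by
    rw [int_dens hgm hg0 hd]
    calc _ = ∫ x in Y, ∑ j ∈ Finset.range N, U j x * k (F z x) := by
          apply setIntegral_congr_fun measurableSet_Y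
          intro y hy
          simp only
          rw [indicator_of_mem hy, ← Finset.sum_mul, ← hXg y hy]; ring
      _ = ∑ j ∈ Finset.range N, ∫ x in Y, U j x * k (F z x) :=
          integral_finsetSum _ fun j _ => iUF j
      _ = _ := by
          apply Finset.sum_congr rfl
          intro j _
          rw [cv hz0 hz1 (hUBd j) (hUm j) hk hkD]
          exact setIntegral_congr_fun measurableSet_Y fun y hy => by rw [hAU j y hy]
  have e3 : ∫ x in Y, Y.indicator X (F z x) * k (F z x) ∂μ =
      ∑ j ∈ Finset.range N, ∫ y in Y, U j y * k y := by
    have := integral_map (μ := μ.restrict Y) (F_measurable z).aemeasurable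
      (f := fun x => Y.indicator X x * k x) (hχm.mul hk).aestronglyMeasurable
    rw [h.map_F hz0 hz1] at this
    rw [← this, int_dens hgm hg0 hd]
    calc _ = ∫ x in Y, ∑ j ∈ Finset.range N, U j x * k x := by
          apply setIntegral_congr_fun measurableSet_Y
          intro y hy
          simp only
          rw [indicator_of_mem hy, ← Finset.sum_mul, ← hXg y hy]; ring
      _ = _ := integral_finsetSum _ fun j _ => iU j
  have e4 : ∫ x in Y, (Vs z φ s x - c + Y.indicator X x - Y.indicator X (F z x)) * k (F z x) ∂μ =
      ∫ y in Y, U N y * k y := by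
    rw [e0, e1, e2, e3]
    have a := Finset.sum_range_succ' (fun j => ∫ y in Y, U j y * k y) N
    have a' := Finset.sum_range_succ (fun j => ∫ y in Y, U j y * k y) N
    linarith
  rw [e4]
  have hD : 0 ≤ D := (abs_nonneg _).trans (hkD 0)
  have := norm_setIntegral_le_of_norm_le_const (μ := volume) (s := Y)
      (f := fun y => U N y * k y) (C := C * Q * θ ^ N * D)
      (by rw [vol_Y]; exact ENNReal.ofReal_lt_top) (fun y hy => by
        rw [norm_mul]
        exact mul_le_mul (hUb N y hy) (hkD y) (norm_nonneg _) (by positivity))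
  rw [vol_Y_real, Real.norm_eq_abs] at this
  have h5 : 0 ≤ C * Q * θ ^ N * D := by positivity
  linarith

end
end LSV

namespace LSV
section
variable {z B H r : ℝ} {μ : Measure ℝ} {φ : ℝ → ℝ}

lemma R0_lt {x : ℝ} (hx : x ∈ Y) {l : ℕ} (hl : x ∉ E z l) : R0 z x < l := by
  have h1 : b z l ≤ x := by
    by_contra h
    exact hl ⟨hx.1, not_le.1 h⟩
  cases l with
  | zero => exact absurd hx.2 (not_lt.2 h1)
  | succ m => exact Nat.lt_succ_of_le (Nat.sInf_le h1)

lemma sum_id (m : ℕ) : ((m:ℝ))^2 ≤ ∑ l ∈ Finset.range m, 2 * ((l:ℝ)+1) := by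
  have : ∑ l ∈ Finset.range m, 2 * ((l:ℝ)+1) = (m:ℝ)^2 + m := by
    induction m with
    | zero => simp
    | succ m ih => rw [Finset.sum_range_succ, ih]; push_cast; ring
  rw [this]; linarith [Nat.cast_nonneg (α := ℝ) m]

lemma Vs_sq (hφ : Obs φ B H r) (s : ℕ) {x : ℝ} (hx : x ∈ Y) :
    (Vs z φ s x)^2 ≤ B^2 * ∑ l ∈ Finset.range s, 2 * ((l:ℝ)+1) * (E z l).indicator 1 x := by
  have h1 : |Vs z φ s x| ≤ B * (min (R0 z x + 1) s : ℕ) := birk_bd hφ _ x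
  rw [← sq_abs]
  have hB := hφ.B0
  calc |Vs z φ s x|^2 ≤ (B * (min (R0 z x + 1) s : ℕ))^2 := by gcongr
    _ = B^2 * ((min (R0 z x + 1) s : ℕ) : ℝ)^2 := by ring
    _ ≤ B^2 * ∑ l ∈ Finset.range (min (R0 z x + 1) s), 2 * ((l:ℝ)+1) := by
        gcongr; exact sum_id _
    _ ≤ _ := by
        gcongr
        calc _ = ∑ l ∈ Finset.range (min (R0 z x + 1) s),
              2 * ((l:ℝ)+1) * (E z l).indicator 1 x := by
              apply Finset.sum_congr rfl
              intro l hl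
              have hl' : l < R0 z x + 1 :=
                lt_of_lt_of_le (Finset.mem_range.1 hl) (min_le_left _ _)
              have : x ∈ E z l := by
                by_contra h
                have := R0_lt hx h
                omega
              rw [indicator_of_mem this]; simp
          _ ≤ _ := by
              apply Finset.sum_le_sum_of_subset_of_nonneg
              · exact Finset.range_mono (min_le_right _ _)
              · intro l _ _
                have : 0 ≤ (E z l).indicator (1 : ℝ → ℝ) x :=
                  indicator_nonneg (fun _ _ => by simp) x
                positivity

lemma inv_z_lt_two (hz : 1/2 < z) : 1/z < 2 := by
  rw [div_lt_iff₀ (by linarith)]; linarith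

lemma Vs_moment (hz : 1/2 < z) (hz1 : z < 1) (h : Acip z μ) (hφ : Obs φ B H r) :
    ∃ C : ℝ, 0 < C ∧ ∀ s : ℕ, ∫ x in Y, (Vs z φ s x)^2 ∂μ ≤ C * (s:ℝ) ^ (2 - 1/z) := by
  have hz0 : 0 < z := by linarith
  have := h.prob
  obtain ⟨C, hC, hE⟩ := E_upper hz0 hz1 h
  have hB := hφ.B0
  have h2 := inv_z_lt_two hz
  have h1 := one_lt_inv_z hz0 hz1
  have hp : 0 < 2 - 1/z := by linarith
  refine ⟨B^2 * (2 * C * (2 - 1/z)⁻¹), by positivity, fun s => ?_⟩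
  have hiE : ∀ l, Integrable ((E z l).indicator (1 : ℝ → ℝ)) (μ.restrict Y) := fun l =>
    (integrable_const (1:ℝ)).indicator (measurableSet_E z l)
  have hi : Integrable (fun x => B^2 * ∑ l ∈ Finset.range s, 2 * ((l:ℝ)+1) *
      (E z l).indicator 1 x) (μ.restrict Y) :=
    (integrable_finsetSum _ fun l _ => (hiE l).const_mul _).const_mul _
  have hVi : Integrable (fun x => (Vs z φ s x)^2) (μ.restrict Y) :=
    int_bd ((Vs_measurable z hφ.cont.measurable s).pow_const 2) (D := (B*s)^2) fun x => by
      rw [abs_pow]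
      have := Vs_bd (z := z) hφ s x
      gcongr
  calc _ ≤ ∫ x in Y, B^2 * ∑ l ∈ Finset.range s, 2 * ((l:ℝ)+1) * (E z l).indicator 1 x ∂μ :=
        setIntegral_mono_on hVi hi measurableSet_Y fun x hx => Vs_sq hφ s hx
    _ = B^2 * ∑ l ∈ Finset.range s, 2 * ((l:ℝ)+1) * μ.real (E z l) := by
        rw [integral_const_mul, integral_finsetSum _ fun l _ => (hiE l).const_mul _]
        congr 1
        apply Finset.sum_congr rfl
        intro l _
        rw [integral_const_mul, integral_indicator_one (measurableSet_E z l),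
          measureReal_restrict_apply (measurableSet_E z l), inter_eq_left.2 (E_sub hz0 l)]
    _ ≤ B^2 * ∑ l ∈ Finset.range s, 2 * C * ((l:ℝ)+1)^((2-1/z) - 1) := by
        refine mul_le_mul_of_nonneg_left (Finset.sum_le_sum fun l _ => ?_) (by positivity)
        have hl : (0:ℝ) < (l:ℝ) + 1 := by positivity
        have e : (2-1/z) - 1 = 1 + -(1/z) := by ring
        rw [e, Real.rpow_add hl, Real.rpow_one]
        calc _ ≤ 2 * ((l:ℝ)+1) * (C * ((l:ℝ)+1)^(-(1/z))) := by gcongr; exact hE l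
          _ = _ := by ring
    _ = B^2 * (2 * C * ∑ l ∈ Finset.range s, ((l:ℝ)+1)^((2-1/z) - 1)) := by
        congr 1; rw [Finset.mul_sum]
    _ ≤ B^2 * (2 * C * ((2 - 1/z)⁻¹ * (s:ℝ)^(2-1/z))) := by
        gcongr
        exact sum_up hp (by linarith) s
    _ = _ := by ring

/-- Birkhoff sums over the tower -/
noncomputable def SS (z : ℝ) (f : ℝ × ℕ → ℝ) (n : ℕ) (p : ℝ × ℕ) : ℝ :=
  ∑ j ∈ Finset.range n, f ((Tw z)^[j] p)

lemma SS_succ (f : ℝ × ℕ → ℝ) (n : ℕ) (p : ℝ × ℕ) :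
    SS z f (n+1) p = f p + SS z f n (Tw z p) := by
  unfold SS
  rw [Finset.sum_range_succ', add_comm]
  rfl

lemma SS_measurable {f : ℝ × ℕ → ℝ} (hf : Measurable f) (n : ℕ) : Measurable (SS z f n) := by
  unfold SS
  exact Finset.measurable_sum _ fun i _ => hf.comp ((Tw_measurable z).iterate i)

lemma SS_bd {f : ℝ × ℕ → ℝ} {D : ℝ} (hf : ∀ p, |f p| ≤ D) (n : ℕ) (p : ℝ × ℕ) :
    |SS z f n p| ≤ n * D := by
  unfold SS
  calc _ ≤ ∑ j ∈ Finset.range n, |f ((Tw z)^[j] p)| := Finset.abs_sum_le_sum_abs _ _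
    _ ≤ ∑ j ∈ Finset.range n, D := Finset.sum_le_sum fun i _ => hf _
    _ = _ := by simp

lemma int3 {α : Type*} [MeasurableSpace α] {m : Measure α} {u v w : α → ℝ}
    (hu : Integrable u m) (hv : Integrable v m) (hw : Integrable w m) :
    ∫ p, ((u p + 2 * v p) + w p) ∂m = ∫ p, u p ∂m + 2 * ∫ p, v p ∂m + ∫ p, w p ∂m := by
  rw [integral_add (f := fun p => u p + 2 * v p) (hu.add (hv.const_mul 2)) hw,
    integral_add hu (hv.const_mul 2), integral_const_mul]

lemma second_moment (hz : 0 < z) (hz1 : z < 1) (h : Acip z μ) {M : ℝ → ℝ} (hM : Measurable M)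
    {D ε : ℝ} (hMD : ∀ x, |M x| ≤ D) (hε : 0 ≤ ε)
    (horth : ∀ (k : ℝ → ℝ) (D : ℝ), Measurable k → (∀ x, |k x| ≤ D) →
        |∫ x in Y, M x * k (F z x) ∂μ| ≤ ε * D) (n : ℕ) :
    ∫ p, (SS z ((top z).indicator fun p => M p.1) n p)^2 ∂(mT z μ) ≤
      n * (∫ x in Y, (M x)^2 ∂μ) + 2 * n^2 * (ε * D) := by
  have := h.prob
  have := mT_prob hz hz1 h
  have hD : 0 ≤ D := (abs_nonneg _).trans (hMD 0)
  set f : ℝ × ℕ → ℝ := (top z).indicator fun p => M p.1 with hf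
  have hfm : Measurable f := (hM.comp measurable_fst).indicator (top_measurable z)
  have hfD : ∀ p, |f p| ≤ D := by
    intro p
    by_cases hp : p ∈ top z
    · rw [hf, indicator_of_mem hp]; exact hMD _
    · rw [hf, indicator_of_notMem hp, abs_zero]; exact hD
  induction n with
  | zero => simp [SS]
  | succ n ih =>
    have hSm := SS_measurable (z := z) hfm n
    have hSb := SS_bd (z := z) hfD n
    have i1 : Integrable (fun p => (f p)^2) (mT z μ) :=
      int_bd (hfm.pow_const 2) (D := D^2) fun p => by
        rw [abs_pow]; have := hfD p; gcongr
    have i2 : Integrable (fun p => f p * SS z f n (Tw z p)) (mT z μ) := by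
      refine int_bd (hfm.mul (hSm.comp (Tw_measurable z))) (D := D * (n * D)) fun p => ?_
      rw [abs_mul]
      exact mul_le_mul (hfD p) (hSb _) (abs_nonneg _) hD
    have i3' : Integrable (fun p => (SS z f n p)^2) (mT z μ) :=
      int_bd (hSm.pow_const 2) (D := (n*D)^2) fun p => by
        rw [abs_pow]; have := hSb p; gcongr
    have i3 : Integrable (fun p => (SS z f n (Tw z p))^2) (mT z μ) :=
      int_bd ((hSm.comp (Tw_measurable z)).pow_const 2) (D := (n*D)^2) fun p => by
        rw [abs_pow]; have := hSb (Tw z p); gcongr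
    have e : ∀ p, (SS z f (n+1) p)^2 =
        ((f p)^2 + 2 * (f p * SS z f n (Tw z p))) + (SS z f n (Tw z p))^2 := by
      intro p; rw [SS_succ]; ring
    simp_rw [e]
    rw [int3 i1 i2 i3]
    have e1 : ∫ p, (f p)^2 ∂(mT z μ) = ∫ x in Y, (M x)^2 ∂μ := by
      rw [← int_top hz hz1 h (hM.pow_const 2)]
      congr 1; ext p
      by_cases hp : p ∈ top z <;> simp [hf, hp]
    have e2 : ∫ p, f p * SS z f n (Tw z p) ∂(mT z μ) =
        ∫ x in Y, M x * SS z f n (F z x, 0) ∂μ := by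
      have hkm : Measurable fun x => M x * SS z f n (F z x, 0) :=
        hM.mul (hSm.comp ((F_measurable z).prodMk measurable_const))
      rw [← int_top hz hz1 h hkm]
      apply integral_congr_ae
      filter_upwards [mT_ae] with p hp
      by_cases ht : p ∈ top z
      · rw [indicator_of_mem ht, (Tw_top hz hp ht).1, hf, indicator_of_mem ht]
      · rw [indicator_of_notMem ht, hf, indicator_of_notMem ht, zero_mul]
    have e3 : ∫ p, (SS z f n (Tw z p))^2 ∂(mT z μ) = ∫ p, (SS z f n p)^2 ∂(mT z μ) := by
      have := integral_map (μ := mT z μ) (Tw_measurable z).aemeasurable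
        (f := fun p => (SS z f n p)^2) (hSm.pow_const 2).aestronglyMeasurable
      rw [(mT_inv hz hz1 h).map_eq] at this
      exact this.symm
    have h4 := horth (fun y => SS z f n (y, 0)) (n * D)
      (hSm.comp (measurable_id.prodMk measurable_const)) (fun x => hSb _)
    have h5 := (abs_le.1 h4).2
    rw [e1, e2, e3]
    push_cast
    have h6 : 0 ≤ ε * D := by positivity
    have h7 : (0:ℝ) ≤ n := Nat.cast_nonneg n
    nlinarith [mul_nonneg h7 h6]

lemma bad_bound (hz : 1/2 < z) (hz1 : z < 1) (h : Acip z μ) : ∃ C : ℝ, 0 < C ∧ ∀ n s : ℕ, 1 ≤ s →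
    (mT z μ).real {p | ∃ j < n, s ≤ ((Tw z)^[j] p).2} ≤
      C * (s:ℝ) ^ (1 - 1/z) + n * (C * (s:ℝ) ^ (-(1/z))) := by
  have hz0 : 0 < z := by linarith
  have := h.prob
  have := mT_prob hz0 hz1 h
  obtain ⟨C1, hC1, hl⟩ := level_le hz hz1 h
  obtain ⟨C2, hC2, hE⟩ := E_upper hz0 hz1 h
  refine ⟨C1 + C2, by positivity, fun n s hs => ?_⟩
  have hs0 : (0:ℝ) < s := by exact_mod_cast hs
  have hES : (mT z μ).real {p | p.2 = s} ≤ C2 * (s:ℝ) ^ (-(1/z)) := by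
    have hm : MeasurableSet {p : ℝ × ℕ | p.2 = s} := measurable_snd (measurableSet_singleton s)
    have e : mT z μ {p | p.2 = s} = μ (E z s) := by
      rw [mT_apply hm, tsum_eq_single s]
      · congr 1; ext x; simp
      · intro l hl
        have : (fun x : ℝ => (x, l)) ⁻¹' {p | p.2 = s} ∩ E z l = ∅ := by
          ext x; simp [hl]
        rw [this, measure_empty]
    have e' : (mT z μ).real {p | p.2 = s} = μ.real (E z s) := by
      unfold Measure.real; rw [e]
    rw [e']
    refine (hE s).trans ?_
    gcongr C2 * ?_
    apply Real.rpow_le_rpow_of_nonpos hs0 (by linarith)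
    simp; exact hz0.le
  have hstep : ∀ n : ℕ, (mT z μ).real {p | ∃ j < n+1, s ≤ ((Tw z)^[j] p).2} ≤
      C1 * (s:ℝ) ^ (1 - 1/z) + n * (C2 * (s:ℝ) ^ (-(1/z))) := by
    intro n
    induction n with
    | zero =>
      have : {p : ℝ × ℕ | ∃ j < 0+1, s ≤ ((Tw z)^[j] p).2} = {p | s ≤ p.2} := by
        ext p; simp
      rw [this]
      have := hl s hs
      simpa using this
    | succ n ih =>
      have hsub : {p : ℝ × ℕ | ∃ j < n+1+1, s ≤ ((Tw z)^[j] p).2} ⊆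
          {p | ∃ j < n+1, s ≤ ((Tw z)^[j] p).2} ∪ (Tw z)^[n+1] ⁻¹' {p | p.2 = s} := by
        rintro p ⟨j, hj, hsj⟩
        by_cases hb : ∃ j < n+1, s ≤ ((Tw z)^[j] p).2
        · exact Or.inl hb
        · right
          push Not at hb
          have hj' : j = n+1 := by
            by_contra hne
            have := hb j (by omega)
            omega
          subst hj'
          have h1 := hb n (by omega)
          have h2 : ((Tw z)^[n+1] p).2 ≤ ((Tw z)^[n] p).2 + 1 := by
            rw [Function.iterate_succ_apply']
            generalize (Tw z)^[n] p = q
            unfold Tw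
            split_ifs <;> simp
          change ((Tw z)^[n+1] p).2 = s
          omega
      have hpre : (mT z μ).real ((Tw z)^[n+1] ⁻¹' {p | p.2 = s}) = (mT z μ).real {p | p.2 = s} := by
        have hm : MeasurableSet {p : ℝ × ℕ | p.2 = s} := measurable_snd (measurableSet_singleton s)
        unfold Measure.real
        rw [((mT_inv hz0 hz1 h).iterate (n+1)).measure_preimage hm.nullMeasurableSet]
      calc _ ≤ _ := measureReal_mono hsub
        _ ≤ _ := measureReal_union_le _ _
        _ ≤ (C1 * (s:ℝ) ^ (1 - 1/z) + n * (C2 * (s:ℝ) ^ (-(1/z)))) + C2 * (s:ℝ) ^ (-(1/z)) := by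
            rw [hpre]; exact add_le_add ih hES
        _ = _ := by push_cast; ring
  have hmono : {p : ℝ × ℕ | ∃ j < n, s ≤ ((Tw z)^[j] p).2} ⊆
      {p | ∃ j < n+1, s ≤ ((Tw z)^[j] p).2} := by
    rintro p ⟨j, hj, hh⟩; exact ⟨j, by omega, hh⟩
  refine (measureReal_mono hmono).trans ((hstep n).trans ?_)
  gcongr <;> linarith

end
end LSV

namespace LSV
section
variable {z B H r : ℝ} {μ : Measure ℝ} {φ : ℝ → ℝ}

lemma step_point (hz : 0 < z) (φ : ℝ → ℝ) (s : ℕ) (χ : ℝ → ℝ) (c : ℝ) {p : ℝ × ℕ}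
    (hp : p.1 ∈ E z p.2) (hs : p.2 < s) :
    φ (pr z p) = (xi z φ s (Tw z p) - χ (Tw z p).1 * (-1)) - (xi z φ s p + χ p.1)
      + (top z).indicator (fun p => Vs z φ s p.1 - c + χ p.1 - χ (F z p.1)) p
      + (top z).indicator (fun _ => c) p := by
  have h1 := cob hz φ s hp
  rw [if_pos hs] at h1
  rw [h1]
  by_cases ht : p ∈ top z
  · rw [indicator_of_mem ht, indicator_of_mem ht, indicator_of_mem ht, (Tw_top hz hp ht).1]
    ring
  · rw [indicator_of_notMem ht, indicator_of_notMem ht, indicator_of_notMem ht]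
    have : (Tw z p).1 = p.1 := by
      have : (lsv z)^[p.2+1] p.1 < 1/2 := not_le.1 ht
      unfold Tw; rw [if_pos this]
    rw [this]; ring

lemma point_eq (hz : 0 < z) (φ : ℝ → ℝ) (s : ℕ) (χ : ℝ → ℝ) (c : ℝ) {p : ℝ × ℕ}
    (hp : ∀ j, ((Tw z)^[j] p).1 ∈ E z ((Tw z)^[j] p).2) (n : ℕ)
    (hs : ∀ j < n, ((Tw z)^[j] p).2 < s) :
    lsvBirkhoff z φ n (pr z p) =
      (xi z φ s ((Tw z)^[n] p) + χ ((Tw z)^[n] p).1) - (xi z φ s p + χ p.1)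
      + SS z ((top z).indicator (fun p => Vs z φ s p.1 - c + χ p.1 - χ (F z p.1))) n p
      + SS z ((top z).indicator (fun _ => c)) n p := by
  induction n with
  | zero => simp [lsvBirkhoff, SS]
  | succ n ih =>
    have ih' := ih fun j hj => hs j (by omega)
    have h1 := step_point hz φ s χ c (hp n) (hs n (by omega))
    have e1 : lsvBirkhoff z φ (n+1) (pr z p) =
        lsvBirkhoff z φ n (pr z p) + φ (pr z ((Tw z)^[n] p)) := by
      rw [pr_Tw_iter]; unfold lsvBirkhoff; rw [Finset.sum_range_succ]
    have e2 : ∀ f : ℝ × ℕ → ℝ, SS z f (n+1) p = SS z f n p + f ((Tw z)^[n] p) := by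
      intro f; unfold SS; rw [Finset.sum_range_succ]
    rw [e1, ih', e2, e2, h1, Function.iterate_succ_apply']
    ring

lemma point_bd (hz : 0 < z) (hφ : Obs φ B H r) (s : ℕ) {χ : ℝ → ℝ} {X0 : ℝ}
    (hχ : ∀ x, |χ x| ≤ X0) (c : ℝ) {p : ℝ × ℕ}
    (hp : ∀ j, ((Tw z)^[j] p).1 ∈ E z ((Tw z)^[j] p).2) (n : ℕ)
    (hs : ∀ j < n, ((Tw z)^[j] p).2 < s) :
    |lsvBirkhoff z φ n (pr z p)| ≤ 2 * (B * s + X0) + n * |c| +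
      |SS z ((top z).indicator (fun p => Vs z φ s p.1 - c + χ p.1 - χ (F z p.1))) n p| := by
  rw [point_eq hz φ s χ c hp n hs]
  have h1 := abs_le.1 (xi_bd (z := z) hφ s p)
  have h2 := abs_le.1 (xi_bd (z := z) hφ s ((Tw z)^[n] p))
  have h3 := abs_le.1 (hχ p.1)
  have h4 := abs_le.1 (hχ ((Tw z)^[n] p).1)
  have h5 : |SS z ((top z).indicator (fun _ => c)) n p| ≤ n * |c| := by
    apply SS_bd
    intro q
    by_cases hq : q ∈ top z
    · rw [indicator_of_mem hq]
    · rw [indicator_of_notMem hq, abs_zero]; exact abs_nonneg c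
  set S1 := SS z ((top z).indicator (fun p => Vs z φ s p.1 - c + χ p.1 - χ (F z p.1))) n p
  have h5' := abs_le.1 h5
  have h6 := abs_le.1 (le_refl |S1|)
  rw [abs_le]
  constructor <;> linarith [h1.1, h1.2, h2.1, h2.2, h3.1, h3.2, h4.1, h4.2]

lemma good_ae (hz : 0 < z) (hz1 : z < 1) (h : Acip z μ) :
    ∀ᵐ p ∂(mT z μ), ∀ j, ((Tw z)^[j] p).1 ∈ E z ((Tw z)^[j] p).2 := by
  rw [ae_all_iff]
  intro j
  have hq := ((mT_inv hz hz1 h).iterate j).quasiMeasurePreserving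
  generalize (Tw z)^[j] = T at hq ⊢
  exact hq.ae (p := fun q : ℝ × ℕ => q.1 ∈ E z q.2) mT_ae

lemma cheb {α : Type*} [MeasurableSpace α] {m : Measure α} [IsFiniteMeasure m] {f : α → ℝ}
    (hf : Measurable f) {D : ℝ} (hD : ∀ x, |f x| ≤ D) {t : ℝ} (ht : 0 < t) :
    m.real {x | t ≤ |f x|} ≤ (∫ x, (f x)^2 ∂m) / t^2 := by
  have hi : Integrable (fun x => (f x)^2) m :=
    int_bd (hf.pow_const 2) (D := D^2) fun x => by
      rw [abs_pow]; have := hD x; gcongr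
  have h1 := mul_meas_ge_le_integral_of_nonneg (μ := m) (f := fun x => (f x)^2)
    (ae_of_all _ fun x => sq_nonneg _) hi (t^2)
  rw [le_div_iff₀ (by positivity), mul_comm]
  refine le_trans ?_ h1
  refine mul_le_mul_of_nonneg_left (measureReal_mono ?_) (by positivity)
  intro x hx
  rw [mem_ofPred_eq] at hx ⊢
  rw [← sq_abs (f x)]
  gcongr

lemma weak0 (hz : 1/2 < z) (hz1 : z < 1) (h : Acip z μ) (hφ : Obs φ B H r)
    (hm : ∫ x, φ x ∂μ = 0) : ∃ C X0 Cc : ℝ, 0 < C ∧ 0 < X0 ∧ 0 < Cc ∧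
    ∀ (n s : ℕ) (t : ℝ), 1 ≤ s → 0 < t →
      2 * (B * s + X0) + n * (Cc * (s:ℝ) ^ (1 - 1/z)) ≤ t/2 →
      μ.real {x | t < |lsvBirkhoff z φ n x|} ≤
        C * (s:ℝ) ^ (1 - 1/z) + n * (C * (s:ℝ) ^ (-(1/z))) +
          (n * (C * (s:ℝ) ^ (2 - 1/z)) + 1) / (t/2)^2 := by
  have hz0 : 0 < z := by linarith
  have := h.prob
  have := mT_prob hz0 hz1 h
  have hB := hφ.B0
  have h2 := inv_z_lt_two hz
  obtain ⟨X0, C1, θ, Cc, hX0, hC1, hθ, hθ1, hCc, hg⟩ := gordin hz hz1 h hφ hm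
  obtain ⟨C2, hC2, hbad⟩ := bad_bound hz hz1 h
  obtain ⟨C3, hC3, hmom⟩ := Vs_moment hz hz1 h hφ
  refine ⟨C2 + (2 * C3 + 2 * (Cc + 2 * X0)^2), X0, Cc, by positivity, hX0, hCc, ?_⟩
  intro n s t hs ht hcond
  have hs1 : (1:ℝ) ≤ s := by exact_mod_cast hs
  set Mb : ℝ := B * s + Cc + 2 * X0 with hMb
  have hMb0 : 0 < Mb := by positivity
  obtain ⟨N, hN⟩ : ∃ N : ℕ, 2 * n^2 * (C1 * θ^N * Mb) ≤ 1 := by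
    have : Tendsto (fun N : ℕ => 2 * (n:ℝ)^2 * (C1 * θ^N * Mb)) atTop (nhds (2 * (n:ℝ)^2 * (C1 * 0 * Mb))) :=
      (((tendsto_pow_atTop_nhds_zero_of_lt_one hθ.le hθ1).const_mul C1).mul_const Mb).const_mul _
    rw [mul_zero, zero_mul, mul_zero] at this
    exact (this.eventually (eventually_le_nhds zero_lt_one)).exists
  obtain ⟨χ, c, hχm, hχ, hc, hc', horth⟩ := hg s N hs
  set M : ℝ → ℝ := fun x => Vs z φ s x - c + χ x - χ (F z x) with hM
  have hVm := Vs_measurable z hφ.cont.measurable s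
  have hMm : Measurable M :=
    ((hVm.sub_const c).add hχm).sub (hχm.comp (F_measurable z))
  have hMd : ∀ x, |M x| ≤ Mb := by
    intro x
    have a1 := abs_le.1 (Vs_bd (z := z) hφ s x)
    have a2 := abs_le.1 (hχ x)
    have a3 := abs_le.1 (hχ (F z x))
    have a4 := abs_le.1 hc'
    rw [abs_le, hMb]
    simp only [hM]
    constructor <;> linarith [a1.1, a1.2, a2.1, a2.2, a3.1, a3.2, a4.1, a4.2]
  have hsec := second_moment hz0 hz1 h hMm hMd (ε := C1 * θ^N) (by positivity) horth n
  have hVi : Integrable (fun x => (Vs z φ s x)^2) (μ.restrict Y) :=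
    int_bd (hVm.pow_const 2) (D := (B*s)^2) fun x => by
      rw [abs_pow]
      have := Vs_bd (z := z) hφ s x
      gcongr
  have hMi : Integrable (fun x => (M x)^2) (μ.restrict Y) :=
    int_bd (hMm.pow_const 2) (D := Mb^2) fun x => by
      rw [abs_pow]
      have := hMd x
      gcongr
  have hM2 : ∫ x in Y, (M x)^2 ∂μ ≤ (2 * C3 + 2 * (Cc + 2 * X0)^2) * (s:ℝ)^(2-1/z) := by
    have hp : (1:ℝ) ≤ (s:ℝ)^(2-1/z) := Real.one_le_rpow hs1 (by linarith)
    calc _ ≤ ∫ x in Y, (2 * (Vs z φ s x)^2 + 2 * (Cc + 2 * X0)^2) ∂μ := by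
          apply integral_mono hMi ((hVi.const_mul 2).add (integrable_const _))
          intro x
          have a2 := abs_le.1 (hχ x)
          have a3 := abs_le.1 (hχ (F z x))
          have a4 := abs_le.1 hc'
          have a5 : |-c + χ x - χ (F z x)| ≤ Cc + 2 * X0 := by
            rw [abs_le]
            constructor <;> linarith [a2.1, a2.2, a3.1, a3.2, a4.1, a4.2]
          have a6 : (-c + χ x - χ (F z x))^2 ≤ (Cc + 2 * X0)^2 := by
            rw [← sq_abs]; gcongr
          simp only [hM, Pi.add_apply]
          nlinarith [sq_nonneg (Vs z φ s x - (-c + χ x - χ (F z x)))]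
      _ = 2 * (∫ x in Y, (Vs z φ s x)^2 ∂μ) + μ.real Y * (2 * (Cc + 2 * X0)^2) := by
          rw [integral_add (hVi.const_mul 2) (integrable_const _), integral_const_mul,
            setIntegral_const, smul_eq_mul]
      _ ≤ 2 * (C3 * (s:ℝ)^(2-1/z)) + 1 * (2 * (Cc + 2 * X0)^2) := by
          gcongr
          · exact hmom s
          · exact measureReal_le_one
      _ ≤ _ := by nlinarith [sq_nonneg (Cc + 2 * X0)]
  set S := SS z ((top z).indicator fun p => M p.1) n with hS
  have hfm : Measurable ((top z).indicator fun p : ℝ × ℕ => M p.1) :=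
    (hMm.comp measurable_fst).indicator (top_measurable z)
  have hfD : ∀ p, |(top z).indicator (fun p : ℝ × ℕ => M p.1) p| ≤ Mb := by
    intro p
    by_cases hp : p ∈ top z
    · rw [indicator_of_mem hp]; exact hMd _
    · rw [indicator_of_notMem hp, abs_zero]; exact hMb0.le
  have hch := cheb (m := mT z μ) (SS_measurable (z := z) hfm n) (SS_bd (z := z) hfD n)
    (t := t/2) (by positivity)
  have hmeas : MeasurableSet {x | t < |lsvBirkhoff z φ n x|} :=
    measurableSet_lt measurable_const (birk_measurable z hφ.cont.measurable n).norm
  have etr : μ.real {x | t < |lsvBirkhoff z φ n x|} =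
      (mT z μ).real {p | t < |lsvBirkhoff z φ n (pr z p)|} := by
    conv_lhs => rw [← map_pr hz0 hz1 h]
    rw [map_measureReal_apply (pr_measurable z) hmeas]
    rfl
  rw [etr]
  have hle : (mT z μ).real {p | t < |lsvBirkhoff z φ n (pr z p)|} ≤
      (mT z μ).real ({p | ∃ j < n, s ≤ ((Tw z)^[j] p).2} ∪ {p | t/2 ≤ |S p|}) := by
    unfold Measure.real
    apply ENNReal.toReal_mono (measure_ne_top _ _)
    apply measure_mono_ae
    filter_upwards [good_ae hz0 hz1 h] with p hp hpt
    by_cases hb : ∃ j < n, s ≤ ((Tw z)^[j] p).2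
    · exact Or.inl hb
    · right
      push Not at hb
      have := point_bd hz0 hφ s hχ c hp n hb
      have hpt' : t < |lsvBirkhoff z φ n (pr z p)| := hpt
      have hnc : n * |c| ≤ n * (Cc * (s:ℝ) ^ (1 - 1/z)) := by gcongr
      change t/2 ≤ |SS z ((top z).indicator fun p => M p.1) n p|
      simp only [hM]
      linarith
  refine hle.trans ((measureReal_union_le _ _).trans ?_)
  have hb1 := hbad n s hs
  have hq1 : 0 ≤ (s:ℝ) ^ (1 - 1/z) := by positivity
  have hq2 : 0 ≤ (s:ℝ) ^ (-(1/z)) := by positivity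
  have hq3 : 0 ≤ (s:ℝ) ^ (2 - 1/z) := by positivity
  have hCle : C2 ≤ C2 + (2 * C3 + 2 * (Cc + 2 * X0)^2) := by
    have : 0 ≤ (2 * C3 + 2 * (Cc + 2 * X0)^2) := by positivity
    linarith
  have hCle' : (2 * C3 + 2 * (Cc + 2 * X0)^2) ≤ C2 + (2 * C3 + 2 * (Cc + 2 * X0)^2) := by
    linarith
  refine add_le_add (hb1.trans ?_) (hch.trans ?_)
  · gcongr
  · gcongr
    refine hsec.trans (add_le_add ?_ hN)
    refine mul_le_mul_of_nonneg_left (hM2.trans ?_) (Nat.cast_nonneg n)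
    exact mul_le_mul_of_nonneg_right hCle' hq3

end
end LSV

namespace LSV
section
variable {z B H r : ℝ} {μ : Measure ℝ} {φ : ℝ → ℝ}

lemma weak1 (hz : 1/2 < z) (hz1 : z < 1) (h : Acip z μ) (hφ : Obs φ B H r)
    (hm : ∫ x, φ x ∂μ = 0) : ∃ C : ℝ, 0 < C ∧
    ∀ (n : ℕ) (t : ℝ), 1 ≤ n → 0 < t → t ≤ n * B →
      μ.real {x | t < |lsvBirkhoff z φ n x|} ≤ C * (n * t ^ (-(1/z))) := by
  have hz0 : 0 < z := by linarith
  have := h.prob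
  have hB := hφ.B0
  have hα2 := inv_z_lt_two hz
  have hα1 := one_lt_inv_z hz0 hz1
  obtain ⟨C, X0, Cc, hC, hX0, hCc, hw⟩ := weak0 hz hz1 h hφ hm
  set α := 1/z with hα
  set a : ℝ := 16 * B with ha
  have ha0 : 0 < a := by positivity
  set t0 : ℝ := 1 + a + 16 * X0 with ht0
  have ht00 : 0 < t0 := by positivity
  set K : ℝ := (2 * a) ^ α with hK
  have hK0 : 0 < K := by positivity
  refine ⟨t0 ^ α + 4 * Cc * K / a + C * B * K / a + C * K + 4 * C * K / a^2 + 4,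
    by positivity, ?_⟩
  intro n t hn ht htn
  have hn1 : (1:ℝ) ≤ n := by exact_mod_cast hn
  set w := t ^ (-α) with hwdef
  have hw0 : 0 < w := by positivity
  have p1 : 0 < t0 ^ α := by positivity
  have p2 : 0 < 4 * Cc * K / a := by positivity
  have p3 : 0 < C * B * K / a := by positivity
  have p4 : 0 < C * K := by positivity
  have p5 : 0 < 4 * C * K / a^2 := by positivity
  have hnw : 0 < n * w := by positivity
  by_cases hA : t < t0
  · have h1 : 1 ≤ t0 ^ α * (n * w) := by
      have : t0 ^ (-α) ≤ w := Real.rpow_le_rpow_of_nonpos ht hA.le (by linarith)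
      calc (1:ℝ) = t0 ^ α * (1 * t0 ^ (-α)) := by
            rw [one_mul, ← Real.rpow_add ht00, add_neg_cancel, Real.rpow_zero]
        _ ≤ _ := by gcongr
    refine (measureReal_le_one).trans (h1.trans ?_)
    apply mul_le_mul_of_nonneg_right _ hnw.le
    linarith
  push Not at hA
  have hta : 1 ≤ t / a := by rw [le_div_iff₀ ha0]; linarith
  set s := ⌊t/a⌋₊ with hs
  have hs1 : 1 ≤ s := Nat.le_floor (by simpa using hta)
  have hs1' : (1:ℝ) ≤ s := by exact_mod_cast hs1
  have hs0 : (0:ℝ) < s := by linarith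
  have hsle : (s:ℝ) ≤ t/a := Nat.floor_le (by positivity)
  have hsge : t / (2*a) ≤ s := by
    have h1 : t/a < s + 1 := Nat.lt_floor_add_one _
    have h2 : t/(2*a) = t/a/2 := by field_simp
    rw [h2]; linarith
  have hsw : (s:ℝ) ^ (-α) ≤ K * w := by
    calc (s:ℝ) ^ (-α) ≤ (t/(2*a)) ^ (-α) :=
          Real.rpow_le_rpow_of_nonpos (by positivity) hsge (by linarith)
      _ = K * w := by
          rw [Real.div_rpow ht.le (by positivity), Real.rpow_neg (x := 2*a) (by positivity)]
          rw [div_inv_eq_mul, mul_comm]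
  have hs2 : (s:ℝ) ^ (1-α) ≤ t/a * (K * w) := by
    rw [sub_eq_add_neg, Real.rpow_add hs0, Real.rpow_one]
    gcongr
  have hs3 : (s:ℝ) ^ (2-α) ≤ (t/a)^2 * (K * w) := by
    rw [sub_eq_add_neg, Real.rpow_add hs0, Real.rpow_two]
    gcongr
  by_cases hD : n * (Cc * (s:ℝ) ^ (1-α)) ≤ t/4
  · have hcond : 2 * (B * s + X0) + n * (Cc * (s:ℝ) ^ (1 - α)) ≤ t/2 := by
      have h1 : (s:ℝ) * a ≤ t := (le_div_iff₀ ha0).1 hsle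
      have h2 : B * s ≤ t/16 := by rw [ha] at h1; linarith
      linarith
    refine (hw n s t hs1 ht hcond).trans ?_
    have q1 : C * (s:ℝ) ^ (1-α) ≤ C * B * K / a * (n * w) := by
      calc _ ≤ C * (n*B/a * (K * w)) := by
            apply mul_le_mul_of_nonneg_left _ hC.le
            refine hs2.trans ?_
            gcongr
        _ = _ := by ring
    have q2 : n * (C * (s:ℝ) ^ (-α)) ≤ C * K * (n * w) := by
      calc _ ≤ n * (C * (K * w)) := by gcongr
        _ = _ := by ring
    have q3 : (n * (C * (s:ℝ) ^ (2-α)) + 1) / (t/2)^2 ≤ (4 * C * K / a^2 + 4) * (n * w) := by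
      have q4 : 1 ≤ t^2 * (n * w) := by
        have ht1 : 1 ≤ t := by linarith
        have : 1 ≤ t^2 * w := by
          rw [hwdef, ← Real.rpow_two, ← Real.rpow_add ht]
          exact Real.one_le_rpow ht1 (by linarith)
        calc (1:ℝ) ≤ 1 * (t^2 * w) := by linarith
          _ ≤ n * (t^2 * w) := by gcongr
          _ = _ := by ring
      rw [div_le_iff₀ (by positivity)]
      calc _ ≤ n * (C * ((t/a)^2 * (K * w))) + t^2 * (n * w) := by gcongr
        _ = _ := by field_simp; ring
    have : 0 < t0 ^ α * (n * w) := by positivity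
    have : 0 < 4 * Cc * K / a * (n * w) := by positivity
    calc _ ≤ _ := add_le_add (add_le_add q1 q2) q3
      _ ≤ _ := by linarith
  · push Not at hD
    have h1 : 1 ≤ 4 * Cc * K / a * (n * w) := by
      have h2 : t/4 < n * (Cc * (t/a * (K * w))) := hD.trans_le (by gcongr)
      have h3 : n * (Cc * (t/a * (K * w))) = t/4 * (4 * Cc * K / a * (n * w)) := by
        field_simp
      rw [h3] at h2
      have h4 : 0 < t/4 := by positivity
      by_contra hcon
      push Not at hcon
      nlinarith
    refine (measureReal_le_one).trans (h1.trans ?_)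
    apply mul_le_mul_of_nonneg_right _ hnw.le
    linarith

lemma upper (hz : 1/2 < z) (hz1 : z < 1) (h : Acip z μ) (hφ : Obs φ B H r)
    (hm : ∫ x, φ x ∂μ = 0) {q : ℝ} (hq : 1/z < q) : ∃ C : ℝ, 0 < C ∧ ∀ n : ℕ, 1 ≤ n →
    ∫ x, |lsvBirkhoff z φ n x| ^ q ∂μ ≤ C * (n:ℝ) ^ (q + 1 - 1/z) := by
  have hz0 : 0 < z := by linarith
  have := h.prob
  have hB := hφ.B0
  have hα1 := one_lt_inv_z hz0 hz1
  obtain ⟨C, hC, hw⟩ := weak1 hz hz1 h hφ hm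
  set α := 1/z with hα
  have hqα : 0 < q - α := by linarith
  have hq0 : 0 < q := by linarith
  refine ⟨q * (C * (B ^ (q-α) / (q-α))), by positivity, fun n hn => ?_⟩
  have hn1 : (1:ℝ) ≤ n := by exact_mod_cast hn
  have hn0 : (0:ℝ) < n := by linarith
  have hmeas := birk_measurable z hφ.cont.measurable n
  have hT : (0:ℝ) ≤ n * B := by positivity
  have hintg : IntegrableOn (fun t : ℝ => C * n * t ^ (q-α-1)) (Ioc 0 (n*B)) := by
    have := (intervalIntegral.intervalIntegrable_rpow' (a := 0) (b := n*B)
      (r := q-α-1) (by linarith)).const_mul (C * n)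
    rwa [intervalIntegrable_iff_integrableOn_Ioc_of_le hT] at this
  have hval : ∫ t in Ioc 0 (n*B), C * n * t ^ (q-α-1) =
      C * (B ^ (q-α) / (q-α)) * (n:ℝ) ^ (q+1-α) := by
    rw [← intervalIntegral.integral_of_le hT, intervalIntegral.integral_const_mul,
      integral_rpow (Or.inl (by linarith)), sub_add_cancel, Real.zero_rpow hqα.ne', sub_zero,
      Real.mul_rpow hn0.le hB.le]
    have : q+1-α = 1 + (q-α) := by ring
    rw [this, Real.rpow_add hn0, Real.rpow_one]
    ring
  have hll : ∫⁻ x, ENNReal.ofReal (|lsvBirkhoff z φ n x| ^ q) ∂μ ≤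
      ENNReal.ofReal (q * (C * (B ^ (q-α) / (q-α))) * (n:ℝ) ^ (q+1-α)) := by
    rw [lintegral_rpow_eq_lintegral_meas_lt_mul μ (f := fun x => |lsvBirkhoff z φ n x|)
      (ae_of_all _ fun x => abs_nonneg _) hmeas.norm.aemeasurable hq0, mul_assoc q,
      ENNReal.ofReal_mul hq0.le]
    refine mul_le_mul_right ?_ _
    rw [← hval, ofReal_integral_eq_lintegral_ofReal hintg
      ((ae_restrict_mem measurableSet_Ioc).mono fun t ht => by
        have := ht.1; change (0:ℝ) ≤ _; positivity)]
    have hsplit : Ioi (0:ℝ) = Ioc 0 (n*B) ∪ Ioi (n*B) := (Ioc_union_Ioi_eq_Ioi hT).symm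
    rw [hsplit]
    refine (lintegral_union_le _ _ _).trans ?_
    have hz2 : ∫⁻ t in Ioi (n*B), μ {x | t < |lsvBirkhoff z φ n x|} *
        ENNReal.ofReal (t ^ (q-1)) = 0 := by
      rw [setLIntegral_congr_fun (g := fun _ => 0) measurableSet_Ioi]
      · simp
      · intro t ht
        have : {x | t < |lsvBirkhoff z φ n x|} = ∅ := by
          ext x
          have h1 := birk_bd (z := z) hφ n x
          have h2 : n * B < t := ht
          simp only [mem_ofPred_eq, mem_empty_iff_false, iff_false, not_lt]
          linarith
        simp only [this, measure_empty, zero_mul]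
    rw [hz2, add_zero]
    refine setLIntegral_mono' measurableSet_Ioc fun t ht => ?_
    have h1 := hw n t hn ht.1 ht.2
    have h2 : μ {x | t < |lsvBirkhoff z φ n x|} ≤ ENNReal.ofReal (C * (n * t ^ (-α))) := by
      rw [← ofReal_measureReal (measure_ne_top _ _)]
      exact ENNReal.ofReal_le_ofReal h1
    have ht0 : 0 < t := ht.1
    calc _ ≤ ENNReal.ofReal (C * (n * t ^ (-α))) * ENNReal.ofReal (t ^ (q-1)) := by gcongr
      _ = ENNReal.ofReal (C * (n * t ^ (-α)) * t ^ (q-1)) := by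
          exact (ENNReal.ofReal_mul (by positivity)).symm
      _ = _ := by
          congr 1
          have : q - α - 1 = -α + (q - 1) := by ring
          rw [this, Real.rpow_add ht0]; ring
  rw [integral_eq_lintegral_of_nonneg_ae (f := fun x => |lsvBirkhoff z φ n x| ^ q) (ae_of_all _ fun x => by change (0:ℝ) ≤ _; positivity)
    (hmeas.norm.pow_const q).aestronglyMeasurable]
  exact ENNReal.toReal_le_of_le_ofReal (by positivity) hll

lemma lower (hz : 1/2 < z) (hz1 : z < 1) (h : Acip z μ) (hφ : Obs φ B H r)
    (h0 : φ 0 ≠ 0) {q : ℝ} (hq : 1/z < q) : ∃ C : ℝ, 0 < C ∧ ∀ n : ℕ, 1 ≤ n →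
    C * (n:ℝ) ^ (q + 1 - 1/z) ≤ ∫ x, |lsvBirkhoff z φ n x| ^ q ∂μ := by
  have hz0 : 0 < z := by linarith
  have := h.prob
  have hB := hφ.B0
  have hα1 := one_lt_inv_z hz0 hz1
  have hq0 : 0 < q := by linarith
  obtain ⟨C, hC, hlow⟩ := low_rest hz0 hz1 h
  have hφ0 : 0 < |φ 0| := abs_pos.2 h0
  obtain ⟨N, hN⟩ : ∃ N, ∀ y, 0 ≤ y → y < xs z N → |φ y - φ 0| ≤ |φ 0|/2 := by
    have hc := hφ.cont.tendsto 0
    obtain ⟨δ, hδ, hδ'⟩ := Metric.tendsto_nhds_nhds.1 hc (|φ 0|/2) (by positivity)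
    obtain ⟨N, hN⟩ := ((xs_tendsto hz0 hz1).eventually (gt_mem_nhds hδ)).exists
    refine ⟨N, fun y hy hyN => ?_⟩
    have := hδ' (x := y) (by rw [Real.dist_eq, sub_zero, abs_of_nonneg hy]; linarith)
    rw [Real.dist_eq] at this
    exact this.le
  set α := 1/z with hα
  refine ⟨(|φ 0|/2)^q * (C * ((N:ℝ)+2) ^ (1-α)), by positivity, fun n hn => ?_⟩
  have hn1 : (1:ℝ) ≤ n := by exact_mod_cast hn
  have hn0 : (0:ℝ) < n := by linarith
  have hmeas := birk_measurable z hφ.cont.measurable n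
  have hpt : ∀ x ∈ Ico (0:ℝ) (xs z (n+N)), n * (|φ 0|/2) ≤ |lsvBirkhoff z φ n x| := by
    intro x hx
    have hx1 : x ∈ Ico (0:ℝ) 1 := ⟨hx.1, hx.2.trans (xs_mem hz0 _).2⟩
    have hall := (iter_lt_iff hz0 hx1 (n+N)).2 hx.2
    have hj : ∀ j ∈ Finset.range n, |φ ((lsv z)^[j] x) - φ 0| ≤ |φ 0|/2 := by
      intro j hj
      have hj' := Finset.mem_range.1 hj
      have hm := lsv_iter_mem hz0 hx1 j
      apply hN _ hm.1
      rw [← iter_lt_iff hz0 hm N]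
      intro i hi
      rw [← Function.iterate_add_apply]
      exact hall _ (by omega)
    have hd : |lsvBirkhoff z φ n x - n * φ 0| ≤ n * (|φ 0|/2) := by
      have : lsvBirkhoff z φ n x - n * φ 0 =
          ∑ j ∈ Finset.range n, (φ ((lsv z)^[j] x) - φ 0) := by
        rw [Finset.sum_sub_distrib]; simp [lsvBirkhoff]
      rw [this]
      calc _ ≤ _ := Finset.abs_sum_le_sum_abs _ _
        _ ≤ ∑ j ∈ Finset.range n, |φ 0|/2 := Finset.sum_le_sum hj
        _ = _ := by simp
    have h2 : n * |φ 0| ≤ |lsvBirkhoff z φ n x| + |lsvBirkhoff z φ n x - n * φ 0| := by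
      have e : n * |φ 0| = |n * φ 0| := by rw [abs_mul, abs_of_pos hn0]
      rw [e]
      have := abs_sub_abs_le_abs_sub (n * φ 0) (lsvBirkhoff z φ n x)
      rw [abs_sub_comm] at this
      linarith
    linarith
  have hi : Integrable (fun x => |lsvBirkhoff z φ n x| ^ q) μ :=
    int_bd (hmeas.norm.pow_const q) (D := (B*n)^q) fun x => by
      change |(|lsvBirkhoff z φ n x| ^ q)| ≤ _
      rw [abs_of_nonneg (by positivity)]
      exact Real.rpow_le_rpow (abs_nonneg _) (birk_bd hφ n x) hq0.le
  have hmk := mul_meas_ge_le_integral_of_nonneg (μ := μ)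
    (f := fun x => |lsvBirkhoff z φ n x| ^ q)
    (ae_of_all _ fun x => by change (0:ℝ) ≤ _; positivity) hi ((n * (|φ 0|/2))^q)
  refine le_trans ?_ hmk
  have hsub : Ico (0:ℝ) (xs z (n+N)) ⊆ {x | (n * (|φ 0|/2))^q ≤ |lsvBirkhoff z φ n x| ^ q} :=
    fun x hx => Real.rpow_le_rpow (by positivity) (hpt x hx) hq0.le
  have h3 : C * (((N:ℝ)+2) ^ (1-α) * (n:ℝ)^(1-α)) ≤
      μ.real {x | (n * (|φ 0|/2))^q ≤ |lsvBirkhoff z φ n x| ^ q} := by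
    refine le_trans ?_ ((hlow (n+N)).trans (measureReal_mono hsub))
    apply mul_le_mul_of_nonneg_left _ hC.le
    rw [← Real.mul_rpow (by positivity) hn0.le]
    apply Real.rpow_le_rpow_of_nonpos (by positivity) _ (by linarith)
    push_cast
    nlinarith [Nat.cast_nonneg (α := ℝ) N]
  calc _ = (n * (|φ 0|/2))^q * (C * (((N:ℝ)+2) ^ (1-α) * (n:ℝ)^(1-α))) := by
        have : q + 1 - α = q + (1-α) := by ring
        rw [this, Real.rpow_add hn0, Real.mul_rpow hn0.le (by positivity)]; ring
    _ ≤ _ := mul_le_mul_of_nonneg_left h3 (by positivity)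

/-- clamp to the unit interval -/
noncomputable def clamp (x : ℝ) : ℝ := max 0 (min 1 x)

lemma clamp_mem (x : ℝ) : clamp x ∈ Icc (0:ℝ) 1 :=
  ⟨le_max_left _ _, max_le zero_le_one (min_le_left _ _)⟩

lemma clamp_eq {x : ℝ} (hx : x ∈ Icc (0:ℝ) 1) : clamp x = x := by
  unfold clamp; rw [min_eq_right hx.2, max_eq_right hx.1]

lemma clamp_lip (x y : ℝ) : |clamp x - clamp y| ≤ |x - y| := by
  unfold clamp
  have h1 := abs_max_sub_max_le_abs (min 1 x) (min 1 y) 0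
  have h2 := abs_min_sub_min_le_max 1 x 1 y
  rw [max_comm 0, max_comm 0]
  refine h1.trans (h2.trans ?_)
  simp

lemma obs_of (hφ : ∃ C r : ℝ≥0, 0 < r ∧ r ≤ 1 ∧ HolderOnWith C r φ (Set.Icc (0 : ℝ) 1)) :
    ∃ B H r, Obs (fun x => φ (clamp x)) B H r := by
  obtain ⟨C, r, hr, hr1, hH⟩ := hφ
  have hd : ∀ x ∈ Icc (0:ℝ) 1, ∀ y ∈ Icc (0:ℝ) 1, |φ x - φ y| ≤ C * |x - y| ^ (r:ℝ) := by
    intro x hx y hy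
    have := hH.dist_le hx hy
    simpa [Real.dist_eq] using this
  have hr' : (0:ℝ) < r := by exact_mod_cast hr
  refine ⟨|φ 0| + C + 1, C, r, hr', by exact_mod_cast hr1, by positivity, C.2, ?_, ?_, ?_⟩
  · refine (hH.continuousOn hr).comp_continuous ?_ clamp_mem
    unfold clamp; fun_prop
  · intro x
    have h1 := hd _ (clamp_mem x) 0 ⟨le_rfl, zero_le_one⟩
    have h2 : |clamp x - 0| ^ (r:ℝ) ≤ 1 := by
      apply Real.rpow_le_one (abs_nonneg _) _ hr'.le
      rw [sub_zero, abs_of_nonneg (clamp_mem x).1]; exact (clamp_mem x).2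
    have h3 : (C:ℝ) * |clamp x - 0| ^ (r:ℝ) ≤ C * 1 := by gcongr
    have h4 := abs_sub_abs_le_abs_sub (φ (clamp x)) (φ 0)
    change |φ (clamp x)| ≤ _
    linarith
  · intro x y
    refine (hd _ (clamp_mem x) _ (clamp_mem y)).trans ?_
    have := clamp_lip x y
    gcongr

end
end LSV

/-- For `z ∈ (1/2, 1)`, `α = 1/z`, `μ` the unique absolutely continuous
`f_z`-invariant Borel probability measure on `[0,1]`, and `φ` Hölder with mean zero and
`φ(0) ≠ 0`, the moments of order `q > α` satisfy
`C₁ n^{q+1−α} ≤ ∫ |Φ_n|^q dμ ≤ C₂ n^{q+1−α}` for all `n ≥ 1`. -/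
theorem lsv_high_moment_scaling
    (z : ℝ) (hz : z ∈ Set.Ioo (1 / 2 : ℝ) 1)
    (μ : Measure ℝ) (hμprob : IsProbabilityMeasure μ) (hμsupp : μ (Set.Icc (0 : ℝ) 1)ᶜ = 0)
    (hμac : μ ≪ volume) (hμinv : MeasurePreserving (lsv z) μ μ)
    (φ : ℝ → ℝ) (hφ : ∃ C r : ℝ≥0, 0 < r ∧ r ≤ 1 ∧ HolderOnWith C r φ (Set.Icc (0 : ℝ) 1))
    (hmean : ∫ x, φ x ∂μ = 0) (h0 : φ 0 ≠ 0)
    (q : ℝ) (hq : 1 / z < q) :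
    ∃ C₁ C₂ : ℝ, 0 < C₁ ∧ 0 < C₂ ∧ ∀ n : ℕ, 1 ≤ n →
      C₁ * (n : ℝ) ^ (q + 1 - 1 / z) ≤ ∫ x, |lsvBirkhoff z φ n x| ^ q ∂μ ∧
      (∫ x, |lsvBirkhoff z φ n x| ^ q ∂μ) ≤ C₂ * (n : ℝ) ^ (q + 1 - 1 / z) := by
  have hA : LSV.Acip z μ := ⟨hμprob, hμsupp, hμac, hμinv⟩
  obtain ⟨B, H, r, hO⟩ := LSV.obs_of hφ
  have hz0 : 0 < z := by linarith [hz.1]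
  have hm' : ∫ x, φ (LSV.clamp x) ∂μ = 0 := by
    rw [← hmean]
    apply integral_congr_ae
    filter_upwards [hA.ae_mem] with x hx
    rw [LSV.clamp_eq ⟨hx.1, hx.2.le⟩]
  have h0' : φ (LSV.clamp 0) ≠ 0 := by
    rw [LSV.clamp_eq ⟨le_rfl, zero_le_one⟩]; exact h0
  have he : ∀ n : ℕ, ∫ x, |lsvBirkhoff z φ n x| ^ q ∂μ =
      ∫ x, |lsvBirkhoff z (fun x => φ (LSV.clamp x)) n x| ^ q ∂μ := by
    intro n
    apply integral_congr_ae
    filter_upwards [hA.ae_mem] with x hx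
    have : lsvBirkhoff z φ n x = lsvBirkhoff z (fun x => φ (LSV.clamp x)) n x := by
      unfold lsvBirkhoff
      apply Finset.sum_congr rfl
      intro j _
      have := LSV.lsv_iter_mem hz0 hx j
      change _ = φ (LSV.clamp _)
      rw [LSV.clamp_eq ⟨this.1, this.2.le⟩]
    rw [this]
  obtain ⟨C₂, hC₂, hup⟩ := LSV.upper hz.1 hz.2 hA hO hm' hq
  obtain ⟨C₁, hC₁, hlo⟩ := LSV.lower hz.1 hz.2 hA hO h0' hq
  refine ⟨C₁, C₂, hC₁, hC₂, fun n hn => ?_⟩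
  rw [he n]
  exact ⟨hlo n hn, hup n hn⟩
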